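/- arXiv:1801.08260 — 2 statements merged into one kernel-verified Lean document; each statement's English description precedes it below -/
import Mathlib

section
/- Let B = (B₁,…,B_N) be a tuple of finite subsets of ℤ^N such that both AF-descendant tuples B' = (B₁,B₁,B₃,…,B_N) (B₂ replaced by a second copy of B₁) and B'' = (B₂,B₂,B₃,…,B_N) (B₁ replaced by a second copy of B₂) are linearly independent. Then MV(B₁,B₁,B₃,…,B_N) ≤ MV(B₁,…,B_N)². -/
open Pointwise MeasureTheory

namespace Esterov

/-- The standard embedding of the lattice `ℤⁿ` into `ℝⁿ`. -/
def toR {n : ℕ} (a : Fin n → ℤ) : Fin n → ℝ := fun j => (a j : ℝ)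

/-- The lattice mixed volume of finite sets `A₁, …, Aₙ ⊆ ℤⁿ`:
`MV(A₁,…,Aₙ) = ∑_{∅ ≠ S ⊆ {1,…,n}} (−1)^{n−|S|} vol (conv (∑_{i ∈ S} Aᵢ))`. -/
noncomputable def MV {n : ℕ} (A : Fin n → Finset (Fin n → ℤ)) : ℝ :=
  ∑ S ∈ Finset.univ.powerset.filter (fun S : Finset (Fin n) => S.Nonempty),
    (-1 : ℝ) ^ (n - S.card) *
      (volume (convexHull ℝ (∑ i ∈ S, toR '' (A i : Set (Fin n → ℤ))))).toReal

/-- The complex torus `(ℂ∖0)ⁿ`. -/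
abbrev Torus (n : ℕ) := Fin n → ℂˣ

/-- The index type of the coefficients of a tuple of supports. -/
abbrev CIdx {n : ℕ} (A : Fin n → Finset (Fin n → ℤ)) := Σ i : Fin n, {a : Fin n → ℤ // a ∈ A i}

/-- The space `ℂ^A = ℂ^{A₁} ⊕ ⋯ ⊕ ℂ^{Aₙ}` of systems of Laurent polynomials supported at `A`,
encoded by their coefficients. -/
abbrev Coeff {n : ℕ} (A : Fin n → Finset (Fin n → ℤ)) := CIdx A → ℂ

/-- The value of the Laurent monomial `x^a` at a point `x` of the torus. -/
noncomputable def mono {n : ℕ} (a : Fin n → ℤ) (x : Torus n) : ℂ :=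
  ∏ j, ((x j : ℂ) ^ (a j))

/-- The value of the `i`-th polynomial of the system `c ∈ ℂ^A` at `x`. -/
noncomputable def evalAt {n : ℕ} (A : Fin n → Finset (Fin n → ℤ)) (c : Coeff A) (i : Fin n)
    (x : Torus n) : ℂ :=
  ∑ a ∈ (A i).attach, c ⟨i, a⟩ * mono a.1 x

/-- `x` is a common root of the system `c ∈ ℂ^A`. -/
def IsRoot {n : ℕ} (A : Fin n → Finset (Fin n → ℤ)) (c : Coeff A) (x : Torus n) : Prop :=
  ∀ i, evalAt A c i x = 0

/-- The Jacobian matrix `(∂fᵢ/∂xⱼ (x))` of the system `c ∈ ℂ^A` at `x`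
(note `∂(x^a)/∂xⱼ = aⱼ x^a / xⱼ`). -/
noncomputable def jacobian {n : ℕ} (A : Fin n → Finset (Fin n → ℤ)) (c : Coeff A)
    (x : Torus n) : Matrix (Fin n) (Fin n) ℂ :=
  Matrix.of fun i j => (∑ a ∈ (A i).attach, c ⟨i, a⟩ * (a.1 j : ℂ) * mono a.1 x) * (x j : ℂ)⁻¹

/-- `x` is a singular root of the system `c`: a common root at which the Jacobian matrix
is degenerate. -/
def IsSingularRoot {n : ℕ} (A : Fin n → Finset (Fin n → ℤ)) (c : Coeff A) (x : Torus n) :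
    Prop :=
  IsRoot A c x ∧ (jacobian A c x).det = 0

/-- A subset of `ℂ^ι` is algebraic if it is the common zero locus of a family of polynomials. -/
def IsAlgebraicSet {ι : Type*} (Z : Set (ι → ℂ)) : Prop :=
  ∃ S : Set (MvPolynomial ι ℂ), Z = {c | ∀ p ∈ S, MvPolynomial.eval c p = 0}

/-- The Zariski closure of a subset of `ℂ^ι`. -/
def zclosure {ι : Type*} (Z : Set (ι → ℂ)) : Set (ι → ℂ) :=
  ⋂₀ {W | IsAlgebraicSet W ∧ Z ⊆ W}

/-- The ideal of polynomials vanishing on a subset of `ℂ^ι`. -/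
noncomputable def vanishingIdeal {ι : Type*} (Z : Set (ι → ℂ)) : Ideal (MvPolynomial ι ℂ) where
  carrier := {p | ∀ c ∈ Z, MvPolynomial.eval c p = 0}
  add_mem' := by
    intro p q hp hq c hc
    simp [hp c hc, hq c hc]
  zero_mem' := by
    intro c hc
    simp
  smul_mem' := by
    intro p q hq c hc
    simp [smul_eq_mul, hq c hc]

/-- The (complex) dimension of a subset of `ℂ^ι`, as the Krull dimension of the coordinate
ring of its Zariski closure. -/
noncomputable def adim {ι : Type*} (Z : Set (ι → ℂ)) : WithBot ℕ∞ :=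
  ringKrullDim (MvPolynomial ι ℂ ⧸ vanishingIdeal Z)

/-- The discriminant `D_A`: the Zariski closure of the set of systems having a singular root. -/
noncomputable def discSet {n : ℕ} (A : Fin n → Finset (Fin n → ℤ)) : Set (Coeff A) :=
  zclosure {c | ∃ x, IsSingularRoot A c x}

/-- The tuple `A` is dual effective: `D_A` is a hypersurface, i.e. has complex dimension
`dim ℂ^A − 1`. -/
def DualEffective {n : ℕ} (A : Fin n → Finset (Fin n → ℤ)) : Prop :=
  adim (discSet A) = ((Fintype.card (CIdx A) - 1 : ℕ) : WithBot ℕ∞)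

/-- The finite set `s` can be translated into the subgroup `L` of `ℤⁿ`. -/
def TranslatesInto {n : ℕ} (s : Finset (Fin n → ℤ)) (L : Submodule ℤ (Fin n → ℤ)) : Prop :=
  ∃ v : Fin n → ℤ, ∀ a ∈ s, a - v ∈ L

/-- A tuple of finite sets in `ℤⁿ` is reduced if the sets cannot all be translated into one
common proper subgroup of `ℤⁿ`. -/
def IsReducedTuple {n : ℕ} (A : Fin n → Finset (Fin n → ℤ)) : Prop :=
  ¬ ∃ L : Submodule ℤ (Fin n → ℤ), L ≠ ⊤ ∧ ∀ i, TranslatesInto (A i) L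

/-- A tuple of `n` finite sets in `ℤⁿ` is irreducible if for no `m` with `0 < m < n` can some
`n − m` of the sets be translated into one common subgroup of rank at most `n − m`. -/
def IsIrreducibleTuple {n : ℕ} (A : Fin n → Finset (Fin n → ℤ)) : Prop :=
  ¬ ∃ (I : Finset (Fin n)) (L : Submodule ℤ (Fin n → ℤ)),
      0 < I.card ∧ I.card < n ∧ Module.finrank ℤ L ≤ I.card ∧
      ∀ i ∈ I, TranslatesInto (A i) L

/-- The incidence variety `E = {(x, f) : f(x) = 0} ⊆ (ℂ∖0)ⁿ × ℂ^A`. -/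
def incidence {n : ℕ} (A : Fin n → Finset (Fin n → ℤ)) : Set (Torus n × Coeff A) :=
  {p | IsRoot A p.2 p.1}

/-- The projection `π : E → ℂ^A`. -/
def proj {n : ℕ} (A : Fin n → Finset (Fin n → ℤ)) : incidence A → Coeff A :=
  fun p => p.1.2

/-- The set of roots of the system `c`. -/
def RootSet {n : ℕ} (A : Fin n → Finset (Fin n → ℤ)) (c : Coeff A) :=
  {x : Torus n // IsRoot A c x}

/-- `γ` is a loop in `ℂ^A ∖ B` based at `f`. -/
def IsLoop {n : ℕ} (A : Fin n → Finset (Fin n → ℤ)) (B : Set (Coeff A)) (f : Coeff A)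
    (γ : unitInterval → Coeff A) : Prop :=
  Continuous γ ∧ (∀ t, γ t ∉ B) ∧ γ 0 = f ∧ γ 1 = f

/-- The loop `γ` based at `f` induces the permutation `σ` of the root set of `f` by path
lifting: for every root `x` the lift of `γ` starting at `x` ends at `σ x`. -/
def Induces {n : ℕ} (A : Fin n → Finset (Fin n → ℤ)) (γ : unitInterval → Coeff A)
    (f : Coeff A) (σ : RootSet A f → RootSet A f) : Prop :=
  ∀ x : RootSet A f, ∃ δ : unitInterval → Torus n,
    Continuous δ ∧ δ 0 = x.1 ∧ (∀ t, IsRoot A (γ t) (δ t)) ∧ δ 1 = (σ x).1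

/-- A tuple of `k` finite sets `A₁,…,A_k ⊆ ℤⁿ` is linearly independent if for no `m` with
`0 < m ≤ k` can some `k − m + 1` of the sets be translated into one common subgroup of `ℤⁿ`
of rank at most `n − m`. -/
def LinIndepTuple {k n : ℕ} (A : Fin k → Finset (Fin n → ℤ)) : Prop :=
  ¬ ∃ (m : ℕ) (I : Finset (Fin k)) (L : Submodule ℤ (Fin n → ℤ)),
      0 < m ∧ m ≤ k ∧ I.card = k - m + 1 ∧ Module.finrank ℤ L ≤ n - m ∧
      ∀ i ∈ I, TranslatesInto (A i) L


section
namespace AFV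

/-- A simple polytope given by its vertices: `V` is the set of (index sets of) vertices,
`x I f` is the solution of `u i x = f i`, `i ∈ I`. -/
structure Sys {ι : Type} [Fintype ι] [DecidableEq ι] {E : Type} [AddCommGroup E] [Module ℝ E]
    (N : ℕ) (u : ι → E →ₗ[ℝ] ℝ) where
  V : Finset (Finset ι)
  x : Finset ι → (ι → ℝ) →ₗ[ℝ] E
  w : Finset ι → ℝ
  b : ι → ℝ
  ne : V.Nonempty
  card : ∀ I ∈ V, I.card = N
  ux : ∀ I ∈ V, ∀ f : ι → ℝ, ∀ i ∈ I, u i (x I f) = f i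
  inj : ∀ I ∈ V, ∀ y : E, (∀ i ∈ I, u i y = 0) → y = 0
  feas : ∀ I ∈ V, ∀ j, j ∉ I → u j (x I b) < b j
  wpos : ∀ I ∈ V, 0 < w I
  pivot : ∀ I ∈ V, ∀ i ∈ I, ∃ k, k ∉ I ∧ insert k (I.erase i) ∈ V ∧
    u k (x I (Pi.single i 1)) < 0 ∧
    w (insert k (I.erase i)) * (-(u k (x I (Pi.single i 1)))) = w I

namespace Sys

variable {ι : Type} [Fintype ι] [DecidableEq ι] {E : Type} [AddCommGroup E] [Module ℝ E]
    {N : ℕ} {u : ι → E →ₗ[ℝ] ℝ} (S : Sys N u)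

/-- The coefficients of the functional `c` in the basis `u i`, `i ∈ I`. -/
def g (c : E →ₗ[ℝ] ℝ) (I : Finset ι) (i : ι) : ℝ := c (S.x I (Pi.single i 1))

/-- Generic functional. -/
def Gen (c : E →ₗ[ℝ] ℝ) : Prop := ∀ I ∈ S.V, ∀ i ∈ I, S.g c I i ≠ 0

variable {S}

lemma ext_on {I : Finset ι} (hI : I ∈ S.V) {y z : E} (h : ∀ i ∈ I, u i y = u i z) : y = z := by
  have := S.inj I hI (y - z) (fun i hi => by simp [h i hi])
  exact sub_eq_zero.mp this

lemma x_congr {I : Finset ι} (hI : I ∈ S.V) {f f' : ι → ℝ} (h : ∀ i ∈ I, f i = f' i) :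
    S.x I f = S.x I f' :=
  ext_on hI fun i hi => by rw [S.ux I hI f i hi, S.ux I hI f' i hi, h i hi]

lemma x_lin {I : Finset ι} (hI : I ∈ S.V) (t : E) : S.x I (fun v => u v t) = t :=
  ext_on hI fun i hi => by rw [S.ux I hI _ i hi]

lemma y_eq {I : Finset ι} (hI : I ∈ S.V) (c : E →ₗ[ℝ] ℝ) (f : ι → ℝ) :
    c (S.x I f) = ∑ i ∈ I, f i * S.g c I i := by
  have : S.x I f = ∑ i ∈ I, f i • S.x I (Pi.single i 1) := by
    apply ext_on hI
    intro j hj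
    rw [S.ux I hI _ j hj, map_sum, Finset.sum_eq_single j]
    · simp [S.ux I hI _ j hj]
    · intro i hi hij
      simp [S.ux I hI _ j hj, Pi.single_apply, hij.symm]
    · intro h; exact absurd hj h
  rw [this]; simp [g]

lemma c_eq {I : Finset ι} (hI : I ∈ S.V) (c : E →ₗ[ℝ] ℝ) (p : E) (f : ι → ℝ) :
    c p = c (S.x I f) + ∑ i ∈ I, (u i p - f i) * S.g c I i := by
  have h := y_eq hI c (fun v => u v p)
  rw [x_lin hI] at h
  rw [h, y_eq hI, ← Finset.sum_add_distrib]
  exact Finset.sum_congr rfl fun i _ => by ring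

lemma lt_of_pos {I I' J : Finset ι} (hI : I ∈ S.V) (hI' : I' ∈ S.V)
    (hJ' : J ⊆ I') (c : E →ₗ[ℝ] ℝ) (hp : ∀ i ∈ I \ J, 0 < S.g c I i) (hne : I ≠ I') :
    c (S.x I' S.b) < c (S.x I S.b) := by
  rw [c_eq hI c (S.x I' S.b) S.b]
  have : ∑ i ∈ I, (u i (S.x I' S.b) - S.b i) * S.g c I i < ∑ i ∈ I, (0:ℝ) := by
    obtain ⟨k, hk, hk'⟩ : ∃ k ∈ I, k ∉ I' := by
      by_contra! h
      exact hne (Finset.eq_of_subset_of_card_le h (by rw [S.card I hI, S.card I' hI']))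
    have key : ∀ i ∈ I, i ∉ I' → (u i (S.x I' S.b) - S.b i) * S.g c I i < 0 := fun i hi hi' =>
      mul_neg_of_neg_of_pos (by linarith [S.feas I' hI' i hi'])
        (hp i (Finset.mem_sdiff.mpr ⟨hi, fun h => hi' (hJ' h)⟩))
    apply Finset.sum_lt_sum
    · intro i hi
      by_cases h : i ∈ I'
      · rw [S.ux I' hI' _ i h]; simp
      · exact (key i hi h).le
    · exact ⟨k, hk, key k hk hk'⟩
  simp only [Finset.sum_const_zero] at this
  linarith

lemma unique_pos {I I' J : Finset ι} (hI : I ∈ S.V) (hI' : I' ∈ S.V) (hJ : J ⊆ I)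
    (hJ' : J ⊆ I') (c : E →ₗ[ℝ] ℝ) (hp : ∀ i ∈ I \ J, 0 < S.g c I i)
    (hp' : ∀ i ∈ I' \ J, 0 < S.g c I' i) : I = I' := by
  by_contra hne
  have h1 := lt_of_pos hI hI' hJ' c hp hne
  have h2 := lt_of_pos hI' hI hJ c hp' (Ne.symm hne)
  linarith

lemma piv_x {I : Finset ι} (hI : I ∈ S.V) {i k : ι} (hi : i ∈ I) (hk : k ∉ I)
    (hI' : insert k (I.erase i) ∈ S.V) (hd : u k (S.x I (Pi.single i 1)) ≠ 0) (f : ι → ℝ) :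
    S.x (insert k (I.erase i)) f = S.x I f +
      ((f k - u k (S.x I f)) / u k (S.x I (Pi.single i 1))) • S.x I (Pi.single i 1) := by
  apply ext_on hI'
  intro j hj
  rw [S.ux _ hI' _ j hj]
  rcases Finset.mem_insert.mp hj with rfl | hj
  · simp only [map_add, map_smul, smul_eq_mul]
    field_simp; ring
  · obtain ⟨hji, hj⟩ := Finset.mem_erase.mp hj
    simp [S.ux I hI _ j hj, Pi.single_apply, hji]

lemma piv_g {I : Finset ι} (hI : I ∈ S.V) {i k : ι} (hi : i ∈ I) (hk : k ∉ I)
    (hI' : insert k (I.erase i) ∈ S.V) (hd : u k (S.x I (Pi.single i 1)) ≠ 0)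
    (c : E →ₗ[ℝ] ℝ) :
    S.g c (insert k (I.erase i)) k = S.g c I i / u k (S.x I (Pi.single i 1)) := by
  have h0 : S.x I (Pi.single k 1) = 0 := by
    rw [x_congr hI (f' := 0), map_zero]
    intro j hj
    have : j ≠ k := fun h => hk (h ▸ hj)
    simp [this]
  unfold g
  rw [piv_x hI hi hk hI' hd, h0]
  simp; ring

lemma exists_better {I : Finset ι} (hI : I ∈ S.V) {i : ι} (hi : i ∈ I) (c : E →ₗ[ℝ] ℝ)
    (hneg : S.g c I i < 0) : ∃ k, k ∉ I ∧ insert k (I.erase i) ∈ S.V ∧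
      c (S.x I S.b) < c (S.x (insert k (I.erase i)) S.b) := by
  obtain ⟨k, hk, hI', hd, -⟩ := S.pivot I hI i hi
  refine ⟨k, hk, hI', ?_⟩
  rw [piv_x hI hi hk hI' hd.ne]
  simp only [map_add, map_smul, smul_eq_mul]
  have h1 : (S.b k - u k (S.x I S.b)) / u k (S.x I (Pi.single i 1)) < 0 :=
    div_neg_of_pos_of_neg (by linarith [S.feas I hI k hk]) hd
  have := mul_pos_of_neg_of_neg h1 hneg
  unfold g at this
  linarith

lemma erase_sup {I J : Finset ι} (hJ : J ⊆ I) {i : ι} (hi : i ∉ J) (k : ι) :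
    J ⊆ insert k (I.erase i) := fun j hj =>
  Finset.mem_insert_of_mem (Finset.mem_erase.mpr ⟨fun h => hi (h ▸ hj), hJ hj⟩)

lemma exists_pos {I0 J : Finset ι} (hI0 : I0 ∈ S.V) (hJ0 : J ⊆ I0) {c : E →ₗ[ℝ] ℝ}
    (hc : S.Gen c) : ∃ I ∈ S.V, J ⊆ I ∧ ∀ i ∈ I \ J, 0 < S.g c I i := by
  obtain ⟨I, hI, hmax⟩ := Finset.exists_max_image (S.V.filter (J ⊆ ·)) (fun I => c (S.x I S.b))
    ⟨I0, by simp [hI0, hJ0]⟩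
  simp only [Finset.mem_filter] at hI hmax
  refine ⟨I, hI.1, hI.2, fun i hi => ?_⟩
  obtain ⟨hi, hiJ⟩ := Finset.mem_sdiff.mp hi
  by_contra hneg
  obtain ⟨k, hk, hI', hlt⟩ := exists_better hI.1 hi c (lt_of_le_of_ne (not_lt.mp hneg) (hc I hI.1 i hi))
  exact absurd (hmax _ ⟨hI', erase_sup hI.2 hiJ k⟩) (not_le.mpr hlt)

lemma conn {J : Finset ι} {c : E →ₗ[ℝ] ℝ} (hc : S.Gen c) (G : Finset ι → ℝ)
    (hG : ∀ I ∈ S.V, J ⊆ I → ∀ i ∈ I, i ∉ J → ∀ k, k ∉ I → insert k (I.erase i) ∈ S.V →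
      G (insert k (I.erase i)) = G I) :
    ∀ I ∈ S.V, ∀ I' ∈ S.V, J ⊆ I → J ⊆ I' → G I = G I' := by
  intro I hI I' hI' hJ hJ'
  obtain ⟨M, hM, hJM, hp⟩ := exists_pos hI hJ hc
  have key : ∀ I ∈ S.V, J ⊆ I → G I = G M := by
    by_contra! h
    obtain ⟨A, hA, hAJ, hAG⟩ := h
    obtain ⟨B, hB, hmax⟩ := Finset.exists_max_image (S.V.filter (fun I => J ⊆ I ∧ G I ≠ G M))
      (fun I => c (S.x I S.b)) ⟨A, by simp [hA, hAJ, hAG]⟩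
    simp only [Finset.mem_filter] at hB hmax
    obtain ⟨hB, hBJ, hBG⟩ := hB
    have : ∃ i ∈ B \ J, S.g c B i < 0 := by
      by_contra! hall
      apply hBG
      rw [unique_pos hB hM hBJ hJM c (fun i hi => lt_of_le_of_ne (hall i hi)
        (hc B hB i (Finset.mem_sdiff.mp hi).1).symm) hp]
    obtain ⟨i, hi, hneg⟩ := this
    obtain ⟨hi, hiJ⟩ := Finset.mem_sdiff.mp hi
    obtain ⟨k, hk, hI', hlt⟩ := exists_better hB hi c hneg
    refine absurd (hmax _ ⟨hI', erase_sup hBJ hiJ k, ?_⟩) (not_le.mpr hlt)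
    rw [hG B hB hBJ i hi hiJ k hk hI']; exact hBG
  rw [key I hI hJ, key I' hI' hJ']

/-- The two vertices of an edge. -/
lemma edge {I : Finset ι} (hI : I ∈ S.V) {i k : ι} (hi : i ∈ I) (hk : k ∉ I)
    (hI' : insert k (I.erase i) ∈ S.V) (hd : u k (S.x I (Pi.single i 1)) < 0)
    {A : Finset ι} (hA : A ∈ S.V) (hAJ : I.erase i ⊆ A) :
    A = I ∨ A = insert k (I.erase i) := by
  by_cases hiA : i ∈ A
  · left
    refine (Finset.eq_of_subset_of_card_le (fun j hj => ?_) (by rw [S.card I hI, S.card A hA])).symm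
    by_cases h : j = i
    · rwa [h]
    · exact hAJ (Finset.mem_erase.mpr ⟨h, hj⟩)
  have hcard : (I.erase i).card = N - 1 := by rw [Finset.card_erase_of_mem hi, S.card I hI]
  have hN : 0 < N := by rw [← S.card I hI]; exact Finset.card_pos.mpr ⟨i, hi⟩
  obtain ⟨a, haJ, rfl⟩ : ∃ a, a ∉ I.erase i ∧ A = insert a (I.erase i) := by
    have h1 : (A \ I.erase i).card = 1 := by
      rw [Finset.card_sdiff_of_subset hAJ, S.card A hA, hcard]; omega
    obtain ⟨a, ha⟩ := Finset.card_eq_one.mp h1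
    have haA : a ∈ A \ I.erase i := by rw [ha]; simp
    refine ⟨a, (Finset.mem_sdiff.mp haA).2, ?_⟩
    rw [← Finset.sdiff_union_of_subset hAJ, ha]; rfl
  have hai : a ≠ i := fun h => hiA (by simp [h])
  have haI : a ∉ I := fun h => haJ (Finset.mem_erase.mpr ⟨hai, h⟩)
  have hda : u a (S.x I (Pi.single i 1)) ≠ 0 := by
    intro h
    have h0 : S.x I (Pi.single i 1) = 0 := by
      apply S.inj _ hA
      intro j hj
      rcases Finset.mem_insert.mp hj with rfl | hj
      · exact h
      · obtain ⟨h1, h2⟩ := Finset.mem_erase.mp hj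
        simp [S.ux I hI _ j h2, h1]
    have := S.ux I hI (Pi.single i 1) i hi
    rw [h0] at this; simp at this
  have hgi : S.g (u i) I i = 1 := by simp [g, S.ux I hI _ i hi]
  rcases lt_or_gt_of_ne hda with hneg | hpos
  · right
    apply unique_pos hA hI' hAJ (Finset.subset_insert _ _) (-(u i))
    · intro j hj
      have : j = a := by
        obtain ⟨h1, h2⟩ := Finset.mem_sdiff.mp hj
        rcases Finset.mem_insert.mp h1 with h | h
        · exact h
        · exact absurd h h2
      subst this
      rw [piv_g hI hi haI hA hda]
      have : S.g (-(u i)) I i = -1 := by rw [← hgi]; simp [g]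
      rw [this]; exact div_pos_of_neg_of_neg (by norm_num) hneg
    · intro j hj
      have : j = k := by
        obtain ⟨h1, h2⟩ := Finset.mem_sdiff.mp hj
        rcases Finset.mem_insert.mp h1 with h | h
        · exact h
        · exact absurd h h2
      subst this
      rw [piv_g hI hi hk hI' hd.ne]
      have : S.g (-(u i)) I i = -1 := by rw [← hgi]; simp [g]
      rw [this]; exact div_pos_of_neg_of_neg (by norm_num) hd
  · left
    apply unique_pos hA hI hAJ (Finset.erase_subset _ _) (u i)
    · intro j hj
      have : j = a := by
        obtain ⟨h1, h2⟩ := Finset.mem_sdiff.mp hj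
        rcases Finset.mem_insert.mp h1 with h | h
        · exact h
        · exact absurd h h2
      subst this
      rw [piv_g hI hi haI hA hda, hgi]
      positivity
    · intro j hj
      have : j = i := by
        obtain ⟨h1, h2⟩ := Finset.mem_sdiff.mp hj
        by_contra h
        exact h2 (Finset.mem_erase.mpr ⟨h, h1⟩)
      subst this
      rw [hgi]; norm_num

end Sys
end AFV
end

section
namespace AFV
namespace Sys

variable {ι : Type} [Fintype ι] [DecidableEq ι] {E : Type} [AddCommGroup E] [Module ℝ E]
    {N : ℕ} {u : ι → E →ₗ[ℝ] ℝ} (S : Sys N u)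

/-- The mixed volume form on the face `J`. -/
noncomputable def D (c : E →ₗ[ℝ] ℝ) (J : Finset ι) (m : Multiset (ι → ℝ)) : ℝ :=
  ∑ I ∈ S.V.filter (J ⊆ ·), S.w I * (m.map (fun f => c (S.x I f))).prod / ∏ k ∈ I \ J, S.g c I k

variable {S} {c : E →ₗ[ℝ] ℝ}

lemma D_add (J : Finset ι) (f f' : ι → ℝ) (m : Multiset (ι → ℝ)) :
    S.D c J ((f + f') ::ₘ m) = S.D c J (f ::ₘ m) + S.D c J (f' ::ₘ m) := by
  unfold D
  rw [← Finset.sum_add_distrib]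
  refine Finset.sum_congr rfl fun I _ => ?_
  simp only [Multiset.map_cons, Multiset.prod_cons, map_add]
  ring

lemma D_smul (J : Finset ι) (r : ℝ) (f : ι → ℝ) (m : Multiset (ι → ℝ)) :
    S.D c J ((r • f) ::ₘ m) = r * S.D c J (f ::ₘ m) := by
  unfold D
  rw [Finset.mul_sum]
  refine Finset.sum_congr rfl fun I _ => ?_
  simp only [Multiset.map_cons, Multiset.prod_cons, map_smul, smul_eq_mul]
  ring

variable (S c) in
/-- `D` as a linear form in one argument. -/
noncomputable def Dlin (J : Finset ι) (m : Multiset (ι → ℝ)) : (ι → ℝ) →ₗ[ℝ] ℝ where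
  toFun f := S.D c J (f ::ₘ m)
  map_add' f f' := D_add J f f' m
  map_smul' r f := D_smul J r f m

lemma D_sub (J : Finset ι) (f f' : ι → ℝ) (m : Multiset (ι → ℝ)) :
    S.D c J ((f - f') ::ₘ m) = S.D c J (f ::ₘ m) - S.D c J (f' ::ₘ m) :=
  (S.Dlin c J m).map_sub f f'

lemma D_cons_lin (J : Finset ι) (t : E) (m : Multiset (ι → ℝ)) :
    S.D c J ((fun v => u v t) ::ₘ m) = c t * S.D c J m := by
  unfold D
  rw [Finset.mul_sum]
  refine Finset.sum_congr rfl fun I hI => ?_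
  simp only [Multiset.map_cons, Multiset.prod_cons, x_lin (Finset.mem_filter.mp hI).1 t]
  ring

lemma D_rec (hc : S.Gen c) (J : Finset ι) (f : ι → ℝ) (hf : ∀ j ∈ J, f j = 0)
    (m : Multiset (ι → ℝ)) :
    S.D c J (f ::ₘ m) = ∑ v ∈ Jᶜ, f v * S.D c (insert v J) m := by
  unfold D
  simp_rw [Finset.mul_sum, Finset.sum_filter]
  rw [Finset.sum_comm]
  refine Finset.sum_congr rfl fun I hI => ?_
  simp only [Multiset.map_cons, Multiset.prod_cons]
  by_cases hJ : J ⊆ I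
  · rw [if_pos hJ, y_eq hI]
    have h1 : ∑ i ∈ I, f i * S.g c I i = ∑ i ∈ I \ J, f i * S.g c I i := by
      symm
      apply Finset.sum_subset Finset.sdiff_subset
      intro i hi hi'
      have : i ∈ J := by by_contra h; exact hi' (Finset.mem_sdiff.mpr ⟨hi, h⟩)
      simp [hf i this]
    rw [h1]
    have h2 : I \ J ⊆ Jᶜ := fun i hi => by simp [(Finset.mem_sdiff.mp hi).2]
    rw [← Finset.sum_subset h2]
    · rw [Finset.sum_mul, Finset.mul_sum, Finset.sum_div]
      refine Finset.sum_congr rfl fun i hi => ?_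
      obtain ⟨hiI, hiJ⟩ := Finset.mem_sdiff.mp hi
      rw [if_pos (Finset.insert_subset hiI hJ), ← Finset.mul_prod_erase _ _ hi]
      have : (I \ J).erase i = I \ insert i J := by ext a; simp; tauto
      rw [this]
      have := hc I hI i hiI
      have h4 : ∏ k ∈ I \ insert i J, S.g c I k ≠ 0 :=
        Finset.prod_ne_zero_iff.mpr fun k hk => hc I hI k (Finset.mem_sdiff.mp hk).1
      field_simp
    · intro i hi hi'
      rw [if_neg, ]
      · intro h
        exact hi' (Finset.mem_sdiff.mpr ⟨h (Finset.mem_insert_self _ _), by simpa using hi⟩)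
  · rw [if_neg hJ]
    symm
    apply Finset.sum_eq_zero
    intro i _
    rw [if_neg]
    exact fun h => hJ ((Finset.subset_insert _ _).trans h)

lemma D_noface {J : Finset ι} (h : ¬ ∃ I ∈ S.V, J ⊆ I) (m : Multiset (ι → ℝ)) :
    S.D c J m = 0 := by
  unfold D
  apply Finset.sum_eq_zero
  intro I hI
  exact absurd ⟨I, (Finset.mem_filter.mp hI).1, (Finset.mem_filter.mp hI).2⟩ h

lemma D_edge (hc : S.Gen c) {J : Finset ι} (hJ : J.card + 1 = N) : S.D c J 0 = 0 := by
  by_cases h : ∃ I ∈ S.V, J ⊆ I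
  swap
  · exact D_noface h 0
  obtain ⟨I, hI, hJI⟩ := h
  obtain ⟨i, hi⟩ : ∃ i, I \ J = {i} := by
    apply Finset.card_eq_one.mp
    rw [Finset.card_sdiff_of_subset hJI, S.card I hI]; omega
  have hiI : i ∈ I \ J := by rw [hi]; simp
  obtain ⟨hiI, hiJ⟩ := Finset.mem_sdiff.mp hiI
  have hJe : J = I.erase i := by
    rw [Finset.erase_eq, ← hi]; simp [hJI]
  obtain ⟨k, hk, hI', hd, hw⟩ := S.pivot I hI i hiI
  have hkJ : k ∉ J := fun h => hk (hJI h)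
  have hfil : S.V.filter (J ⊆ ·) = {I, insert k (I.erase i)} := by
    ext A
    simp only [Finset.mem_filter, Finset.mem_insert, Finset.mem_singleton]
    constructor
    · rintro ⟨hA, hAJ⟩
      exact edge hI hiI hk hI' hd hA (hJe ▸ hAJ)
    · rintro (rfl | rfl)
      · exact ⟨hI, hJI⟩
      · exact ⟨hI', hJe ▸ Finset.subset_insert _ _⟩
  have hne : I ≠ insert k (I.erase i) := fun h => hk (by rw [h]; simp)
  unfold D
  rw [hfil, Finset.sum_pair hne, hi, ← hJe]
  have : insert k J \ J = {k} := by
    ext a; simp only [Finset.mem_sdiff, Finset.mem_insert, Finset.mem_singleton]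
    constructor
    · rintro ⟨h | h, h'⟩
      · exact h
      · exact absurd h h'
    · rintro rfl; exact ⟨Or.inl rfl, hkJ⟩
  rw [this]
  simp only [Multiset.map_zero, Multiset.prod_zero, Finset.prod_singleton, mul_one]
  rw [hJe, piv_g hI hiI hk hI' hd.ne, ← hw]
  have := hc I hI i hiI
  have := hd.ne
  field_simp
  ring

lemma D_zero (hc : S.Gen c) : ∀ (n : ℕ) (J : Finset ι), J.card + n = N →
    ∀ m : Multiset (ι → ℝ), J.card + m.card < N → S.D c J m = 0 := by
  intro n
  induction n with
  | zero => intro J hJ m hm; omega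
  | succ n ih =>
    intro J hJ m
    by_cases hface : ∃ I ∈ S.V, J ⊆ I
    swap
    · intro _; exact D_noface hface m
    obtain ⟨I, hI, hJI⟩ := hface
    have hrec : ∀ (f : ι → ℝ) (m : Multiset (ι → ℝ)), (∀ j ∈ J, f j = 0) →
        J.card + m.card + 1 < N → S.D c J (f ::ₘ m) = 0 := by
      intro f m hf hm
      rw [D_rec hc J f hf]
      apply Finset.sum_eq_zero
      intro v hv
      have hv : v ∉ J := by simpa using hv
      rw [ih (insert v J) (by rw [Finset.card_insert_of_notMem hv]; omega) m
        (by rw [Finset.card_insert_of_notMem hv]; omega), mul_zero]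
    induction m using Multiset.induction with
    | empty =>
      intro hm
      by_cases h1 : J.card + 1 = N
      · exact D_edge hc h1
      simp only [Multiset.card_zero] at hm
      obtain ⟨i, hiI, hiJ⟩ : ∃ i ∈ I, i ∉ J := by
        by_contra! h
        have := Finset.card_le_card h
        rw [S.card I hI] at this; omega
      have hg := hc I hI i hiI
      have := D_cons_lin (S := S) (c := c) J (S.x I (Pi.single i 1)) 0
      rw [hrec] at this
      · have h2 : c (S.x I (Pi.single i 1)) ≠ 0 := hg
        have := this.symm
        rcases mul_eq_zero.mp this with h | h
        · exact absurd h h2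
        · exact h
      · intro j hj
        rw [S.ux I hI _ j (hJI hj)]
        have : j ≠ i := fun h => hiJ (h ▸ hj)
        simp [this]
      · simp; omega
    | cons f m ihm =>
      intro hm
      rw [Multiset.card_cons] at hm
      have h1 := D_sub (S := S) (c := c) J f (fun v => u v (S.x I f)) m
      rw [D_cons_lin, ihm (by omega), hrec] at h1
      · linarith
      · intro j hj; simp [S.ux I hI f j (hJI hj)]
      · omega

lemma D_trans (hc : S.Gen c) {J : Finset ι} {m : Multiset (ι → ℝ)} (h : J.card + m.card + 1 = N)
    (f : ι → ℝ) (t : E) : S.D c J ((f - fun v => u v t) ::ₘ m) = S.D c J (f ::ₘ m) := by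
  rw [D_sub, D_cons_lin, D_zero hc (N - J.card) J (by omega) m (by omega)]
  ring

variable (S) in
/-- Nef vectors: weakly compatible with the combinatorial type. -/
def Nef (K : ι → ℝ) : Prop := ∀ I ∈ S.V, ∀ j, u j (S.x I K) ≤ K j

variable (S) in
/-- Ample vectors: strictly compatible with the combinatorial type. -/
def Ample (K : ι → ℝ) : Prop := ∀ I ∈ S.V, ∀ j, j ∉ I → u j (S.x I K) < K j

lemma Ample.nef {K : ι → ℝ} (h : S.Ample K) : S.Nef K := by
  intro I hI j
  by_cases hj : j ∈ I
  · rw [S.ux I hI K j hj]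
  · exact (h I hI j hj).le

lemma ample_b : S.Ample S.b := S.feas

lemma Nef.add_ample {K L : ι → ℝ} (h : S.Nef K) (h' : S.Ample L) : S.Ample (K + L) := by
  intro I hI j hj
  have := h I hI j
  have := h' I hI j hj
  simp only [map_add, Pi.add_apply]; linarith

lemma Ample.smul {K : ι → ℝ} (h : S.Ample K) {r : ℝ} (hr : 0 < r) : S.Ample (r • K) := by
  intro I hI j hj
  have := h I hI j hj
  simp only [map_smul, Pi.smul_apply, smul_eq_mul]
  exact mul_lt_mul_of_pos_left this hr

lemma Nef.add {K L : ι → ℝ} (h : S.Nef K) (h' : S.Nef L) : S.Nef (K + L) := by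
  intro I hI j
  have := h I hI j
  have := h' I hI j
  simp only [map_add, Pi.add_apply]; linarith

lemma D_top {J : Finset ι} (hJ : J.card = N) : S.D c J 0 = if J ∈ S.V then S.w J else 0 := by
  have : S.V.filter (J ⊆ ·) = if J ∈ S.V then {J} else ∅ := by
    ext A
    simp only [Finset.mem_filter]
    split_ifs with h
    · simp only [Finset.mem_singleton]
      constructor
      · rintro ⟨hA, hJA⟩
        exact (Finset.eq_of_subset_of_card_le hJA (by rw [hJ, S.card A hA])).symm
      · rintro rfl; exact ⟨h, subset_rfl⟩
    · simp only [Finset.notMem_empty, iff_false]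
      rintro ⟨hA, hJA⟩
      exact h ((Finset.eq_of_subset_of_card_le hJA (by rw [hJ, S.card A hA])) ▸ hA)
  unfold D
  rw [this]
  split_ifs <;> simp

lemma D_nonneg (hc : S.Gen c) (m : Multiset (ι → ℝ)) : (∀ f ∈ m, S.Nef f) →
    ∀ J : Finset ι, J.card + m.card = N → 0 ≤ S.D c J m := by
  induction m using Multiset.induction with
  | empty =>
    intro _ J hJ
    rw [D_top (by simpa using hJ)]
    split_ifs with h
    · exact (S.wpos J h).le
    · exact le_rfl
  | cons f m ih =>
    intro hm J hJ
    rw [Multiset.card_cons] at hJ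
    by_cases hface : ∃ I ∈ S.V, J ⊆ I
    swap
    · rw [D_noface hface]
    obtain ⟨I, hI, hJI⟩ := hface
    rw [← D_trans hc (by omega) f (S.x I f), D_rec hc]
    · apply Finset.sum_nonneg
      intro v hv
      have hv : v ∉ J := by simpa using hv
      apply mul_nonneg
      · simp only [Pi.sub_apply]
        have := hm f (by simp) I hI v
        linarith
      · apply ih (fun f hf => hm f (Multiset.mem_cons_of_mem hf))
        rw [Finset.card_insert_of_notMem hv]; omega
    · intro j hj; simp [S.ux I hI f j (hJI hj)]

lemma D_pos (hc : S.Gen c) (m : Multiset (ι → ℝ)) : (∀ f ∈ m, S.Ample f) →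
    ∀ J : Finset ι, (∃ I ∈ S.V, J ⊆ I) → J.card + m.card = N → 0 < S.D c J m := by
  induction m using Multiset.induction with
  | empty =>
    rintro _ J ⟨I, hI, hJI⟩ hJ
    have hJc : J.card = N := by simpa using hJ
    have : J = I := Finset.eq_of_subset_of_card_le hJI (by rw [hJc, S.card I hI])
    rw [D_top hJc, this, if_pos hI]
    exact S.wpos I hI
  | cons f m ih =>
    rintro hm J ⟨I, hI, hJI⟩ hJ
    rw [Multiset.card_cons] at hJ
    rw [← D_trans hc (by omega) f (S.x I f), D_rec hc]
    · obtain ⟨i, hiI, hiJ⟩ : ∃ i ∈ I, i ∉ J := by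
        by_contra! h
        have := Finset.card_le_card h
        rw [S.card I hI] at this; omega
      obtain ⟨k, hk, hI', -, -⟩ := S.pivot I hI i hiI
      have hkJ : k ∉ J := fun h => hk (hJI h)
      apply Finset.sum_pos'
      · intro v hv
        have hv : v ∉ J := by simpa using hv
        apply mul_nonneg
        · simp only [Pi.sub_apply]
          have := (hm f (by simp)).nef I hI v
          linarith
        · apply D_nonneg hc m (fun f hf => (hm f (Multiset.mem_cons_of_mem hf)).nef)
          rw [Finset.card_insert_of_notMem hv]; omega
      · refine ⟨k, by simpa using hkJ, mul_pos ?_ ?_⟩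
        · have := hm f (by simp) I hI k hk
          simp only [Pi.sub_apply]; linarith
        · apply ih (fun f hf => hm f (Multiset.mem_cons_of_mem hf))
          · exact ⟨_, hI', Finset.insert_subset (Finset.mem_insert_self _ _) (erase_sup hJI hiJ k)⟩
          · rw [Finset.card_insert_of_notMem hkJ]; omega
    · intro j hj; simp [S.ux I hI f j (hJI hj)]

lemma D_mono (hc : S.Gen c) {m : Multiset (ι → ℝ)} (hm : ∀ f ∈ m, S.Nef f)
    (hcard : m.card + 1 = N) {f f' : ι → ℝ} (h : ∀ i, f i ≤ f' i) :
    S.D c ∅ (f ::ₘ m) ≤ S.D c ∅ (f' ::ₘ m) := by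
  have h1 := D_sub (S := S) (c := c) ∅ f' f m
  have h2 : 0 ≤ S.D c ∅ ((f' - f) ::ₘ m) := by
    rw [D_rec hc _ _ (by simp)]
    apply Finset.sum_nonneg
    intro v _
    exact mul_nonneg (by simp [h v]) (D_nonneg hc m hm _ (by simp; omega))
  linarith

end Sys
end AFV
end

section
namespace AFV

lemma lin_core {α : Type} [Fintype α] (C : α → α → ℝ) (hsymm : ∀ v w, C v w = C w v)
    (off : ∀ v w, v ≠ w → 0 ≤ C v w) (d : α → ℝ) (hd : ∀ v, ∑ w, C v w = d v)
    (dpos : ∀ v, 0 < d v)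
    (conn : ∀ r : α → ℝ, (∀ v w, v ≠ w → 0 < C v w → r v = r w) → ∀ v w, r v = r w)
    (H : ∀ r : α → ℝ, ∑ v, ∑ w, C v w * r v * r w ≤ ∑ v, (∑ w, C v w * r w) ^ 2 / d v)
    (r : α → ℝ) (hr : ∑ v, d v * r v = 0) : ∑ v, ∑ w, C v w * r v * r w ≤ 0 := by
  classical
  -- the Laplacian
  let B : (α → ℝ) →ₗ[ℝ] (α → ℝ) :=
    { toFun := fun f v => d v * f v - ∑ w, C v w * f w
      map_add' := by
        intro f g; ext v
        simp only [Pi.add_apply, mul_add, Finset.sum_add_distrib]; ring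
      map_smul' := by
        intro t f; ext v
        simp only [Pi.smul_apply, smul_eq_mul, RingHom.id_apply, mul_sub, Finset.mul_sum]
        congr 1
        · ring
        · exact Finset.sum_congr rfl fun _ _ => by ring }
  have hB : ∀ f v, B f v = d v * f v - ∑ w, C v w * f w := fun _ _ => rfl
  let q : (α → ℝ) → (α → ℝ) → ℝ := fun f g => ∑ v, f v * B g v
  have hq : ∀ f g, q f g = ∑ v, d v * f v * g v - ∑ v, ∑ w, C v w * f v * g w := by
    intro f g
    simp only [q, hB]
    rw [← Finset.sum_sub_distrib]
    refine Finset.sum_congr rfl fun v _ => ?_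
    rw [mul_sub, Finset.mul_sum]
    congr 1
    · ring
    · exact Finset.sum_congr rfl fun _ _ => by ring
  have qsymm : ∀ f g, q f g = q g f := by
    intro f g
    rw [hq, hq, Finset.sum_comm (f := fun v w => C v w * f v * g w)]
    congr 1
    · exact Finset.sum_congr rfl fun _ _ => by ring
    · refine Finset.sum_congr rfl fun v _ => Finset.sum_congr rfl fun w _ => ?_
      rw [hsymm w v]; ring
  have qid : ∀ f, q f f = 1 / 2 * ∑ v, ∑ w, C v w * (f v - f w) ^ 2 := by
    intro f
    have e1 : ∑ v, ∑ w, C v w * f v ^ 2 = ∑ v, d v * f v * f v := by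
      refine Finset.sum_congr rfl fun v _ => ?_
      rw [← hd v, Finset.sum_mul, Finset.sum_mul]
      exact Finset.sum_congr rfl fun _ _ => by ring
    have e2 : ∑ v, ∑ w, C v w * f w ^ 2 = ∑ v, d v * f v * f v := by
      rw [← e1, Finset.sum_comm]
      refine Finset.sum_congr rfl fun v _ => Finset.sum_congr rfl fun w _ => ?_
      rw [hsymm]
    have e3 : ∑ v, ∑ w, C v w * (f v - f w) ^ 2 = ∑ v, ∑ w, C v w * f v ^ 2
        + ∑ v, ∑ w, C v w * f w ^ 2 - 2 * ∑ v, ∑ w, C v w * f v * f w := by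
      simp only [Finset.mul_sum, ← Finset.sum_add_distrib, ← Finset.sum_sub_distrib]
      refine Finset.sum_congr rfl fun v _ => Finset.sum_congr rfl fun w _ => ?_
      ring
    rw [hq, e3, e1, e2]; ring
  have qterm : ∀ (f : α → ℝ) v w, 0 ≤ C v w * (f v - f w) ^ 2 := by
    intro f v w
    by_cases h : v = w
    · simp [h]
    · exact mul_nonneg (off v w h) (sq_nonneg _)
  have qnn : ∀ f, 0 ≤ q f f := by
    intro f
    rw [qid]
    exact mul_nonneg (by norm_num) (Finset.sum_nonneg fun v _ => Finset.sum_nonneg fun w _ => qterm f v w)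
  have qker : ∀ f, q f f = 0 → ∀ v w, f v = f w := by
    intro f hf
    apply conn
    intro v w hvw hC
    rw [qid] at hf
    have h0 : ∑ v, ∑ w, C v w * (f v - f w) ^ 2 = 0 := by linarith
    rw [Finset.sum_eq_zero_iff_of_nonneg
      (fun v _ => Finset.sum_nonneg fun w _ => qterm f v w)] at h0
    have h1 := h0 v (Finset.mem_univ _)
    rw [Finset.sum_eq_zero_iff_of_nonneg (fun w _ => qterm f v w)] at h1
    have h2 := h1 w (Finset.mem_univ _)
    have h3 : (f v - f w) ^ 2 = 0 := by
      rcases mul_eq_zero.mp h2 with h | h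
      · exact absurd h hC.ne'
      · exact h
    have := pow_eq_zero_iff (two_ne_zero) |>.mp h3
    linarith
  rcases isEmpty_or_nonempty α with hα | ⟨⟨v0⟩⟩
  · simp
  -- solve `B f = d r`
  let S : (α → ℝ) →ₗ[ℝ] ℝ := ∑ v, LinearMap.proj v
  have hS : ∀ f, S f = ∑ v, f v := fun f => by simp [S]
  have hB1 : B (fun _ => 1) = 0 := by
    ext v; rw [hB]; simp [hd]
  have hrange : LinearMap.range B = LinearMap.ker S := by
    apply Submodule.eq_of_le_of_finrank_le
    · rintro _ ⟨f, rfl⟩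
      rw [LinearMap.mem_ker, hS]
      have := qsymm (fun _ => 1) f
      simp only [q, hB1] at this
      simpa using this
    · have h1 := LinearMap.finrank_range_add_finrank_ker B
      have h2 := LinearMap.finrank_range_add_finrank_ker S
      have h3 : Module.finrank ℝ (LinearMap.ker B) ≤ 1 := by
        apply finrank_le_one (⟨fun _ => 1, hB1⟩ : LinearMap.ker B)
        rintro ⟨f, hf⟩
        refine ⟨f v0, ?_⟩
        ext v
        have : q f f = 0 := by
          simp only [q]; rw [LinearMap.mem_ker.mp hf]; simp
        simp [qker f this v0 v]
      have h4 : LinearMap.range S = ⊤ := by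
        rw [LinearMap.range_eq_top]
        intro t
        refine ⟨Pi.single v0 t, ?_⟩
        rw [hS]; simp
      rw [h4, finrank_top, Module.finrank_self] at h2
      omega
  have hmem : (fun v => d v * r v) ∈ LinearMap.range B := by
    rw [hrange, LinearMap.mem_ker, hS]; exact hr
  obtain ⟨f, hf⟩ := hmem
  have hf' : ∀ v, B f v = d v * r v := fun v => congrFun hf v
  set n := ∑ v, d v * r v ^ 2 with hn
  have hnn : 0 ≤ n := Finset.sum_nonneg fun v _ => mul_nonneg (dpos v).le (sq_nonneg _)
  have h1 : q r f = n := by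
    simp only [q, hf', hn]
    exact Finset.sum_congr rfl fun _ _ => by ring
  have h2 : q f f ≤ n := by
    have h5 := H f
    have h6 : ∑ v, (∑ w, C v w * f w) ^ 2 / d v
        = ∑ v, (d v * f v ^ 2 - 2 * (f v * (d v * r v)) + d v * r v ^ 2) := by
      refine Finset.sum_congr rfl fun v _ => ?_
      have : ∑ w, C v w * f w = d v * f v - d v * r v := by
        have := hf' v
        rw [hB] at this; linarith
      rw [this]
      have := (dpos v).ne'
      field_simp
      ring
    have h7 : q f f = ∑ v, f v * (d v * r v) := by simp only [q, hf']
    have h8 := hq f f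
    rw [h6, Finset.sum_add_distrib, Finset.sum_sub_distrib, ← Finset.mul_sum] at h5
    rw [← h7, ← hn] at h5
    have h9 : ∑ v, d v * f v * f v = ∑ v, d v * f v ^ 2 :=
      Finset.sum_congr rfl fun _ _ => by ring
    linarith
  have h3 : q r r = n - ∑ v, ∑ w, C v w * r v * r w := by
    rw [hq, hn]; congr 1
    exact Finset.sum_congr rfl fun _ _ => by ring
  have hcs : ∀ t : ℝ, 0 ≤ q r r * (t * t) + (2 * q r f) * t + q f f := by
    intro t
    have := qnn (t • r + f)
    have e : q (t • r + f) (t • r + f) = q r r * (t * t) + (q r f + q f r) * t + q f f := by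
      simp only [q, map_add, map_smul, Pi.add_apply, Pi.smul_apply, smul_eq_mul, Finset.sum_mul,
        ← Finset.sum_add_distrib]
      exact Finset.sum_congr rfl fun _ _ => by ring
    rw [e, qsymm f r] at this
    linarith
  have hdisc := discrim_le_zero hcs
  rw [discrim, h1] at hdisc
  have hrr := qnn r
  by_contra! hcon
  have hlt : q r r < n := by linarith
  have : 0 < n := lt_of_le_of_lt hrr hlt
  have h10 : q r r * q f f ≤ q r r * n := mul_le_mul_of_nonneg_left h2 hrr
  nlinarith

end AFV
end

section
namespace AFV
namespace Sys

variable {ι : Type} [Fintype ι] [DecidableEq ι] {E : Type} [AddCommGroup E] [Module ℝ E]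
    {N : ℕ} {u : ι → E →ₗ[ℝ] ℝ} {S : Sys N u} {c : E →ₗ[ℝ] ℝ}

lemma D_quad (J : Finset ι) (f g : ι → ℝ) (s : ℝ) (m : Multiset (ι → ℝ)) :
    S.D c J ((f - s • g) ::ₘ (f - s • g) ::ₘ m) = S.D c J (f ::ₘ f ::ₘ m)
      - 2 * s * S.D c J (f ::ₘ g ::ₘ m) + s ^ 2 * S.D c J (g ::ₘ g ::ₘ m) := by
  rw [D_sub, Multiset.cons_swap f, D_sub, D_smul, D_smul, Multiset.cons_swap g (f - s • g), D_sub,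
    D_smul, Multiset.cons_swap g f]
  ring

lemma af_conv {J : Finset ι} {m : Multiset (ι → ℝ)} {φ : (ι → ℝ) →ₗ[ℝ] ℝ}
    (hφ : ∀ f, φ f = 0 → S.D c J (f ::ₘ f ::ₘ m) ≤ 0) (f g : ι → ℝ)
    (hg : 0 < S.D c J (g ::ₘ g ::ₘ m)) :
    S.D c J (f ::ₘ f ::ₘ m) * S.D c J (g ::ₘ g ::ₘ m) ≤ S.D c J (f ::ₘ g ::ₘ m) ^ 2 := by
  have h0 : φ g ≠ 0 := fun h => absurd (hφ g h) (not_le.mpr hg)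
  have h1 := hφ (f - (φ f / φ g) • g) (by simp [h0])
  rw [D_quad] at h1
  set s := φ f / φ g
  nlinarith [sq_nonneg (S.D c J (f ::ₘ g ::ₘ m) - s * S.D c J (g ::ₘ g ::ₘ m))]

lemma g_neg (I : Finset ι) (i : ι) : S.g (-c) I i = - S.g c I i := by simp [g]

lemma Gen.neg (hc : S.Gen c) : S.Gen (-c) := fun I hI i hi => by
  rw [g_neg]; exact neg_ne_zero.mpr (hc I hI i hi)

lemma af_base (hc : S.Gen c) {J : Finset ι} (hJ : ∃ I ∈ S.V, J ⊆ I) (hcard : J.card + 2 = N) :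
    ∃ φ : (ι → ℝ) →ₗ[ℝ] ℝ, ∀ f, φ f = 0 → S.D c J (f ::ₘ f ::ₘ 0) ≤ 0 := by
  obtain ⟨I0, hI0, hJ0⟩ := hJ
  obtain ⟨P, hP, hJP, hp⟩ := exists_pos hI0 hJ0 hc
  obtain ⟨M, hM, hJM, hm⟩ := exists_pos hI0 hJ0 hc.neg
  refine ⟨c ∘ₗ S.x P - c ∘ₗ S.x M, fun f hf => ?_⟩
  have hf : c (S.x P f) = c (S.x M f) := by
    simp at hf; linarith
  rw [← D_trans hc (by simp; omega) f (S.x P f), Multiset.cons_swap,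
    ← D_trans hc (by simp; omega) f (S.x P f)]
  set f' : ι → ℝ := f - fun v => u v (S.x P f) with hf'
  unfold D
  apply Finset.sum_nonpos
  intro I hI
  obtain ⟨hI, hJI⟩ := Finset.mem_filter.mp hI
  simp only [Multiset.map_cons, Multiset.map_zero, Multiset.prod_cons, Multiset.prod_zero, mul_one]
  have hfI : c (S.x I f') = c (S.x I f) - c (S.x P f) := by
    rw [hf', map_sub, x_lin hI, map_sub]
  have hPM : I = P ∨ I = M → c (S.x I f') = 0 := by
    rintro (rfl | rfl)
    · rw [hfI, sub_self]
    · rw [hfI, hf, sub_self]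
  obtain ⟨a, b, hab, hIJ⟩ : ∃ a b, a ≠ b ∧ I \ J = {a, b} := by
    apply Finset.card_eq_two.mp
    rw [Finset.card_sdiff_of_subset hJI, S.card I hI]; omega
  rw [hIJ, Finset.prod_pair hab]
  have ha : a ∈ I := (Finset.mem_sdiff.mp (hIJ ▸ Finset.mem_insert_self a {b})).1
  have hb : b ∈ I := (Finset.mem_sdiff.mp (by rw [hIJ]; simp : b ∈ I \ J)).1
  have hga := hc I hI a ha
  have hgb := hc I hI b hb
  by_cases hpos : 0 < S.g c I a * S.g c I b
  · have : I = P ∨ I = M := by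
      rcases pos_and_pos_or_neg_and_neg_of_mul_pos hpos with ⟨h1, h2⟩ | ⟨h1, h2⟩
      · left
        apply unique_pos hI hP hJI hJP c _ hp
        rw [hIJ]; intro i hi
        rcases Finset.mem_insert.mp hi with rfl | hi
        · exact h1
        · rw [Finset.mem_singleton.mp hi]; exact h2
      · right
        apply unique_pos hI hM hJI hJM (-c) _ hm
        rw [hIJ]; intro i hi
        rw [g_neg]
        rcases Finset.mem_insert.mp hi with rfl | hi
        · linarith
        · rw [Finset.mem_singleton.mp hi]; linarith
    rw [hPM this]; simp
  · apply div_nonpos_of_nonneg_of_nonpos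
    · exact mul_nonneg (S.wpos I hI).le (mul_self_nonneg _)
    · exact not_lt.mp hpos

open Classical in
lemma D_rec' (hc : S.Gen c) (J : Finset ι) (f : ι → ℝ) (hf : ∀ j ∈ J, f j = 0)
    (m : Multiset (ι → ℝ)) :
    S.D c J (f ::ₘ m) = ∑ v : {v // v ∉ J ∧ ∃ I ∈ S.V, insert v J ⊆ I},
      f v * S.D c (insert v.1 J) m := by
  rw [D_rec hc J f hf]
  rw [← Finset.sum_subtype (Jᶜ.filter fun v => ∃ I ∈ S.V, insert v J ⊆ I) (by simp)
    (fun v => f v * S.D c (insert v J) m)]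
  symm
  apply Finset.sum_subset (Finset.filter_subset _ _)
  intro v hv hv'
  rw [D_noface, mul_zero]
  intro h
  exact hv' (Finset.mem_filter.mpr ⟨hv, h⟩)

lemma D_single (hc : S.Gen c) {J : Finset ι} {v : ι} (hv : v ∉ J) (m : Multiset (ι → ℝ)) :
    S.D c J (Pi.single v 1 ::ₘ m) = S.D c (insert v J) m := by
  rw [D_rec hc J _ (fun j hj => by
    have : j ≠ v := fun h => hv (h ▸ hj)
    simp [this])]
  rw [Finset.sum_eq_single v]
  · simp
  · intro w _ hw; simp [hw]
  · intro h; exact absurd hv (by simpa using h)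


lemma exists_kappa {J : Finset ι} (hJ : ∃ I ∈ S.V, J ⊆ I) {K : ι → ℝ} (hK : S.Ample K) :
    ∃ t : E, (∀ j ∈ J, K j - u j t = 0) ∧ ∀ j, j ∉ J → 0 < K j - u j t := by
  obtain ⟨I0, hI0, hJ0⟩ := hJ
  set W := S.V.filter (J ⊆ ·) with hW
  have hI0W : I0 ∈ W := by simp [hW, hI0, hJ0]
  have hn : (0:ℝ) < W.card := by exact_mod_cast Finset.card_pos.mpr ⟨I0, hI0W⟩
  have hform : ∀ j, K j - u j ((W.card : ℝ)⁻¹ • ∑ I ∈ W, S.x I K)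
      = (W.card : ℝ)⁻¹ * ∑ I ∈ W, (K j - u j (S.x I K)) := by
    intro j
    rw [Finset.sum_sub_distrib, map_smul, map_sum, Finset.sum_const, nsmul_eq_mul, smul_eq_mul]
    field_simp
  refine ⟨(W.card : ℝ)⁻¹ • ∑ I ∈ W, S.x I K, ?_, ?_⟩
  · intro j hj
    rw [hform, Finset.sum_eq_zero, mul_zero]
    intro I hI
    obtain ⟨hI, hJI⟩ := Finset.mem_filter.mp hI
    rw [S.ux I hI K j (hJI hj), sub_self]
  · intro j hj
    rw [hform]
    apply mul_pos (inv_pos.mpr hn)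
    apply Finset.sum_pos'
    · intro I hI
      have := hK.nef I (Finset.mem_filter.mp hI).1 j
      linarith
    · have : ∃ I ∈ W, j ∉ I := by
        by_cases hjI : j ∈ I0
        · obtain ⟨k, hk, hI', -, -⟩ := S.pivot I0 hI0 j hjI
          refine ⟨_, Finset.mem_filter.mpr ⟨hI', erase_sup hJ0 hj k⟩, ?_⟩
          have : j ≠ k := fun h => hk (h ▸ hjI)
          simp [this]
        · exact ⟨I0, hI0W, hjI⟩
      obtain ⟨I, hI, hjI⟩ := this
      refine ⟨I, hI, ?_⟩
      have := hK I (Finset.mem_filter.mp hI).1 j hjI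
      linarith

open Classical in
lemma af_step (hc : S.Gen c) {J : Finset ι} (hJ : ∃ I ∈ S.V, J ⊆ I) {K : ι → ℝ} (hK : S.Ample K)
    {m : Multiset (ι → ℝ)} (hm : ∀ f ∈ m, S.Ample f) (hcard : J.card + m.card + 3 = N)
    (ih : ∀ J' : Finset ι, (∃ I ∈ S.V, J' ⊆ I) → J'.card + m.card + 2 = N →
      ∃ φ : (ι → ℝ) →ₗ[ℝ] ℝ, ∀ f, φ f = 0 → S.D c J' (f ::ₘ f ::ₘ m) ≤ 0) :
    ∀ f, S.D c J (f ::ₘ K ::ₘ K ::ₘ m) = 0 → S.D c J (f ::ₘ f ::ₘ K ::ₘ m) ≤ 0 := by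
  obtain ⟨t, ht0, htpos⟩ := exists_kappa hJ hK
  have hJ' := hJ
  obtain ⟨I0, hI0, hJ0⟩ := hJ'
  set κ : ι → ℝ := K - fun v => u v t with hκ
  have hκv : ∀ v, κ v = K v - u v t := fun v => rfl
  have hκ0 : ∀ j ∈ J, κ j = 0 := ht0
  have hκpos : ∀ j, j ∉ J → 0 < κ j := htpos
  let F := {v // v ∉ J ∧ ∃ I ∈ S.V, insert v J ⊆ I}
  have hKm : ∀ f ∈ K ::ₘ m, S.Ample f := by
    intro f hf
    rcases Multiset.mem_cons.mp hf with rfl | hf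
    · exact hK
    · exact hm f hf
  have hKKm : ∀ f ∈ K ::ₘ K ::ₘ m, S.Ample f := by
    intro f hf
    rcases Multiset.mem_cons.mp hf with rfl | hf
    · exact hK
    · exact hKm f hf
  let A : F → F → ℝ := fun v w => S.D c J (Pi.single v.1 1 ::ₘ Pi.single w.1 1 ::ₘ K ::ₘ m)
  have Asymm : ∀ v w, A v w = A w v := fun v w => by
    simp only [A]; rw [Multiset.cons_swap]
  let a : F → ℝ := fun v => S.D c (insert v.1 J) (K ::ₘ K ::ₘ m)
  have hcv : ∀ v : F, (insert v.1 J).card = J.card + 1 := fun v =>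
    Finset.card_insert_of_notMem v.2.1
  have apos : ∀ v, 0 < a v := fun v => D_pos hc _ hKKm _ v.2.2 (by
    rw [hcv]; simp only [Multiset.card_cons]; omega)
  have hAg : ∀ (g : ι → ℝ), (∀ j ∈ J, g j = 0) → ∀ v : F,
      ∑ w, A v w * g w = S.D c (insert v.1 J) (g ::ₘ K ::ₘ m) := by
    intro g hg v
    rw [← D_single hc v.2.1, Multiset.cons_swap, D_rec' hc J g hg]
    refine Finset.sum_congr rfl fun w _ => ?_
    rw [Asymm, mul_comm]
    simp only [A]
    rw [D_single hc w.2.1]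
  have hAgg : ∀ (g : ι → ℝ), (∀ j ∈ J, g j = 0) →
      ∑ v : F, ∑ w : F, A v w * g v * g w = S.D c J (g ::ₘ g ::ₘ K ::ₘ m) := by
    intro g hg
    rw [D_rec' hc J g hg]
    refine Finset.sum_congr rfl fun v _ => ?_
    rw [← hAg g hg v, Finset.mul_sum]
    exact Finset.sum_congr rfl fun w _ => by ring
  have off : ∀ v w : F, v ≠ w → A v w = S.D c (insert w.1 (insert v.1 J)) (K ::ₘ m) := by
    intro v w hvw
    simp only [A]
    rw [D_single hc v.2.1, D_single hc]
    intro h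
    rcases Finset.mem_insert.mp h with h | h
    · exact hvw (Subtype.ext h.symm)
    · exact w.2.1 h
  have hc2 : ∀ v w : F, v ≠ w → (insert w.1 (insert v.1 J)).card = J.card + 2 := by
    intro v w hvw
    rw [Finset.card_insert_of_notMem, hcv]
    intro h
    rcases Finset.mem_insert.mp h with h | h
    · exact hvw (Subtype.ext h.symm)
    · exact w.2.1 h
  have kpos : ∀ v : F, 0 < κ v := fun v => hκpos _ v.2.1
  have core := lin_core (α := F) (fun v w => κ v * κ w * A v w)
    (fun v w => by simp only [Asymm v w]; ring)
    (fun v w hvw => by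
      rw [off v w hvw]
      apply mul_nonneg (mul_pos (kpos v) (kpos w)).le
      apply D_nonneg hc _ (fun f hf => (hKm f hf).nef)
      rw [hc2 v w hvw, Multiset.card_cons]; omega)
    (fun v => κ v * a v)
    (fun v => by
      have h := hAg κ hκ0 v
      rw [hκ, D_trans hc (by rw [hcv]; simp only [Multiset.card_cons]; omega), ← hκ] at h
      simp only [a]
      rw [← h, Finset.mul_sum]
      exact Finset.sum_congr rfl fun w _ => by ring)
    (fun v => mul_pos (kpos v) (apos v))
    (by
      intro r hr
      have hr2 : ∀ I ∈ S.V, J ⊆ I → ∀ v w : F, v.1 ∈ I → w.1 ∈ I → r v = r w := by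
        intro I hI hJI v w hv hw
        by_cases hvw : v = w
        · rw [hvw]
        · apply hr v w hvw
          rw [off v w hvw]
          apply mul_pos (mul_pos (kpos v) (kpos w))
          apply D_pos hc _ hKm
          · exact ⟨I, hI, Finset.insert_subset hw (Finset.insert_subset hv hJI)⟩
          · rw [hc2 v w hvw, Multiset.card_cons]; omega
      let G : Finset ι → ℝ := fun I => if h : ∃ v : F, v.1 ∈ I then r h.choose else 0
      have hG : ∀ I ∈ S.V, J ⊆ I → ∀ v : F, v.1 ∈ I → G I = r v := by
        intro I hI hJI v hv
        have h : ∃ v : F, v.1 ∈ I := ⟨v, hv⟩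
        simp only [G, dif_pos h]
        exact hr2 I hI hJI _ _ h.choose_spec hv
      have hconn := conn (J := J) hc G (by
        intro I hI hJI i hi hiJ k hk hI'
        obtain ⟨v, hv, hvi, hvJ⟩ : ∃ v ∈ I, v ≠ i ∧ v ∉ J := by
          by_contra! h
          have hsub : I ⊆ insert i J := fun v hv => by
            by_cases hvi : v = i
            · simp [hvi]
            · exact Finset.mem_insert_of_mem (h v hv hvi)
          have := Finset.card_le_card hsub
          rw [S.card I hI, Finset.card_insert_of_notMem hiJ] at this
          omega
        have hvF : v ∉ J ∧ ∃ I ∈ S.V, insert v J ⊆ I :=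
          ⟨hvJ, I, hI, Finset.insert_subset hv hJI⟩
        rw [hG I hI hJI ⟨v, hvF⟩ hv, hG _ hI' (erase_sup hJI hiJ k) ⟨v, hvF⟩
          (Finset.mem_insert_of_mem (Finset.mem_erase.mpr ⟨hvi, hv⟩))])
      intro v w
      obtain ⟨Iv, hIv, hv⟩ := v.2.2
      obtain ⟨Iw, hIw, hw⟩ := w.2.2
      have hv2 := Finset.insert_subset_iff.mp hv
      have hw2 := Finset.insert_subset_iff.mp hw
      rw [← hG Iv hIv hv2.2 v hv2.1, ← hG Iw hIw hw2.2 w hw2.1]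
      exact hconn Iv hIv Iw hIw hv2.2 hw2.2)
    (by
      intro r
      let g : ι → ℝ := fun v => if h : v ∉ J ∧ ∃ I ∈ S.V, insert v J ⊆ I then κ v * r ⟨v, h⟩ else 0
      have hg : ∀ j ∈ J, g j = 0 := by
        intro j hj
        simp only [g]
        rw [dif_neg]
        exact fun h => h.1 hj
      have hgF : ∀ v : F, g v = κ v * r v := by
        intro v
        simp only [g]
        rw [dif_pos v.2]
      have e1 : ∑ v : F, ∑ w : F, κ v * κ w * A v w * r v * r w
          = S.D c J (g ::ₘ g ::ₘ K ::ₘ m) := by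
        rw [← hAgg g hg]
        refine Finset.sum_congr rfl fun v _ => Finset.sum_congr rfl fun w _ => ?_
        rw [hgF, hgF]; ring
      have e2 : ∀ v : F, ∑ w : F, κ v * κ w * A v w * r w
          = κ v * S.D c (insert v.1 J) (g ::ₘ K ::ₘ m) := by
        intro v
        rw [← hAg g hg, Finset.mul_sum]
        refine Finset.sum_congr rfl fun w _ => ?_
        rw [hgF]; ring
      have e3 : S.D c J (g ::ₘ g ::ₘ K ::ₘ m)
          = ∑ v : F, κ v * S.D c (insert v.1 J) (g ::ₘ g ::ₘ m) := by
        rw [← D_rec' hc J κ hκ0, hκ, D_trans hc (by simp only [Multiset.card_cons]; omega),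
          Multiset.cons_swap g K, Multiset.cons_swap g K]
      rw [e1, e3]
      apply Finset.sum_le_sum
      intro v _
      rw [e2 v, le_div_iff₀ (mul_pos (kpos v) (apos v))]
      obtain ⟨φ, hφ⟩ := ih (insert v.1 J) v.2.2 (by rw [hcv]; omega)
      have := af_conv hφ g K (apos v)
      have h2 := mul_le_mul_of_nonneg_left this (sq_nonneg (κ v))
      have e4 : κ v.1 * S.D c (insert v.1 J) (g ::ₘ g ::ₘ m) * (κ v.1 * a v)
        = κ v.1 ^ 2 * (S.D c (insert v.1 J) (g ::ₘ g ::ₘ m)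
          * S.D c (insert v.1 J) (K ::ₘ K ::ₘ m)) := by simp only [a]; ring
      rw [e4, mul_pow]
      exact h2)
  intro f hf
  rw [← D_trans hc (by simp only [Multiset.card_cons]; omega) f (S.x I0 f)] at hf ⊢
  rw [Multiset.cons_swap, ← D_trans hc (by simp only [Multiset.card_cons]; omega) f (S.x I0 f)]
  set g : ι → ℝ := f - fun v => u v (S.x I0 f) with hgdef
  have hg : ∀ j ∈ J, g j = 0 := fun j hj => by simp [hgdef, S.ux I0 hI0 f j (hJ0 hj)]
  have h1 := core (fun v => g v / κ v) (by
    rw [D_rec' hc J g hg] at hf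
    rw [← hf]
    refine Finset.sum_congr rfl fun v _ => ?_
    have := (kpos v).ne'
    field_simp
    simp only [a]; ring)
  rw [← hAgg g hg]
  refine le_trans (le_of_eq ?_) h1
  refine Finset.sum_congr rfl fun v _ => Finset.sum_congr rfl fun w _ => ?_
  have := (kpos v).ne'
  have := (kpos w).ne'
  field_simp

lemma af_core (hc : S.Gen c) (m : Multiset (ι → ℝ)) : (∀ f ∈ m, S.Ample f) →
    ∀ J : Finset ι, (∃ I ∈ S.V, J ⊆ I) → J.card + m.card + 2 = N →
      ∃ φ : (ι → ℝ) →ₗ[ℝ] ℝ, ∀ f, φ f = 0 → S.D c J (f ::ₘ f ::ₘ m) ≤ 0 := by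
  induction m using Multiset.induction with
  | empty => intro _ J hJ hcard; exact af_base hc hJ (by simpa using hcard)
  | cons K m ih =>
    intro hm J hJ hcard
    have hm' : ∀ f ∈ m, S.Ample f := fun f hf => hm f (Multiset.mem_cons_of_mem hf)
    exact ⟨S.Dlin c J (K ::ₘ K ::ₘ m), af_step hc hJ (hm K (Multiset.mem_cons_self _ _)) hm'
      (by rw [Multiset.card_cons] at hcard; omega) (ih hm')⟩

lemma af_ample (hc : S.Gen c) {m : Multiset (ι → ℝ)} (hm : ∀ f ∈ m, S.Ample f)
    (hcard : m.card + 2 = N) (f g : ι → ℝ) (hg : S.Ample g) :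
    S.D c ∅ (f ::ₘ f ::ₘ m) * S.D c ∅ (g ::ₘ g ::ₘ m) ≤ S.D c ∅ (f ::ₘ g ::ₘ m) ^ 2 := by
  obtain ⟨I, hI⟩ := S.ne
  obtain ⟨φ, hφ⟩ := af_core hc m hm ∅ ⟨I, hI, Finset.empty_subset _⟩ (by simpa using hcard)
  apply af_conv hφ
  apply D_pos hc _ _ _ ⟨I, hI, Finset.empty_subset _⟩ (by simpa using hcard)
  intro h hh
  rcases Multiset.mem_cons.mp hh with rfl | hh
  · exact hg
  rcases Multiset.mem_cons.mp hh with rfl | hh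
  · exact hg
  exact hm h hh

/-- continuity of `D` along `h + ε b`. -/
lemma D_cont (J : Finset ι) (m : Multiset (ι → ℝ)) :
    Continuous (fun ε : ℝ => S.D c J (m.map (fun h => h + ε • S.b))) := by
  unfold D
  apply continuous_finset_sum
  intro I _
  apply Continuous.div_const
  apply Continuous.mul continuous_const
  simp only [Multiset.map_map, Function.comp_apply, map_add, map_smul, smul_eq_mul]
  apply continuous_multiset_prod
  intro f _
  fun_prop

/-- Alexandrov-Fenchel for nef vectors. -/
theorem af_nef (hc : S.Gen c) {m : Multiset (ι → ℝ)} (hm : ∀ f ∈ m, S.Nef f)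
    (hcard : m.card + 2 = N) {f g : ι → ℝ} (hf : S.Nef f) (hg : S.Nef g) :
    S.D c ∅ (f ::ₘ f ::ₘ m) * S.D c ∅ (g ::ₘ g ::ₘ m) ≤ S.D c ∅ (f ::ₘ g ::ₘ m) ^ 2 := by
  have key : ∀ ε : ℝ, 0 < ε →
      S.D c ∅ ((f ::ₘ f ::ₘ m).map (fun h => h + ε • S.b)) *
        S.D c ∅ ((g ::ₘ g ::ₘ m).map (fun h => h + ε • S.b)) ≤
        S.D c ∅ ((f ::ₘ g ::ₘ m).map (fun h => h + ε • S.b)) ^ 2 := by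
    intro ε hε
    simp only [Multiset.map_cons]
    apply af_ample hc _ (by simpa using hcard)
    · exact hg.add_ample (ample_b.smul hε)
    · intro h hh
      obtain ⟨h', hh', rfl⟩ := Multiset.mem_map.mp hh
      exact (hm h' hh').add_ample (ample_b.smul hε)
  have h1 := ((D_cont (S := S) (c := c) ∅ (f ::ₘ f ::ₘ m)).mul
    (D_cont (S := S) (c := c) ∅ (g ::ₘ g ::ₘ m))).tendsto 0 |>.mono_left
      (nhdsWithin_le_nhds (s := Set.Ioi 0))
  have h2 := ((D_cont (S := S) (c := c) ∅ (f ::ₘ g ::ₘ m)).pow 2).tendsto 0 |>.mono_left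
      (nhdsWithin_le_nhds (s := Set.Ioi 0))
  have h3 := le_of_tendsto_of_tendsto h1 h2 (by
    filter_upwards [self_mem_nhdsWithin] with ε hε
    exact key ε hε)
  simpa using h3

end Sys
end AFV
end

section
namespace AFV

/-- sign cutoff function. -/
noncomputable def th (γ s : ℝ) : ℝ := (if 0 ≤ s then 1 else 0) - (if γ < 0 then 1 else 0)

namespace Sys

variable {ι : Type} [Fintype ι] [DecidableEq ι] {E : Type} [AddCommGroup E] [Module ℝ E]
    {N : ℕ} {u : ι → E →ₗ[ℝ] ℝ} {S : Sys N u} {c : E →ₗ[ℝ] ℝ}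

lemma neg_count (hc : S.Gen c) (J : Finset ι) :
    ∑ I ∈ S.V.filter (J ⊆ ·), ∏ i ∈ I \ J, (-(if S.g c I i < 0 then (1:ℝ) else 0))
      = if (∃ I ∈ S.V, J ⊆ I) then (-1) ^ (N - J.card) else 0 := by
  split_ifs with h
  · obtain ⟨I0, hI0, hJ0⟩ := h
    obtain ⟨M, hM, hJM, hm⟩ := exists_pos hI0 hJ0 hc.neg
    rw [Finset.sum_eq_single M]
    · rw [Finset.prod_congr rfl (g := fun _ => (-1 : ℝ))]
      · rw [Finset.prod_const, Finset.card_sdiff_of_subset hJM, S.card M hM]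
      · intro i hi
        have := hm i hi
        rw [g_neg] at this
        rw [if_pos (by linarith)]
    · intro I hI hIM
      obtain ⟨hI, hJI⟩ := Finset.mem_filter.mp hI
      by_contra hne
      rw [← ne_eq, Finset.prod_ne_zero_iff] at hne
      apply hIM
      apply unique_pos hI hM hJI hJM (-c) _ hm
      intro i hi
      have := hne i hi
      rw [g_neg]
      by_contra hcon
      rw [if_neg (by linarith)] at this
      simp at this
    · intro h
      exact absurd (Finset.mem_filter.mpr ⟨hM, hJM⟩) h
  · apply Finset.sum_eq_zero
    intro I hI
    exact absurd ⟨I, (Finset.mem_filter.mp hI).1, (Finset.mem_filter.mp hI).2⟩ h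

lemma lv_expand (p : ι → ℝ) :
    ∑ I ∈ S.V, ∏ i ∈ I, (p i - (if S.g c I i < 0 then (1:ℝ) else 0))
    = ∑ J : Finset ι, (∏ i ∈ J, p i) *
      ∑ I ∈ S.V.filter (J ⊆ ·), ∏ i ∈ I \ J, (-(if S.g c I i < 0 then (1:ℝ) else 0)) := by
  simp_rw [sub_eq_add_neg, Finset.prod_add, Finset.mul_sum, Finset.sum_filter]
  rw [Finset.sum_comm]
  refine Finset.sum_congr rfl fun I _ => ?_
  rw [← Finset.sum_filter]
  refine Finset.sum_congr ?_ fun _ _ => rfl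
  ext J; simp

lemma lv_indep {c' : E →ₗ[ℝ] ℝ} (hc : S.Gen c) (hc' : S.Gen c') (p : ι → ℝ) :
    ∑ I ∈ S.V, ∏ i ∈ I, (p i - (if S.g c I i < 0 then (1:ℝ) else 0))
    = ∑ I ∈ S.V, ∏ i ∈ I, (p i - (if S.g c' I i < 0 then (1:ℝ) else 0)) := by
  rw [lv_expand, lv_expand]
  simp_rw [neg_count hc, neg_count hc']

/-- perturbing a functional to a generic one while keeping finitely many strict inequalities. -/
lemma exists_perturb (hc : S.Gen c) (d : E →ₗ[ℝ] ℝ) (T : Finset E) (hT : ∀ y ∈ T, d y < 0) :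
    ∃ c' : E →ₗ[ℝ] ℝ, S.Gen c' ∧ ∀ y ∈ T, c' y < 0 := by
  have h1 : ∀ᶠ ε in nhdsWithin (0:ℝ) (Set.Ioi 0), ∀ y ∈ T, d y + ε * c y < 0 := by
    rw [Filter.eventually_all_finset]
    intro y hy
    have : Filter.Tendsto (fun ε : ℝ => d y + ε * c y) (nhdsWithin 0 (Set.Ioi 0))
        (nhds (d y + 0 * c y)) :=
      ((by fun_prop : Continuous fun ε : ℝ => d y + ε * c y).tendsto 0).mono_left nhdsWithin_le_nhds
    exact this.eventually_lt_const (by simpa using hT y hy)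
  have h2 : ∀ᶠ ε in nhdsWithin (0:ℝ) (Set.Ioi 0), ∀ I ∈ S.V, ∀ i ∈ I,
      S.g d I i + ε * S.g c I i ≠ 0 := by
    rw [Filter.eventually_all_finset]
    intro I hI
    rw [Filter.eventually_all_finset]
    intro i hi
    by_cases h0 : S.g d I i = 0
    · filter_upwards [self_mem_nhdsWithin] with ε hε
      rw [h0, zero_add]
      exact mul_ne_zero (ne_of_gt hε) (hc I hI i hi)
    · have : Filter.Tendsto (fun ε : ℝ => S.g d I i + ε * S.g c I i) (nhdsWithin 0 (Set.Ioi 0))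
        (nhds (S.g d I i + 0 * S.g c I i)) :=
        ((by fun_prop : Continuous fun ε : ℝ => S.g d I i + ε * S.g c I i).tendsto 0).mono_left
          nhdsWithin_le_nhds
      exact this.eventually_ne (by simpa using h0)
  obtain ⟨ε, hε1, hε2⟩ := (h1.and h2).exists
  refine ⟨d + ε • c, ?_, ?_⟩
  · intro I hI i hi
    have := hε2 I hI i hi
    simpa [g] using this
  · intro y hy
    simpa using hε1 y hy

/-- Lawrence-Varchenko decomposition. -/
theorem lv (hc : S.Gen c) {h : ι → ℝ} (hh : S.Nef h) (z : E) :
    ∑ I ∈ S.V, ∏ i ∈ I, th (S.g c I i) (h i - u i z)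
      = if (∀ j, u j z ≤ h j) then 1 else 0 := by
  classical
  unfold th
  rw [show ∑ I ∈ S.V, ∏ i ∈ I, ((if 0 ≤ h i - u i z then (1:ℝ) else 0)
    - (if S.g c I i < 0 then (1:ℝ) else 0)) = _ from rfl]
  split_ifs with hz
  · obtain ⟨I0, hI0⟩ := S.ne
    obtain ⟨P, hP, -, hp⟩ := exists_pos hI0 (Finset.empty_subset _) hc
    rw [Finset.sum_eq_single P]
    · apply Finset.prod_eq_one
      intro i hi
      rw [if_pos (by linarith [hz i]), if_neg (by linarith [hp i (by simpa using hi)]), sub_zero]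
    · intro I hI hIP
      by_contra hne
      rw [← ne_eq, Finset.prod_ne_zero_iff] at hne
      apply hIP
      apply unique_pos hI hP (Finset.empty_subset _) (Finset.empty_subset _) c _ hp
      intro i hi
      have hi : i ∈ I := by simpa using hi
      have := hne i hi
      rw [if_pos (by linarith [hz i])] at this
      by_contra hcon
      rw [if_pos (lt_of_le_of_ne (not_lt.mp hcon) (hc I hI i hi))] at this
      simp at this
    · intro h; exact absurd hP h
  · push Not at hz
    obtain ⟨i0, hi0⟩ := hz
    set f : ι → ℝ := h - fun v => u v z with hf
    have hfx : ∀ I ∈ S.V, u i0 (S.x I f) < 0 := by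
      intro I hI
      rw [hf, map_sub, x_lin hI, map_sub]
      linarith [hh I hI i0]
    obtain ⟨c', hc', hneg⟩ := exists_perturb hc (u i0) (S.V.image fun I => S.x I f)
      (by intro y hy
          obtain ⟨I, hI, rfl⟩ := Finset.mem_image.mp hy
          exact hfx I hI)
    rw [lv_indep hc hc' (fun i => if 0 ≤ h i - u i z then (1:ℝ) else 0)]
    apply Finset.sum_eq_zero
    intro I hI
    by_contra hne
    rw [← ne_eq, Finset.prod_ne_zero_iff] at hne
    have h1 := hneg (S.x I f) (Finset.mem_image_of_mem _ hI)
    rw [y_eq hI] at h1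
    refine absurd h1 (not_lt.mpr (Finset.sum_nonneg fun i hi => ?_))
    have h2 := hne i hi
    have hfi : f i = h i - u i z := rfl
    rw [← hfi] at h2
    by_cases h3 : 0 ≤ f i
    · rw [if_pos h3] at h2
      by_cases h4 : S.g c' I i < 0
      · rw [if_pos h4] at h2; simp at h2
      · exact mul_nonneg h3 (not_lt.mp h4)
    · rw [if_neg h3] at h2
      by_cases h4 : S.g c' I i < 0
      · exact (mul_pos_of_neg_of_neg (not_le.mp h3) h4).le
      · rw [if_neg h4] at h2; simp at h2

end Sys
end AFV
end

section
namespace AFV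

lemma th_exp (γ h : ℝ) (hγ : γ ≠ 0) :
    Integrable (fun z : ℝ => Real.exp (γ * z) * th γ (h - z)) ∧
    ∫ z : ℝ, Real.exp (γ * z) * th γ (h - z) = Real.exp (γ * h) / γ := by
  rcases lt_or_gt_of_ne hγ with hneg | hpos
  · have e : (fun z : ℝ => Real.exp (γ * z) * th γ (h - z))
        = fun z => - (Set.Ioi h).indicator (fun z => Real.exp (γ * z)) z := by
      ext z
      unfold th
      rw [if_pos hneg]
      by_cases hz : h < z
      · rw [if_neg (by linarith), Set.indicator_of_mem (by exact hz)]; ring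
      · rw [if_pos (by linarith), Set.indicator_of_notMem (by simpa using hz)]; simp
    rw [e]
    constructor
    · exact ((integrable_indicator_iff measurableSet_Ioi).mpr (integrableOn_exp_mul_Ioi hneg h)).neg
    · rw [integral_neg, integral_indicator measurableSet_Ioi, integral_exp_mul_Ioi hneg]; ring
  · have e : (fun z : ℝ => Real.exp (γ * z) * th γ (h - z))
        = fun z => (Set.Iic h).indicator (fun z => Real.exp (γ * z)) z := by
      ext z
      unfold th
      rw [if_neg (not_lt.mpr hpos.le)]
      by_cases hz : h < z
      · rw [if_neg (by linarith), Set.indicator_of_notMem (by simpa using hz)]; simp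
      · rw [if_pos (by linarith), Set.indicator_of_mem (by simpa using hz)]; simp
    rw [e]
    constructor
    · exact (integrable_indicator_iff measurableSet_Iic).mpr (integrableOn_exp_mul_Iic hpos h)
    · rw [integral_indicator measurableSet_Iic, integral_exp_mul_Iic hpos]

namespace Sys

variable {ι : Type} [Fintype ι] [DecidableEq ι]
    {N : ℕ} {u : ι → (Fin N → ℝ) →ₗ[ℝ] ℝ} {S : Sys N u} {c : (Fin N → ℝ) →ₗ[ℝ] ℝ}

variable (S) in
/-- coordinates attached to a vertex. -/
noncomputable def crd (I : Finset ι) (hI : I ∈ S.V) : (Fin N → ℝ) ≃L[ℝ] (I → ℝ) :=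
  (LinearEquiv.ofBijective (LinearMap.pi fun i : I => u i) ⟨by
    rw [← LinearMap.ker_eq_bot, LinearMap.ker_eq_bot']
    intro y hy
    apply S.inj I hI
    intro i hi
    exact congrFun hy ⟨i, hi⟩, by
    intro z
    refine ⟨S.x I (fun j => if h : j ∈ I then z ⟨j, h⟩ else 0), ?_⟩
    ext i
    simp [S.ux I hI _ i.1 i.2]⟩).toContinuousLinearEquiv

lemma crd_apply (I : Finset ι) (hI : I ∈ S.V) (z : Fin N → ℝ) (i : I) :
    S.crd I hI z i = u i z := rfl

/-- The weight of an index set : the volume of the parallelepiped. -/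
noncomputable def wt (u : ι → (Fin N → ℝ) →ₗ[ℝ] ℝ) (I : Finset ι) : ℝ :=
  (volume {z : Fin N → ℝ | ∀ i ∈ I, u i z ∈ Set.Ioc (0:ℝ) 1}).toReal

lemma crd_map (I : Finset ι) (hI : I ∈ S.V) :
    Measure.map (S.crd I hI) volume = ENNReal.ofReal (wt u I) • (volume : Measure (I → ℝ)) := by
  have : (Measure.map (S.crd I hI) volume).IsAddHaarMeasure :=
    ContinuousLinearEquiv.isAddHaarMeasure_map _ _
  have h := Measure.isAddLeftInvariant_eq_smul (Measure.map (S.crd I hI) volume)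
    (volume : Measure (I → ℝ))
  have h1 : Measure.map (S.crd I hI) volume (Set.univ.pi fun _ => Set.Ioc (0:ℝ) 1)
      = volume {z : Fin N → ℝ | ∀ i ∈ I, u i z ∈ Set.Ioc (0:ℝ) 1} := by
    rw [Measure.map_apply (S.crd I hI).continuous.measurable
      (MeasurableSet.univ_pi fun _ => measurableSet_Ioc)]
    congr 1
    ext z
    simp only [Set.mem_preimage, Set.mem_univ_pi, crd_apply, Set.mem_ofPred_eq, Subtype.forall]
  have h2 : (volume : Measure (I → ℝ)) (Set.univ.pi fun _ => Set.Ioc (0:ℝ) 1) = 1 := by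
    rw [volume_pi_pi]; simp
  rw [h] at h1
  rw [Measure.smul_apply, h2] at h1
  rw [h]
  unfold wt
  rw [← h1]
  ext s hs
  simp only [Measure.smul_apply]
  rw [smul_eq_mul, ENNReal.ofReal_toReal]
  · simp [ENNReal.smul_def]
  · simp [ENNReal.smul_def]

lemma cone_int (hc : S.Gen c) {I : Finset ι} (hI : I ∈ S.V) (h : ι → ℝ) :
    Integrable (fun z => Real.exp (c z) * ∏ i ∈ I, th (S.g c I i) (h i - u i z)) ∧
    ∫ z, Real.exp (c z) * ∏ i ∈ I, th (S.g c I i) (h i - u i z)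
      = wt u I * Real.exp (c (S.x I h)) / ∏ i ∈ I, S.g c I i := by
  set F : (I → ℝ) → ℝ := fun y => ∏ i : I, (Real.exp (S.g c I i * y i) *
    th (S.g c I i) (h i - y i)) with hF
  have e : (fun z => Real.exp (c z) * ∏ i ∈ I, th (S.g c I i) (h i - u i z))
      = fun z => F (S.crd I hI z) := by
    ext z
    simp only [hF, crd_apply]
    rw [Finset.prod_coe_sort I (fun i => Real.exp (S.g c I i * u i z) * th (S.g c I i) (h i - u i z)),
      Finset.prod_mul_distrib, ← Real.exp_sum]
    congr 2
    have := y_eq hI c (fun v => u v z)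
    rw [x_lin hI] at this
    rw [this]
    exact Finset.sum_congr rfl fun _ _ => by ring
  have hFint : Integrable F volume := by
    rw [volume_pi]
    exact Integrable.fintype_prod (f := fun (i : I) (y : ℝ) =>
      Real.exp (S.g c I i * y) * th (S.g c I i) (h i - y))
      (fun i => (th_exp _ _ (hc I hI i i.2)).1)
  let e' : (Fin N → ℝ) ≃ᵐ (I → ℝ) := (S.crd I hI).toHomeomorph.toMeasurableEquiv
  have hmap : Measure.map e' volume = ENNReal.ofReal (wt u I) • (volume : Measure (I → ℝ)) :=
    crd_map I hI
  rw [e]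
  constructor
  · have : Integrable F (Measure.map e' volume) := by
      rw [hmap]
      exact hFint.smul_measure ENNReal.ofReal_ne_top
    exact (integrable_map_equiv e' F).mp this
  · have := integral_map_equiv e' F (μ := volume)
    rw [hmap, integral_smul_measure] at this
    have h0 : 0 ≤ wt u I := ENNReal.toReal_nonneg
    rw [ENNReal.toReal_ofReal h0] at this
    refine Eq.trans this.symm ?_
    rw [hF, integral_fintype_prod_volume_eq_prod (fun (i : I) (y : ℝ) =>
      Real.exp (S.g c I i * y) * th (S.g c I i) (h i - y))]
    rw [Finset.prod_congr rfl (g := fun i : I => Real.exp (S.g c I i * h i) / S.g c I i)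
      (fun i _ => (th_exp _ _ (hc I hI i i.2)).2)]
    rw [Finset.prod_coe_sort I (fun i => Real.exp (S.g c I i * h i) / S.g c I i),
      Finset.prod_div_distrib, ← Real.exp_sum, y_eq hI, smul_eq_mul, mul_div_assoc]
    congr 3
    exact Finset.sum_congr rfl fun _ _ => by ring

/-- polytope with right-hand side `h`. -/
def poly (u : ι → (Fin N → ℝ) →ₗ[ℝ] ℝ) (h : ι → ℝ) : Set (Fin N → ℝ) := {z | ∀ j, u j z ≤ h j}

lemma poly_closed (h : ι → ℝ) : IsClosed (poly u h) := by
  unfold poly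
  simp only [Set.ofPred_forall]
  exact isClosed_iInter fun j => isClosed_le (LinearMap.continuous_of_finiteDimensional _)
    continuous_const

lemma laplace (hc : S.Gen c) {h : ι → ℝ} (hh : S.Nef h) :
    IntegrableOn (fun z => Real.exp (c z)) (poly u h) ∧
    ∫ z in poly u h, Real.exp (c z)
      = ∑ I ∈ S.V, wt u I * Real.exp (c (S.x I h)) / ∏ i ∈ I, S.g c I i := by
  have e : (poly u h).indicator (fun z => Real.exp (c z)) = fun z => ∑ I ∈ S.V,
      Real.exp (c z) * ∏ i ∈ I, th (S.g c I i) (h i - u i z) := by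
    ext z
    rw [← Finset.mul_sum, lv hc hh]
    by_cases hz : z ∈ poly u h
    · rw [Set.indicator_of_mem hz, if_pos (by exact hz), mul_one]
    · rw [Set.indicator_of_notMem hz, if_neg (by exact hz), mul_zero]
  constructor
  · rw [← integrable_indicator_iff (poly_closed h).measurableSet, e]
    exact integrable_finsetSum _ fun I hI => (cone_int hc hI h).1
  · rw [← integral_indicator (poly_closed h).measurableSet, e,
      integral_finsetSum _ fun I hI => (cone_int hc hI h).1]
    exact Finset.sum_congr rfl fun I hI => (cone_int hc hI h).2

lemma exp_lim (N : ℕ) (y : ℝ) : Filter.Tendsto (fun s : ℝ =>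
    (Real.exp (s * y) - ∑ k ∈ Finset.range N, (s * y) ^ k / k.factorial) / s ^ N)
    (nhdsWithin 0 (Set.Ioi 0)) (nhds (y ^ N / N.factorial)) := by
  have h1 := (Real.exp_sub_sum_range_succ_isLittleO_pow N).comp_tendsto
    (k := fun s : ℝ => s * y) (l' := nhdsWithin 0 (Set.Ioi 0)) (by
      have : Filter.Tendsto (fun s : ℝ => s * y) (nhds 0) (nhds (0 * y)) :=
        (by fun_prop : Continuous fun s : ℝ => s * y).tendsto 0
      rw [zero_mul] at this
      exact this.mono_left nhdsWithin_le_nhds)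
  have h2 : (fun s : ℝ => (s * y) ^ N) =O[nhdsWithin 0 (Set.Ioi 0)] (fun s : ℝ => s ^ N) := by
    apply Asymptotics.IsBigO.of_bound (|y| ^ N)
    refine Filter.Eventually.of_forall fun s => ?_
    rw [mul_pow, norm_mul, norm_pow, norm_pow, Real.norm_eq_abs, Real.norm_eq_abs, mul_comm]
  have h3 := (h1.trans_isBigO h2).tendsto_div_nhds_zero
  have h4 := h3.add_const (y ^ N / N.factorial)
  rw [zero_add] at h4
  refine h4.congr' ?_
  filter_upwards [self_mem_nhdsWithin] with s hs
  have hs : s ≠ 0 := ne_of_gt hs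
  simp only [Function.comp, Finset.sum_range_succ]
  rw [mul_pow s y N]
  field_simp
  ring

lemma Gen.smul (hc : S.Gen c) {s : ℝ} (hs : s ≠ 0) : S.Gen (s • c) := fun I hI i hi => by
  have := hc I hI i hi
  simpa [g, hs] using this

/-- The volume of a polytope. -/
theorem vol_poly (hw : ∀ I ∈ S.V, S.w I = wt u I) (hc : S.Gen c) {h : ι → ℝ} (hh : S.Nef h) :
    (N.factorial : ℝ) * (volume (poly u h)).toReal = S.D c ∅ (Multiset.replicate N h) := by
  have hDk : ∀ k, S.D c ∅ (Multiset.replicate k h)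
      = ∑ I ∈ S.V, (wt u I / ∏ i ∈ I, S.g c I i) * c (S.x I h) ^ k := by
    intro k
    unfold D
    rw [Finset.filter_true_of_mem (by simp)]
    refine Finset.sum_congr rfl fun I hI => ?_
    rw [hw I hI]
    simp only [Multiset.map_replicate, Multiset.prod_replicate, Finset.sdiff_empty]
    ring
  have hlap : ∀ s : ℝ, 0 < s → ∫ z in poly u h, Real.exp (s * c z)
      = ∑ I ∈ S.V, (wt u I / ∏ i ∈ I, S.g c I i) *
        ((Real.exp (s * c (S.x I h)) - ∑ k ∈ Finset.range N, (s * c (S.x I h)) ^ k / k.factorial)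
          / s ^ N) := by
    intro s hs
    have h1 := (laplace (hc.smul hs.ne') hh).2
    simp only [LinearMap.smul_apply, smul_eq_mul] at h1
    rw [h1]
    have h2 : ∑ I ∈ S.V, (wt u I / ∏ i ∈ I, S.g c I i) *
        ((∑ k ∈ Finset.range N, (s * c (S.x I h)) ^ k / k.factorial) / s ^ N) = 0 := by
      simp_rw [Finset.sum_div, Finset.mul_sum]
      rw [Finset.sum_comm]
      apply Finset.sum_eq_zero
      intro k hk
      have h3 := D_zero hc N ∅ (by simp) (Multiset.replicate k h) (by simpa using hk)
      rw [hDk] at h3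
      have : ∑ I ∈ S.V, (wt u I / ∏ i ∈ I, S.g c I i) *
          ((s * c (S.x I h)) ^ k / k.factorial / s ^ N)
          = (s ^ k / k.factorial / s ^ N) *
            ∑ I ∈ S.V, (wt u I / ∏ i ∈ I, S.g c I i) * c (S.x I h) ^ k := by
        rw [Finset.mul_sum]
        refine Finset.sum_congr rfl fun I _ => ?_
        rw [mul_pow]; ring
      rw [this, h3, mul_zero]
    simp_rw [sub_div, mul_sub]
    rw [Finset.sum_sub_distrib, h2, sub_zero]
    refine Finset.sum_congr rfl fun I hI => ?_
    have hg : ∏ i ∈ I, S.g (s • c) I i = s ^ N * ∏ i ∈ I, S.g c I i := by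
      have h5 : s ^ N = ∏ i ∈ I, s := by rw [Finset.prod_const, S.card I hI]
      rw [h5, ← Finset.prod_mul_distrib]
      exact Finset.prod_congr rfl fun i _ => by simp [g]
    rw [hg]
    have h4 : ∏ i ∈ I, S.g c I i ≠ 0 := Finset.prod_ne_zero_iff.mpr (hc I hI)
    field_simp
  have hR : Filter.Tendsto (fun s : ℝ => ∫ z in poly u h, Real.exp (s * c z))
      (nhdsWithin 0 (Set.Ioi 0)) (nhds (∑ I ∈ S.V, (wt u I / ∏ i ∈ I, S.g c I i) *
        (c (S.x I h) ^ N / N.factorial))) := by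
    have : Filter.Tendsto (fun s : ℝ => ∑ I ∈ S.V, (wt u I / ∏ i ∈ I, S.g c I i) *
        ((Real.exp (s * c (S.x I h)) - ∑ k ∈ Finset.range N, (s * c (S.x I h)) ^ k / k.factorial)
          / s ^ N)) (nhdsWithin 0 (Set.Ioi 0)) (nhds (∑ I ∈ S.V, (wt u I / ∏ i ∈ I, S.g c I i) *
        (c (S.x I h) ^ N / N.factorial))) :=
      tendsto_finsetSum _ fun I _ => (exp_lim N _).const_mul _
    refine this.congr' ?_
    filter_upwards [self_mem_nhdsWithin] with s hs
    rw [hlap s hs]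
  have hL : Filter.Tendsto (fun s : ℝ => ∫ z in poly u h, Real.exp (s * c z))
      (nhdsWithin 0 (Set.Ioi 0)) (nhds (∫ z in poly u h, (1:ℝ))) := by
    have hcc : Continuous c := LinearMap.continuous_of_finiteDimensional c
    apply tendsto_integral_filter_of_dominated_convergence
      (fun z => Real.exp (c z) + Real.exp ((-c) z))
    · refine Filter.Eventually.of_forall fun s => ?_
      exact (by fun_prop : Continuous fun z => Real.exp (s * c z)).aestronglyMeasurable
    · filter_upwards [Ioo_mem_nhdsGT (show (0:ℝ) < 1 by norm_num)] with s hs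
      refine Filter.Eventually.of_forall fun z => ?_
      rw [Real.norm_eq_abs, abs_of_pos (Real.exp_pos _)]
      have e1 := Real.exp_pos (c z)
      have e2 := Real.exp_pos ((-c) z)
      rcases le_total 0 (c z) with h0 | h0
      · have : Real.exp (s * c z) ≤ Real.exp (c z) := Real.exp_le_exp.mpr (by nlinarith [hs.2])
        linarith
      · have : Real.exp (s * c z) ≤ Real.exp ((-c) z) :=
          Real.exp_le_exp.mpr (by simp only [LinearMap.neg_apply]; nlinarith [hs.1, hs.2])
        linarith
    · exact (laplace hc hh).1.add (laplace hc.neg hh).1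
    · refine Filter.Eventually.of_forall fun z => ?_
      have : Filter.Tendsto (fun s : ℝ => Real.exp (s * c z)) (nhds 0) (nhds (Real.exp (0 * c z))) :=
        (by fun_prop : Continuous fun s : ℝ => Real.exp (s * c z)).tendsto 0
      rw [zero_mul, Real.exp_zero] at this
      exact this.mono_left nhdsWithin_le_nhds
  have heq := tendsto_nhds_unique hL hR
  rw [setIntegral_const, smul_eq_mul, mul_one, Measure.real] at heq
  rw [heq, hDk, Finset.mul_sum]
  refine Finset.sum_congr rfl fun I _ => ?_
  have : (N.factorial : ℝ) ≠ 0 := by positivity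
  field_simp

end Sys
end AFV
end

section
namespace AFV

/-- membership in the cone generated by a finite set. -/
def InCone {W : Type} [AddCommGroup W] [Module ℝ W] (A : Finset W) (x : W) : Prop :=
  ∃ w : W → ℝ, (∀ a ∈ A, 0 ≤ w a) ∧ x = ∑ a ∈ A, w a • a

lemma inCone_insert {W : Type} [AddCommGroup W] [Module ℝ W] [DecidableEq W] {A : Finset W} {a : W}
    (ha : a ∉ A) (x : W) : InCone (insert a A) x ↔ ∃ t : ℝ, 0 ≤ t ∧ InCone A (x - t • a) := by
  constructor
  · rintro ⟨w, hw, hx⟩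
    refine ⟨w a, hw a (Finset.mem_insert_self _ _), w, fun b hb => hw b (Finset.mem_insert_of_mem hb), ?_⟩
    rw [hx, Finset.sum_insert ha]; abel
  · rintro ⟨t, ht, w, hw, hx⟩
    refine ⟨Function.update w a t, ?_, ?_⟩
    · intro b hb
      by_cases hba : b = a
      · rw [hba, Function.update_self]; exact ht
      · rw [Function.update_of_ne hba]
        exact hw b ((Finset.mem_insert.mp hb).resolve_left hba)
    · rw [Finset.sum_insert ha, Function.update_self, Finset.sum_congr rfl (g := fun b => w b • b), ← hx]
      · abel
      · intro b hb
        have hba : b ≠ a := fun h => ha (h ▸ hb)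
        rw [Function.update_of_ne hba]

/-- Fourier-Motzkin: finitely generated cones are polyhedral. -/
lemma fm {W : Type} [AddCommGroup W] [Module ℝ W] [FiniteDimensional ℝ W] (A : Finset W) :
    ∃ Φ : Finset (W →ₗ[ℝ] ℝ), ∀ x, InCone A x ↔ ∀ φ ∈ Φ, 0 ≤ φ x := by
  classical
  induction A using Finset.induction_on with
  | empty =>
    let bs := Module.finBasis ℝ W
    refine ⟨Finset.univ.image (fun i => bs.coord i) ∪ Finset.univ.image (fun i => -bs.coord i), fun x => ?_⟩
    constructor
    · rintro ⟨w, -, rfl⟩ φ _; simp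
    · intro h
      refine ⟨fun _ => 0, by simp, ?_⟩
      rw [Finset.sum_empty]
      apply bs.ext_elem
      intro i
      have h1 := h (bs.coord i) (by simp)
      have h2 := h (-bs.coord i) (by simp)
      simp only [LinearMap.neg_apply, Module.Basis.coord_apply] at h1 h2
      rw [map_zero, Finsupp.zero_apply]
      linarith
  | insert a A ha ih =>
    obtain ⟨Φ, hΦ⟩ := ih
    refine ⟨Φ.filter (fun φ => 0 ≤ φ a) ∪ ((Φ.filter (fun φ => 0 < φ a)) ×ˢ
      (Φ.filter (fun φ => φ a < 0))).image (fun p => (-(p.2 a)) • p.1 + (p.1 a) • p.2), fun x => ?_⟩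
    rw [inCone_insert ha]
    simp_rw [hΦ]
    constructor
    · rintro ⟨t, ht, h⟩ φ hφ
      rcases Finset.mem_union.mp hφ with hφ | hφ
      · obtain ⟨h1, h2⟩ := Finset.mem_filter.mp hφ
        have := h φ h1
        simp only [map_sub, map_smul, smul_eq_mul] at this
        nlinarith
      · obtain ⟨⟨φ, ψ⟩, hp, rfl⟩ := Finset.mem_image.mp hφ
        obtain ⟨hp1, hp2⟩ := Finset.mem_product.mp hp
        obtain ⟨h1, h1'⟩ := Finset.mem_filter.mp hp1
        obtain ⟨h2, h2'⟩ := Finset.mem_filter.mp hp2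
        have e1 := h _ h1
        have e2 := h _ h2
        simp only [map_sub, map_smul, smul_eq_mul] at e1 e2 h1' h2'
        simp only [LinearMap.add_apply, LinearMap.smul_apply, smul_eq_mul]
        nlinarith
    · intro h
      have hnn : ∀ φ ∈ Φ, 0 ≤ φ a → 0 ≤ φ x := fun φ hφ hφa =>
        h φ (Finset.mem_union_left _ (Finset.mem_filter.mpr ⟨hφ, hφa⟩))
      have hpn : ∀ φ ∈ Φ, ∀ ψ ∈ Φ, 0 < φ a → ψ a < 0 → 0 ≤ (-(ψ a)) * φ x + φ a * ψ x := by
        intro φ hφ ψ hψ h1 h2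
        have := h ((-(ψ a)) • φ + (φ a) • ψ) (Finset.mem_union_right _ (Finset.mem_image.mpr
          ⟨(φ, ψ), Finset.mem_product.mpr ⟨Finset.mem_filter.mpr ⟨hφ, h1⟩,
            Finset.mem_filter.mpr ⟨hψ, h2⟩⟩, rfl⟩))
        simpa using this
      -- the set of lower bounds
      let T : Finset ℝ := insert 0 ((Φ.filter (fun φ => φ a < 0)).image (fun ψ => ψ x / ψ a))
      have hT : T.Nonempty := ⟨0, Finset.mem_insert_self _ _⟩
      refine ⟨T.max' hT, T.le_max' _ (Finset.mem_insert_self _ _), ?_⟩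
      intro φ hφ
      simp only [map_sub, map_smul, smul_eq_mul]
      rcases lt_trichotomy (φ a) 0 with h0 | h0 | h0
      · have h1 : φ x / φ a ≤ T.max' hT := T.le_max' _ (Finset.mem_insert_of_mem
          (Finset.mem_image.mpr ⟨φ, Finset.mem_filter.mpr ⟨hφ, h0⟩, rfl⟩))
        rw [div_le_iff_of_neg h0] at h1
        linarith
      · rw [h0, mul_zero, sub_zero]; exact hnn φ hφ h0.ge
      · have hmem := T.max'_mem hT
        rcases Finset.mem_insert.mp hmem with h1 | h1
        · rw [h1, zero_mul, sub_zero]; exact hnn φ hφ h0.le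
        · obtain ⟨ψ, hψ, h2⟩ := Finset.mem_image.mp h1
          obtain ⟨hψ, hψa⟩ := Finset.mem_filter.mp hψ
          rw [← h2]
          have h3 := hpn φ hφ ψ hψ h0 hψa
          have h4 : φ x - ψ x / ψ a * φ a = (-(ψ a) * φ x + φ a * ψ x) / (-(ψ a)) := by
            have := hψa.ne
            field_simp
            ring
          rw [h4]
          exact div_nonneg h3 (by linarith)

/-- support function of a finite nonempty set. -/
noncomputable def supp {E : Type} [AddCommGroup E] [Module ℝ E] (A : Finset E) (φ : E →ₗ[ℝ] ℝ) : ℝ :=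
  if h : A.Nonempty then A.sup' h φ else 0

section
variable {E : Type} [AddCommGroup E] [Module ℝ E]

lemma le_supp {A : Finset E} {a : E} (ha : a ∈ A) (φ : E →ₗ[ℝ] ℝ) : φ a ≤ supp A φ := by
  unfold supp
  rw [dif_pos ⟨a, ha⟩]
  exact Finset.le_sup' φ ha

lemma exists_supp {A : Finset E} (hA : A.Nonempty) (φ : E →ₗ[ℝ] ℝ) : ∃ a ∈ A, φ a = supp A φ := by
  unfold supp
  rw [dif_pos hA]
  obtain ⟨a, ha, h⟩ := Finset.exists_mem_eq_sup' hA φ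
  exact ⟨a, ha, h.symm⟩

lemma le_supp_hull {A : Finset E} {x : E} (hx : x ∈ convexHull ℝ (A : Set E)) (φ : E →ₗ[ℝ] ℝ) :
    φ x ≤ supp A φ := by
  have : convexHull ℝ (A : Set E) ⊆ {y | φ y ≤ supp A φ} := by
    apply convexHull_min
    · intro a ha; exact le_supp ha φ
    · exact convex_halfSpace_le (f := φ) (LinearMap.isLinear φ) _
  exact this hx

/-- H-representation of polytopes. -/
lemma hrep [FiniteDimensional ℝ E] (A : Finset E) (hA : A.Nonempty) :
    ∃ Φ : Finset (E →ₗ[ℝ] ℝ), ∀ x, (∀ φ ∈ Φ, φ x ≤ supp A φ) → x ∈ convexHull ℝ (A : Set E) := by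
  classical
  let A' : Finset (E × ℝ) := A.image (fun a => (a, (1:ℝ)))
  obtain ⟨Φ, hΦ⟩ := fm A'
  refine ⟨Φ.image (fun φ => -(φ ∘ₗ LinearMap.inl ℝ E ℝ)), fun x hx => ?_⟩
  have hcone : InCone A' (x, 1) := by
    rw [hΦ]
    intro φ hφ
    have h1 := hx _ (Finset.mem_image_of_mem _ hφ)
    obtain ⟨a, ha, hae⟩ := exists_supp hA (-(φ ∘ₗ LinearMap.inl ℝ E ℝ))
    rw [← hae] at h1
    have h2 : 0 ≤ φ (a, 1) := by
      apply (hΦ (a, 1)).mp _ φ hφ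
      refine ⟨fun b => if b = (a, 1) then 1 else 0, fun b _ => by dsimp only; split_ifs <;> norm_num, ?_⟩
      simp only [ite_smul, one_smul, zero_smul]
      rw [Finset.sum_ite_eq' A', if_pos (Finset.mem_image_of_mem _ ha)]
    have e : ∀ y : E, φ (y, 1) = φ (y, 0) + φ (0, 1) := by
      intro y; rw [← map_add]; simp
    rw [e] at h2 ⊢
    simp only [LinearMap.neg_apply, LinearMap.comp_apply, LinearMap.inl_apply] at h1
    linarith
  obtain ⟨w, hw, hxw⟩ := hcone
  rw [Finset.sum_image (fun a _ b _ h => (Prod.ext_iff.mp h).1)] at hxw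
  have h1 : x = ∑ a ∈ A, w (a, 1) • a := by
    have := congrArg Prod.fst hxw
    simpa [Prod.fst_sum] using this
  have h2 : 1 = ∑ a ∈ A, w (a, 1) := by
    have := congrArg Prod.snd hxw
    simpa [Prod.snd_sum] using this
  rw [h1]
  exact (convex_convexHull ℝ _).sum_mem (fun a ha => hw _ (Finset.mem_image_of_mem _ ha)) h2.symm
    (fun a ha => subset_convexHull ℝ _ ha)

lemma supp_add [DecidableEq E] {A B : Finset E} (hA : A.Nonempty) (hB : B.Nonempty) (φ : E →ₗ[ℝ] ℝ) :
    supp (A + B) φ = supp A φ + supp B φ := by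
  apply le_antisymm
  · obtain ⟨x, hx, h⟩ := exists_supp (hA.add hB) φ
    obtain ⟨a, ha, b, hb, rfl⟩ := Finset.mem_add.mp hx
    rw [← h, map_add]
    exact add_le_add (le_supp ha φ) (le_supp hb φ)
  · obtain ⟨a, ha, h⟩ := exists_supp hA φ
    obtain ⟨b, hb, h'⟩ := exists_supp hB φ
    rw [← h, ← h', ← map_add]
    exact le_supp (Finset.add_mem_add ha hb) φ

lemma supp_zero (φ : E →ₗ[ℝ] ℝ) : supp (0 : Finset E) φ = 0 := by
  obtain ⟨a, ha, h⟩ := exists_supp (A := (0 : Finset E)) Finset.zero_nonempty φ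
  rw [← h, Finset.mem_zero.mp ha, map_zero]

lemma sum_nonempty' [DecidableEq E] {κ : Type} (A : κ → Finset E) (hA : ∀ k, (A k).Nonempty)
    (T : Finset κ) : (∑ k ∈ T, A k).Nonempty := by
  classical
  induction T using Finset.induction_on with
  | empty => simp
  | insert a s ha ih => rw [Finset.sum_insert ha]; exact (hA a).add ih

lemma supp_sum [DecidableEq E] {κ : Type} (A : κ → Finset E) (hA : ∀ k, (A k).Nonempty)
    (T : Finset κ) (φ : E →ₗ[ℝ] ℝ) : supp (∑ k ∈ T, A k) φ = ∑ k ∈ T, supp (A k) φ := by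
  classical
  induction T using Finset.induction_on with
  | empty => simp [supp_zero]
  | insert a s ha ih =>
    rw [Finset.sum_insert ha, Finset.sum_insert ha, supp_add (hA a) (sum_nonempty' A hA s), ih]

lemma supp_mono {A B : Finset E} (hA : A.Nonempty) (h : A ⊆ B) (φ : E →ₗ[ℝ] ℝ) :
    supp A φ ≤ supp B φ := by
  obtain ⟨a, ha, h'⟩ := exists_supp hA φ
  rw [← h']
  exact le_supp (h ha) φ

end

end AFV
end

section
namespace AFV

namespace Sys

section
set_option linter.unusedSectionVars false
variable {ι : Type} [Fintype ι] [DecidableEq ι] {N : ℕ} {u : ι → (Fin N → ℝ) →ₗ[ℝ] ℝ}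

/-- `I` indexes a basis of the dual space. -/
def Bas (u : ι → (Fin N → ℝ) →ₗ[ℝ] ℝ) (I : Finset ι) : Prop :=
  I.card = N ∧ ∀ y, (∀ i ∈ I, u i y = 0) → y = 0

lemma bas_inj {I : Finset ι} (h : Bas u I) :
    Function.Injective (LinearMap.pi (fun i : I => u i)) := by
  rw [← LinearMap.ker_eq_bot, LinearMap.ker_eq_bot']
  intro y hy
  exact h.2 y fun i hi => congrFun hy ⟨i, hi⟩

lemma bas_finrank {I : Finset ι} (h : Bas u I) :
    Module.finrank ℝ (Fin N → ℝ) = Module.finrank ℝ (I → ℝ) := by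
  simp [h.1]

/-- coordinates with respect to a basis. -/
noncomputable def bcrd {I : Finset ι} (h : Bas u I) : (Fin N → ℝ) ≃L[ℝ] (I → ℝ) :=
  (LinearMap.linearEquivOfInjective _ (bas_inj h) (bas_finrank h)).toContinuousLinearEquiv

lemma bcrd_apply {I : Finset ι} (h : Bas u I) (z : Fin N → ℝ) (i : I) : bcrd h z i = u i z := rfl

lemma exists_bx {I : Finset ι} (h : Bas u I) :
    ∃ x : (ι → ℝ) →ₗ[ℝ] (Fin N → ℝ), ∀ f, ∀ i ∈ I, u i (x f) = f i := by
  refine ⟨(bcrd h).symm.toLinearEquiv.toLinearMap ∘ₗ LinearMap.funLeft ℝ ℝ (fun i : I => (i : ι)), ?_⟩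
  intro f i hi
  rw [← bcrd_apply h _ ⟨i, hi⟩]
  simp [LinearMap.funLeft_apply]

open Classical in
/-- The solution of `u i x = f i`, `i ∈ I`. -/
noncomputable def bx (u : ι → (Fin N → ℝ) →ₗ[ℝ] ℝ) (I : Finset ι) : (ι → ℝ) →ₗ[ℝ] (Fin N → ℝ) :=
  if h : Bas u I then (exists_bx h).choose else 0

lemma bx_spec {I : Finset ι} (h : Bas u I) (f : ι → ℝ) {i : ι} (hi : i ∈ I) :
    u i (bx u I f) = f i := by
  unfold bx
  rw [dif_pos h]
  exact (exists_bx h).choose_spec f i hi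

lemma bas_ext {I : Finset ι} (h : Bas u I) {y z : Fin N → ℝ} (hh : ∀ i ∈ I, u i y = u i z) :
    y = z := sub_eq_zero.mp (h.2 _ fun i hi => by simp [hh i hi])

lemma wt_pos {I : Finset ι} (h : Bas u I) : 0 < wt u I := by
  unfold wt
  have e : ∀ s : Set ℝ, {z | ∀ i ∈ I, u i z ∈ s}
      = bcrd h ⁻¹' (Set.univ.pi fun _ => s) := by
    intro s
    ext z
    simp [Set.mem_pi, bcrd_apply]
  apply ENNReal.toReal_pos
  · apply ne_of_gt
    refine lt_of_lt_of_le ?_ (measure_mono (μ := volume)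
      (show {z | ∀ i ∈ I, u i z ∈ Set.Ioo (0:ℝ) 1} ⊆ {z | ∀ i ∈ I, u i z ∈ Set.Ioc (0:ℝ) 1} from
        fun z hz i hi => ⟨(hz i hi).1, (hz i hi).2.le⟩))
    rw [e]
    apply IsOpen.measure_pos
    · exact (isOpen_set_pi Set.finite_univ fun _ _ => isOpen_Ioo).preimage (bcrd h).continuous
    · refine ⟨(bcrd h).symm (fun _ => 1/2), ?_⟩
      simp only [Set.mem_preimage, ContinuousLinearEquiv.apply_symm_apply, Set.mem_pi]
      intro i _; norm_num
  · apply ne_of_lt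
    refine lt_of_le_of_lt (measure_mono (μ := volume)
      (show {z | ∀ i ∈ I, u i z ∈ Set.Ioc (0:ℝ) 1} ⊆ {z | ∀ i ∈ I, u i z ∈ Set.Icc (0:ℝ) 1} from
        fun z hz i hi => ⟨(hz i hi).1.le, (hz i hi).2⟩)) ?_
    rw [e]
    apply IsCompact.measure_lt_top
    have := (isCompact_univ_pi (fun _ : I => isCompact_Icc (a := (0:ℝ)) (b := 1)))
    exact (bcrd h).toHomeomorph.isCompact_preimage.mpr this

lemma bas_pivot {I : Finset ι} (h : Bas u I) {i k : ι} (hi : i ∈ I) (hk : k ∉ I)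
    (hd : u k (bx u I (Pi.single i 1)) ≠ 0) : Bas u (insert k (I.erase i)) := by
  refine ⟨?_, fun y hy => ?_⟩
  · rw [Finset.card_insert_of_notMem (fun hh => hk (Finset.mem_of_mem_erase hh)),
      Finset.card_erase_add_one hi, h.1]
  · have e : y = u i y • bx u I (Pi.single i 1) := by
      apply bas_ext h
      intro j hj
      rw [map_smul, bx_spec h _ hj]
      by_cases hji : j = i
      · subst hji; simp
      · rw [hy j (Finset.mem_insert_of_mem (Finset.mem_erase.mpr ⟨hji, hj⟩))]
        simp [hji]
    have h1 := hy k (Finset.mem_insert_self _ _)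
    rw [e, map_smul, smul_eq_mul] at h1
    rcases mul_eq_zero.mp h1 with h2 | h2
    · rw [e, h2, zero_smul]
    · exact absurd h2 hd

lemma wt_pivot {I : Finset ι} (h : Bas u I) {i k : ι} (hi : i ∈ I) (hk : k ∉ I)
    (hd : u k (bx u I (Pi.single i 1)) < 0) :
    wt u (insert k (I.erase i)) * (-(u k (bx u I (Pi.single i 1)))) = wt u I := by
  set d := bx u I (Pi.single i 1) with hdd
  have hid : u i d = 1 := by rw [hdd, bx_spec h _ hi]; simp
  let T : (Fin N → ℝ) →ₗ[ℝ] (Fin N → ℝ) := LinearMap.transvection (u k - u i) d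
  have hT : ∀ z, T z = z + (u k z - u i z) • d := fun z => by simp [T, LinearMap.transvection.apply]
  have hdet : LinearMap.det T = u k d := by
    simp [T, LinearMap.transvection.det, hid]
  have hpre : {z | ∀ j ∈ insert k (I.erase i), u j z ∈ Set.Ioc (0:ℝ) 1}
      = T ⁻¹' {z | ∀ j ∈ I, u j z ∈ Set.Ioc (0:ℝ) 1} := by
    have hi' : ∀ z, u i (T z) = u k z := fun z => by rw [hT]; simp [hid]
    have hj' : ∀ z, ∀ j ∈ I, j ≠ i → u j (T z) = u j z := fun z j hj hji => by
      rw [hT]; simp [hdd, bx_spec h _ hj, hji]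
    ext z
    simp only [Set.mem_ofPred_eq, Set.mem_preimage]
    constructor
    · intro hz j hj
      by_cases hji : j = i
      · subst hji; rw [hi']; exact hz k (Finset.mem_insert_self _ _)
      · rw [hj' z j hj hji]
        exact hz j (Finset.mem_insert_of_mem (Finset.mem_erase.mpr ⟨hji, hj⟩))
    · intro hz j hj
      rcases Finset.mem_insert.mp hj with rfl | hj
      · rw [← hi']; exact hz i hi
      · have := Finset.mem_erase.mp hj
        rw [← hj' z j this.2 this.1]; exact hz j this.2
  unfold wt
  rw [hpre, Measure.addHaar_preimage_linearMap _ (by rw [hdet]; exact hd.ne), hdet,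
    ENNReal.toReal_mul, ENNReal.toReal_ofReal (abs_nonneg _), abs_inv, abs_of_neg hd]
  have hne := hd.ne
  field_simp

end

end Sys

end AFV
end

section
namespace AFV

namespace Sys

section
variable {ι : Type} [Fintype ι] [DecidableEq ι] {N : ℕ} {u : ι → (Fin N → ℝ) →ₗ[ℝ] ℝ}

/-- Ratio test: moving along `d` from a feasible point until a new constraint is hit. -/
lemma ratio_test (hspan : ∀ d : Fin N → ℝ, d ≠ 0 → ∃ j, 0 < u j d) {b : ι → ℝ} {z d : Fin N → ℝ}
    (hz : ∀ j, u j z ≤ b j) (hd : d ≠ 0) :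
    ∃ k, 0 < u k d ∧ u k (z + ((b k - u k z) / u k d) • d) = b k ∧
      ∀ j, u j (z + ((b k - u k z) / u k d) • d) ≤ b j := by
  obtain ⟨j0, hj0⟩ := hspan d hd
  obtain ⟨k, hk, hmin⟩ := Finset.exists_min_image (Finset.univ.filter fun j => 0 < u j d)
    (fun j => (b j - u j z) / u j d) ⟨j0, by simpa using hj0⟩
  simp only [Finset.mem_filter, Finset.mem_univ, true_and] at hk hmin
  refine ⟨k, hk, ?_, fun j => ?_⟩
  · rw [map_add, map_smul, smul_eq_mul, div_mul_cancel₀ _ hk.ne']; ring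
  · rw [map_add, map_smul, smul_eq_mul]
    have h0 : 0 ≤ (b k - u k z) / u k d := div_nonneg (by linarith [hz k]) hk.le
    by_cases hj : 0 < u j d
    · have := hmin j hj
      rw [le_div_iff₀ hj] at this
      linarith
    · have : (b k - u k z) / u k d * u j d ≤ 0 := mul_nonpos_of_nonneg_of_nonpos h0 (not_lt.mp hj)
      linarith [hz j]

lemma exists_bas_active (hspan : ∀ d : Fin N → ℝ, d ≠ 0 → ∃ j, 0 < u j d) {b : ι → ℝ}
    (hP : ∃ z, ∀ j, u j z ≤ b j) :
    ∃ I, Bas u I ∧ ∃ z, (∀ j, u j z ≤ b j) ∧ ∀ i ∈ I, u i z = b i := by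
  classical
  let act : (Fin N → ℝ) → Finset ι := fun z => Finset.univ.filter fun j => u j z = b j
  have hact : ∀ z j, j ∈ act z ↔ u j z = b j := fun z j => by simp [act]
  -- a point with maximal active set
  obtain ⟨z, hz, hmax⟩ : ∃ z, (∀ j, u j z ≤ b j) ∧
      ∀ z', (∀ j, u j z' ≤ b j) → (act z').card ≤ (act z).card := by
    let Z : Set ℕ := {n | ∃ z, (∀ j, u j z ≤ b j) ∧ (act z).card = n}
    have hZ : Z.Nonempty := by obtain ⟨z, hz⟩ := hP; exact ⟨_, z, hz, rfl⟩
    have hfin : BddAbove Z := ⟨Fintype.card ι, by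
      rintro n ⟨z, -, rfl⟩; exact Finset.card_le_univ _⟩
    obtain ⟨z, hz, hzc⟩ := Nat.sSup_mem hZ hfin
    exact ⟨z, hz, fun z' hz' => by rw [hzc]; exact le_csSup hfin ⟨z', hz', rfl⟩⟩
  have htriv : ∀ y, (∀ i ∈ act z, u i y = 0) → y = 0 := by
    intro d hd
    by_contra hne
    obtain ⟨k, hk, hk1, hk2⟩ := ratio_test hspan hz hne
    have h1 := hmax _ hk2
    have hkn : k ∉ act z := fun h => by rw [hd k h] at hk; exact lt_irrefl _ hk
    have hsub : insert k (act z) ⊆ act (z + ((b k - u k z) / u k d) • d) := by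
      intro j hj
      rw [hact]
      rcases Finset.mem_insert.mp hj with rfl | hj
      · exact hk1
      · rw [map_add, map_smul, hd j hj, (hact _ _).mp hj]; simp
    have h2 := Finset.card_le_card hsub
    rw [Finset.card_insert_of_notMem hkn] at h2
    omega
  obtain ⟨I, hI, hImin⟩ := Finset.exists_min_image
    ((act z).powerset.filter fun I => ∀ y, (∀ i ∈ I, u i y = 0) → y = 0) Finset.card
    ⟨act z, by simp only [Finset.mem_filter, Finset.mem_powerset]; exact ⟨subset_rfl, htriv⟩⟩
  simp only [Finset.mem_filter, Finset.mem_powerset] at hI hImin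
  refine ⟨I, ⟨?_, hI.2⟩, z, hz, fun i hi => (hact _ _).mp (hI.1 hi)⟩
  have hy : ∀ i : I, ∃ y, u i y = 1 ∧ ∀ j ∈ I, j ≠ i → u j y = 0 := by
    rintro ⟨i, hi⟩
    by_contra! hcon
    have := hImin (I.erase i) ⟨(Finset.erase_subset _ _).trans hI.1, fun y hy => ?_⟩
    · rw [Finset.card_erase_of_mem hi] at this
      have := Finset.card_pos.mpr ⟨i, hi⟩
      omega
    · apply hI.2
      intro j hj
      by_cases hji : j = i
      · subst hji
        by_contra hne
        obtain ⟨j', hj', hne', h0⟩ := hcon ((u j y)⁻¹ • y) (by simp [hne])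
        apply h0
        rw [map_smul, hy j' (Finset.mem_erase.mpr ⟨hne', hj'⟩), smul_zero]
      · exact hy j (Finset.mem_erase.mpr ⟨hji, hj⟩)
  choose y hy1 hy2 using hy
  let F : (Fin N → ℝ) →ₗ[ℝ] (I → ℝ) := LinearMap.pi fun i : I => u i
  have hFinj : Function.Injective F := by
    rw [← LinearMap.ker_eq_bot, LinearMap.ker_eq_bot']
    intro y hy
    exact hI.2 y fun i hi => congrFun hy ⟨i, hi⟩
  have hFsurj : Function.Surjective F := by
    intro f
    refine ⟨∑ i, f i • y i, ?_⟩
    ext j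
    simp only [F, LinearMap.pi_apply, map_sum, map_smul, smul_eq_mul]
    rw [Finset.sum_eq_single j]
    · rw [hy1, mul_one]
    · intro i _ hij
      rw [hy2 i j j.2 (fun h => hij (Subtype.ext h.symm)), mul_zero]
    · simp
  have := (LinearEquiv.ofBijective F ⟨hFinj, hFsurj⟩).finrank_eq
  simpa using this.symm

open Classical in
theorem exists_sys (hspan : ∀ d : Fin N → ℝ, d ≠ 0 → ∃ j, 0 < u j d) {b : ι → ℝ}
    (hP : ∃ z, ∀ j, u j z ≤ b j)
    (hb : ∀ I, Bas u I → ∀ j, j ∉ I → u j (bx u I b) ≠ b j) :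
    ∃ S : Sys N u, S.x = bx u ∧ S.w = wt u ∧ S.b = b ∧ ∀ I ∈ S.V, Bas u I := by
  classical
  have hV : ∀ I, I ∈ (Finset.univ.filter fun I : Finset ι => Bas u I ∧
      ∀ j, j ∉ I → u j (bx u I b) < b j) ↔ Bas u I ∧ ∀ j, j ∉ I → u j (bx u I b) < b j := by
    intro I; simp
  have hle : ∀ I, Bas u I → (∀ j, u j (bx u I b) ≤ b j) → ∀ j, j ∉ I → u j (bx u I b) < b j :=
    fun I hI h j hj => lt_of_le_of_ne (h j) (hb I hI j hj)
  refine ⟨{ V := Finset.univ.filter fun I : Finset ι => Bas u I ∧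
              ∀ j, j ∉ I → u j (bx u I b) < b j
            x := bx u
            w := wt u
            b := b
            ne := ?_
            card := fun I hI => ((hV I).mp hI).1.1
            ux := fun I hI f i hi => bx_spec ((hV I).mp hI).1 f hi
            inj := fun I hI => ((hV I).mp hI).1.2
            feas := fun I hI => ((hV I).mp hI).2
            wpos := fun I hI => wt_pos ((hV I).mp hI).1
            pivot := ?_ }, rfl, rfl, rfl, fun I hI => ((hV I).mp hI).1⟩
  · obtain ⟨I, hI, z, hz, hzI⟩ := exists_bas_active hspan hP
    refine ⟨I, (hV I).mpr ⟨hI, hle I hI ?_⟩⟩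
    have : bx u I b = z := bas_ext hI fun i hi => by rw [bx_spec hI _ hi, hzI i hi]
    rw [this]; exact hz
  · intro I hI i hi
    obtain ⟨hB, hf⟩ := (hV I).mp hI
    set d := bx u I (Pi.single i 1) with hdd
    have hud : ∀ j ∈ I, u j d = (Pi.single i 1 : ι → ℝ) j := fun j hj => bx_spec hB _ hj
    have hid : u i d = 1 := by rw [hud i hi]; simp
    have hd0 : -d ≠ 0 := by
      intro h
      rw [neg_eq_zero] at h
      rw [h, map_zero] at hid
      exact zero_ne_one hid
    have hx : ∀ j, u j (bx u I b) ≤ b j := fun j => by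
      by_cases hj : j ∈ I
      · exact (bx_spec hB b hj).le
      · exact (hf j hj).le
    obtain ⟨k, hk, hk1, hk2⟩ := ratio_test hspan hx hd0
    have hkd : u k d < 0 := by simpa using hk
    have hkI : k ∉ I := by
      intro hkI
      rw [hud k hkI, Pi.single_apply] at hkd
      split_ifs at hkd <;> linarith
    have hB' := bas_pivot hB hi hkI hkd.ne
    refine ⟨k, hkI, (hV _).mpr ⟨hB', hle _ hB' ?_⟩, hkd, wt_pivot hB hi hkI hkd⟩
    have : bx u (insert k (I.erase i)) b
        = bx u I b + ((b k - u k (bx u I b)) / u k (-d)) • (-d) := by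
      apply bas_ext hB'
      intro j hj
      rw [bx_spec hB' _ hj]
      rcases Finset.mem_insert.mp hj with rfl | hj
      · exact hk1.symm
      · have := Finset.mem_erase.mp hj
        rw [map_add, map_smul, map_neg (u j), hud j this.2, bx_spec hB _ this.2]
        simp [this.1]
    rw [this]; exact hk2

end

end Sys

end AFV
end

section
namespace AFV

lemma polar {N : ℕ} (a : Fin N → ℝ) :
    ∑ S : Finset (Fin N), (-1 : ℝ) ^ (N - S.card) * (∑ i ∈ S, a i) ^ N
      = N.factorial * ∏ i, a i := by
  classical
  have h1 : ∀ S : Finset (Fin N), (∑ i ∈ S, a i) ^ N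
      = ∑ p : Fin N → Fin N, if (∀ x, p x ∈ S) then ∏ x, a (p x) else 0 := by
    intro S
    have : (∑ i ∈ S, a i) ^ N = ∏ _j : Fin N, ∑ i ∈ S, a i := by simp
    rw [this, Finset.prod_univ_sum, ← Finset.sum_filter]
    apply Finset.sum_congr _ fun _ _ => rfl
    ext p; simp [Fintype.mem_piFinset]
  have h2 : ∀ p : Fin N → Fin N,
      (∑ S : Finset (Fin N), if (∀ x, p x ∈ S) then (-1 : ℝ) ^ (N - S.card) else 0)
        = if Function.Bijective p then 1 else 0 := by
    intro p
    have e : (∑ S : Finset (Fin N), if (∀ x, p x ∈ S) then (-1 : ℝ) ^ (N - S.card) else 0)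
        = ∑ T ∈ (Finset.univ.image p)ᶜ.powerset, (-1 : ℝ) ^ T.card := by
      rw [← Finset.sum_filter]
      refine Finset.sum_nbij' (fun S => Sᶜ) (fun S => Sᶜ) ?_ ?_ ?_ ?_ ?_
      · intro S hS
        simp only [Finset.mem_filter, Finset.mem_univ, true_and] at hS
        rw [Finset.mem_powerset]
        intro i hi
        rw [Finset.mem_compl] at hi ⊢
        intro h
        obtain ⟨x, -, rfl⟩ := Finset.mem_image.mp h
        exact hi (hS x)
      · intro T hT
        rw [Finset.mem_powerset] at hT
        simp only [Finset.mem_filter, Finset.mem_univ, true_and, Finset.mem_compl]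
        intro x hx
        have := hT hx
        rw [Finset.mem_compl] at this
        exact this (Finset.mem_image_of_mem _ (Finset.mem_univ _))
      · intro S _; simp
      · intro S _; simp
      · intro S _; rw [Finset.card_compl, Fintype.card_fin]
    rw [e]
    have h3 := congrArg (Int.cast : ℤ → ℝ)
      (Finset.sum_powerset_neg_one_pow_card (x := (Finset.univ.image p)ᶜ))
    push_cast at h3
    rw [h3]
    have h4 : ((Finset.univ.image p)ᶜ = ∅) ↔ Function.Bijective p := by
      rw [← Finite.surjective_iff_bijective, Finset.compl_eq_empty_iff,
        Finset.eq_univ_iff_forall]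
      constructor
      · intro h y; obtain ⟨x, -, hx⟩ := Finset.mem_image.mp (h y); exact ⟨x, hx⟩
      · intro h y; obtain ⟨x, hx⟩ := h y; exact Finset.mem_image.mpr ⟨x, Finset.mem_univ _, hx⟩
    by_cases hb : Function.Bijective p
    · rw [if_pos hb, if_pos (h4.mpr hb)]
    · rw [if_neg hb, if_neg (fun h => hb (h4.mp h))]
  have hcard : (Finset.univ.filter fun p : Fin N → Fin N => Function.Bijective p).card
      = N.factorial := by
    rw [← Fintype.card_subtype]
    have e : {p : Fin N → Fin N // Function.Bijective p} ≃ Equiv.Perm (Fin N) :=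
      { toFun := fun p => Equiv.ofBijective p.1 p.2
        invFun := fun e => ⟨e, e.bijective⟩
        left_inv := fun p => rfl
        right_inv := fun e => by ext; rfl }
    rw [Fintype.card_congr e, Fintype.card_perm, Fintype.card_fin]
  calc ∑ S : Finset (Fin N), (-1 : ℝ) ^ (N - S.card) * (∑ i ∈ S, a i) ^ N
      = ∑ p : Fin N → Fin N, (∏ x, a (p x)) *
        ∑ S : Finset (Fin N), if (∀ x, p x ∈ S) then (-1 : ℝ) ^ (N - S.card) else 0 := by
        simp_rw [h1, Finset.mul_sum]
        rw [Finset.sum_comm]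
        refine Finset.sum_congr rfl fun p _ => Finset.sum_congr rfl fun S _ => ?_
        split_ifs <;> ring
    _ = ∑ p ∈ Finset.univ.filter (fun p : Fin N → Fin N => Function.Bijective p), ∏ i, a i := by
        rw [Finset.sum_filter]
        refine Finset.sum_congr rfl fun p _ => ?_
        rw [h2]
        split_ifs with h
        · rw [mul_one]; exact h.prod_comp a
        · simp
    _ = _ := by rw [Finset.sum_const, hcard, nsmul_eq_mul]

lemma ev_ne {x y : ℝ} (h : x ≠ 0 ∨ y ≠ 0) :
    ∀ᶠ ε in nhdsWithin (0:ℝ) (Set.Ioi 0), x + ε * y ≠ 0 := by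
  by_cases hx : x = 0
  · have hy : y ≠ 0 := h.resolve_left (not_not.mpr hx)
    filter_upwards [self_mem_nhdsWithin] with ε hε
    rw [hx, zero_add]
    exact mul_ne_zero (ne_of_gt hε) hy
  · apply Filter.Eventually.filter_mono nhdsWithin_le_nhds
    apply ContinuousAt.eventually_ne (by fun_prop)
    simpa using hx

lemma ev_pos {x y : ℝ} (h : 0 < x) :
    ∀ᶠ ε in nhdsWithin (0:ℝ) (Set.Ioi 0), 0 < x + ε * y := by
  apply Filter.Eventually.filter_mono nhdsWithin_le_nhds
  have hc : ContinuousAt (fun ε : ℝ => x + ε * y) 0 := by fun_prop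
  exact hc.eventually_mem (isOpen_Ioi.mem_nhds (by simpa using h))

lemma avoid {W : Type} [AddCommGroup W] [Module ℝ W] (T : Finset (W →ₗ[ℝ] ℝ))
    (hT : ∀ φ ∈ T, φ ≠ 0) : ∃ w : W, ∀ φ ∈ T, φ w ≠ 0 := by
  classical
  induction T using Finset.induction_on with
  | empty => exact ⟨0, by simp⟩
  | insert φ T hφ ih =>
    obtain ⟨w, hw⟩ := ih fun ψ hψ => hT ψ (Finset.mem_insert_of_mem hψ)
    obtain ⟨v, hv⟩ : ∃ v, φ v ≠ 0 := by
      by_contra! h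
      exact hT φ (Finset.mem_insert_self _ _) (LinearMap.ext h)
    have h1 : ∀ᶠ ε in nhdsWithin (0:ℝ) (Set.Ioi 0), ∀ ψ ∈ insert φ T, ψ w + ε * ψ v ≠ 0 := by
      rw [Filter.eventually_all_finset]
      intro ψ hψ
      rcases Finset.mem_insert.mp hψ with rfl | hψ
      · exact ev_ne (Or.inr hv)
      · exact ev_ne (Or.inl (hw ψ hψ))
    obtain ⟨ε, hε⟩ := h1.exists
    exact ⟨w + ε • v, fun ψ hψ => by rw [map_add, map_smul, smul_eq_mul]; exact hε ψ hψ⟩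

namespace Sys

section
variable {ι : Type} [Fintype ι] [DecidableEq ι] {N : ℕ} {u : ι → (Fin N → ℝ) →ₗ[ℝ] ℝ}

lemma exists_gen (S : Sys N u) : ∃ c, S.Gen c := by
  classical
  let T : Finset (((Fin N → ℝ) →ₗ[ℝ] ℝ) →ₗ[ℝ] ℝ) :=
    S.V.biUnion fun I => I.image fun i => LinearMap.applyₗ (S.x I (Pi.single i 1))
  obtain ⟨c, hc⟩ := avoid T (by
    intro φ hφ
    obtain ⟨I, hI, hφ⟩ := Finset.mem_biUnion.mp hφ
    obtain ⟨i, hi, rfl⟩ := Finset.mem_image.mp hφ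
    intro h
    have := LinearMap.congr_fun h (u i)
    simp [S.ux I hI _ i hi] at this)
  exact ⟨c, fun I hI i hi => hc _ (Finset.mem_biUnion.mpr ⟨I, hI, Finset.mem_image_of_mem _ hi⟩)⟩

/-- `b ↦ u j (x_I b) - b j`. -/
noncomputable def psi (u : ι → (Fin N → ℝ) →ₗ[ℝ] ℝ) (I : Finset ι) (j : ι) : (ι → ℝ) →ₗ[ℝ] ℝ :=
  u j ∘ₗ bx u I - LinearMap.proj j

lemma psi_apply (I : Finset ι) (j : ι) (b : ι → ℝ) : psi u I j b = u j (bx u I b) - b j := rfl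

lemma exists_generic_b (q : ι → ℝ) (hq : ∃ z, ∀ j, u j z ≤ q j) :
    ∃ b : ι → ℝ, (∃ z, ∀ j, u j z ≤ b j) ∧
      (∀ I, Bas u I → ∀ j, j ∉ I → u j (bx u I b) ≠ b j) ∧
      ∀ I, Bas u I → (∀ j, j ∉ I → u j (bx u I b) < b j) → ∀ j, u j (bx u I q) ≤ q j := by
  classical
  let T : Finset (Finset ι × ι) := Finset.univ.filter fun p => Bas u p.1 ∧ p.2 ∉ p.1
  obtain ⟨p0, hp0⟩ := avoid (T.image fun p => psi u p.1 p.2) (by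
    intro φ hφ
    obtain ⟨⟨I, j⟩, hp, rfl⟩ := Finset.mem_image.mp hφ
    simp only [T, Finset.mem_filter, Finset.mem_univ, true_and] at hp
    intro h
    have := LinearMap.congr_fun h (Pi.single j 1)
    have h0 : bx u I (Pi.single j 1) = 0 := bas_ext hp.1 fun i hi => by
      rw [bx_spec hp.1 _ hi, map_zero, Pi.single_eq_of_ne]
      rintro rfl; exact hp.2 hi
    simp [psi_apply, h0] at this)
  have hp0' : ∀ p ∈ T, psi u p.1 p.2 p0 ≠ 0 := fun p hp => hp0 _ (Finset.mem_image_of_mem _ hp)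
  obtain ⟨p, hpp, hpg⟩ : ∃ p : ι → ℝ, (∀ j, 0 < p j) ∧ ∀ r ∈ T, psi u r.1 r.2 p ≠ 0 := by
    have h1 : ∀ᶠ ε in nhdsWithin (0:ℝ) (Set.Ioi 0), ∀ r ∈ T,
        psi u r.1 r.2 (fun _ => 1) + ε * psi u r.1 r.2 p0 ≠ 0 := by
      rw [Filter.eventually_all_finset]
      exact fun r hr => ev_ne (Or.inr (hp0' r hr))
    have h2 : ∀ᶠ ε in nhdsWithin (0:ℝ) (Set.Ioi 0), ∀ j, 0 < 1 + ε * p0 j := by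
      rw [Filter.eventually_all]
      intro j
      exact ev_pos one_pos
    obtain ⟨ε, h1, h2⟩ := (h1.and h2).exists
    refine ⟨(fun _ => 1) + ε • p0, fun j => by simpa using h2 j, fun r hr => ?_⟩
    rw [map_add, map_smul]; exact h1 r hr
  have h1 : ∀ᶠ ε in nhdsWithin (0:ℝ) (Set.Ioi 0), ∀ r ∈ T,
      psi u r.1 r.2 q + ε * psi u r.1 r.2 p ≠ 0 := by
    rw [Filter.eventually_all_finset]
    exact fun r hr => ev_ne (Or.inr (hpg r hr))
  have h2 : ∀ᶠ ε in nhdsWithin (0:ℝ) (Set.Ioi 0), ∀ r : Finset ι × ι, 0 < psi u r.1 r.2 q →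
      0 < psi u r.1 r.2 q + ε * psi u r.1 r.2 p := by
    rw [Filter.eventually_all]
    intro r
    rw [Filter.eventually_imp_distrib_left]
    intro hr
    exact ev_pos hr
  obtain ⟨ε, ⟨h1, h2⟩, hε⟩ := ((h1.and h2).and self_mem_nhdsWithin).exists
  have hψ : ∀ I j, psi u I j (q + ε • p) = psi u I j q + ε * psi u I j p := fun I j => by
    rw [map_add, map_smul, smul_eq_mul]
  refine ⟨q + ε • p, ?_, ?_, ?_⟩
  · obtain ⟨z, hz⟩ := hq
    refine ⟨z, fun j => (hz j).trans ?_⟩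
    have : 0 < ε * p j := mul_pos hε (hpp j)
    simp only [Pi.add_apply, Pi.smul_apply, smul_eq_mul]; linarith
  · intro I hI j hj h
    apply h1 (I, j) (by simp only [T, Finset.mem_filter, Finset.mem_univ, true_and]; exact ⟨hI, hj⟩)
    rw [← hψ, psi_apply, h, sub_self]
  · intro I hI hf j
    by_cases hj : j ∈ I
    · exact (bx_spec hI _ hj).le
    · by_contra hlt
      have h3 := h2 (I, j) (by rw [psi_apply]; simp only; linarith)
      have h4 := hf j hj
      simp only at h3
      rw [← hψ, psi_apply] at h3
      linarith

end

end Sys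

end AFV
end

section
namespace AFV

/-- Mixed volume of finite sets in `ℝ^N`. -/
noncomputable def mvR {N : ℕ} (A : Fin N → Finset (Fin N → ℝ)) : ℝ :=
  ∑ S ∈ Finset.univ.powerset.filter (fun S : Finset (Fin N) => S.Nonempty),
    (-1 : ℝ) ^ (N - S.card) *
      (volume (convexHull ℝ ((∑ i ∈ S, A i : Finset (Fin N → ℝ)) : Set (Fin N → ℝ)))).toReal

open Sys in
lemma mvR_eq_D {N : ℕ} (hN : 0 < N) {ι : Type} [Fintype ι] [DecidableEq ι]
    {u : ι → (Fin N → ℝ) →ₗ[ℝ] ℝ} {S : Sys N u} {c : (Fin N → ℝ) →ₗ[ℝ] ℝ}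
    (hw : ∀ I ∈ S.V, S.w I = wt u I) (hc : S.Gen c) (A : Fin N → Finset (Fin N → ℝ))
    (h : Fin N → ι → ℝ) (hh : ∀ i, S.Nef (h i))
    (hpoly : ∀ T : Finset (Fin N), T.Nonempty →
      convexHull ℝ ((∑ i ∈ T, A i : Finset (Fin N → ℝ)) : Set (Fin N → ℝ)) = poly u (∑ i ∈ T, h i)) :
    mvR A = S.D c ∅ (Finset.univ.val.map h) := by
  have hf : (N.factorial : ℝ) ≠ 0 := by positivity
  apply mul_left_cancel₀ hf
  have hnef : ∀ T : Finset (Fin N), T.Nonempty → S.Nef (∑ i ∈ T, h i) := by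
    intro T hT
    induction hT using Finset.Nonempty.cons_induction with
    | singleton a => simpa using hh a
    | cons a s ha hs ih => rw [Finset.sum_cons]; exact (hh a).add ih
  have e1 : (N.factorial : ℝ) * mvR A = ∑ T : Finset (Fin N), (-1 : ℝ) ^ (N - T.card) *
      S.D c ∅ (Multiset.replicate N (∑ i ∈ T, h i)) := by
    unfold mvR
    rw [Finset.mul_sum, Finset.sum_filter, Finset.powerset_univ]
    refine Finset.sum_congr rfl fun T _ => ?_
    split_ifs with hT
    · rw [hpoly T hT, ← vol_poly hw hc (hnef T hT)]; ring
    · rw [Finset.not_nonempty_iff_eq_empty] at hT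
      subst hT
      simp [D, hN.ne']
  rw [e1]
  unfold D
  simp_rw [Multiset.map_replicate, Multiset.prod_replicate, Finset.mul_sum]
  rw [Finset.sum_comm]
  refine Finset.sum_congr rfl fun I _ => ?_
  have := polar (fun i => c (S.x I (h i)))
  simp only [map_sum]
  rw [Multiset.map_map]
  have e2 : (Multiset.map ((fun f => c (S.x I f)) ∘ h) Finset.univ.val).prod
    = ∏ i, c (S.x I (h i)) := rfl
  rw [e2]
  calc _ = (S.w I / ∏ k ∈ I \ ∅, S.g c I k) * ∑ T : Finset (Fin N),
      (-1 : ℝ) ^ (N - T.card) * (∑ i ∈ T, c (S.x I (h i))) ^ N := by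
        rw [Finset.mul_sum]
        exact Finset.sum_congr rfl fun T _ => by ring
    _ = _ := by rw [this]; ring

open Sys in
theorem family {N : ℕ} (hN : 0 < N) {κ : Type} [Fintype κ] (A : κ → Finset (Fin N → ℝ))
    (hA : ∀ k, (A k).Nonempty) :
    ∃ M : Multiset κ → ℝ,
      (∀ t : Fin N → κ, mvR (fun i => A (t i)) = M (Finset.univ.val.map t)) ∧
      (∀ a b m, m.card + 2 = N → M (a ::ₘ a ::ₘ m) * M (b ::ₘ b ::ₘ m) ≤ M (a ::ₘ b ::ₘ m) ^ 2) ∧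
      (∀ m, m.card = N → 0 ≤ M m) ∧
      (∀ a b m, m.card + 1 = N → A a ⊆ A b → M (a ::ₘ m) ≤ M (b ::ₘ m)) := by
  classical
  -- the sets of functionals
  have hA' : ∀ (t : Fin N → κ) (T : Finset (Fin N)), (∑ i ∈ T, A (t i)).Nonempty := fun t T =>
    sum_nonempty' (fun i => A (t i)) (fun i => hA _) T
  have hAQ : (∑ k, A k).Nonempty := sum_nonempty' A hA _
  choose Φ hΦ using fun (p : (Fin N → κ) × Finset (Fin N)) => hrep _ (hA' p.1 p.2)
  obtain ⟨ΦQ, hΦQ⟩ := hrep _ hAQ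
  let X : Finset ((Fin N → ℝ) →ₗ[ℝ] ℝ) :=
    (Finset.univ.biUnion Φ ∪ ΦQ) ∪ (Finset.univ.image (fun i : Fin N => LinearMap.proj i) ∪
      Finset.univ.image (fun i : Fin N => -LinearMap.proj i))
  let ι : Type := {φ // φ ∈ X}
  let u : ι → (Fin N → ℝ) →ₗ[ℝ] ℝ := fun j => j.1
  have hu : ∀ φ ∈ X, ∃ j : ι, u j = φ := fun φ hφ => ⟨⟨φ, hφ⟩, rfl⟩
  have hspan : ∀ d : Fin N → ℝ, d ≠ 0 → ∃ j, 0 < u j d := by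
    intro d hd
    obtain ⟨i, hi⟩ := Function.ne_iff.mp hd
    rcases lt_or_gt_of_ne hi with h | h
    · obtain ⟨j, hj⟩ := hu (-LinearMap.proj i) (by simp [X])
      exact ⟨j, by rw [hj]; simpa using h⟩
    · obtain ⟨j, hj⟩ := hu (LinearMap.proj i) (by simp [X])
      exact ⟨j, by rw [hj]; simpa using h⟩
  let h : κ → ι → ℝ := fun k j => supp (A k) (u j)
  let q : ι → ℝ := ∑ k, h k
  have hqs : ∀ j, q j = supp (∑ k, A k) (u j) := fun j => by
    rw [supp_sum A hA]; simp [q, h]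
  have hq : ∃ z, ∀ j, u j z ≤ q j := by
    obtain ⟨z, hz⟩ := hAQ
    exact ⟨z, fun j => by rw [hqs]; exact le_supp hz _⟩
  obtain ⟨b, hbP, hbg, hbq⟩ := exists_generic_b q hq
  obtain ⟨S, hSx, hSw, hSb, hSV⟩ := exists_sys hspan hbP hbg
  obtain ⟨c, hc⟩ := S.exists_gen
  have hw : ∀ I ∈ S.V, S.w I = wt u I := fun I _ => by rw [hSw]
  -- nefness
  have hnef : ∀ k, S.Nef (h k) := by
    intro k I hI j
    have hB := hSV I hI
    have hfe := hbq I hB (fun j hj => by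
      have := S.feas I hI j hj
      rwa [hSx, hSb] at this)
    have hmem : bx u I q ∈ convexHull ℝ ((∑ k, A k : Finset (Fin N → ℝ)) : Set (Fin N → ℝ)) := by
      apply hΦQ
      intro φ hφ
      obtain ⟨j, hj⟩ := hu φ (by simp [X, hφ])
      rw [← hj, ← hqs]; exact hfe j
    rw [Finset.coe_sum, convexHull_sum, Set.mem_finsetSum] at hmem
    obtain ⟨z, hz, hzs⟩ := hmem
    have hz' : ∀ k j, u j (z k) ≤ h k j := fun k j => le_supp_hull (hz (Finset.mem_univ k)) (u j)
    have heq : ∀ i ∈ I, ∀ k, u i (z k) = h k i := by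
      intro i hi
      have h1 : ∑ k, u i (z k) = ∑ k, h k i := by
        rw [← map_sum, hzs, bx_spec hB _ hi]; simp [q]
      have := (Finset.sum_eq_sum_iff_of_le (fun k _ => hz' k i)).mp h1
      exact fun k => this k (Finset.mem_univ k)
    have hzk : S.x I (h k) = z k := by
      rw [hSx]
      exact bas_ext hB fun i hi => by rw [bx_spec hB _ hi, heq i hi k]
    rw [hzk]
    exact hz' k j
  have hnefm : ∀ m : Multiset κ, ∀ f ∈ m.map h, S.Nef f := by
    intro m f hf
    obtain ⟨k, -, rfl⟩ := Multiset.mem_map.mp hf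
    exact hnef k
  refine ⟨fun m => S.D c ∅ (m.map h), ?_, ?_, ?_, ?_⟩
  · intro t
    rw [mvR_eq_D hN hw hc (fun i => A (t i)) (fun i => h (t i)) (fun i => hnef _) ?_]
    · simp only [Multiset.map_map]; rfl
    · intro T hT
      have hs : ∀ j, (∑ i ∈ T, h (t i)) j = supp (∑ i ∈ T, A (t i)) (u j) := fun j => by
        rw [supp_sum (fun i => A (t i)) (fun i => hA _)]; simp [h]
      apply Set.Subset.antisymm
      · intro x hx j
        rw [hs]; exact le_supp_hull hx _
      · intro x hx
        apply hΦ (t, T)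
        intro φ hφ
        obtain ⟨j, hj⟩ := hu φ (by
          simp only [X, Finset.mem_union, Finset.mem_biUnion]
          exact Or.inl (Or.inl ⟨_, Finset.mem_univ _, hφ⟩))
        have := hx j
        rw [hs] at this
        rw [← hj]; exact this
  · intro a b m hm
    simp only [Multiset.map_cons]
    exact af_nef hc (hnefm m) (by simpa using hm) (hnef a) (hnef b)
  · intro m hm
    exact D_nonneg hc _ (hnefm m) ∅ (by simpa using hm)
  · intro a b m hm hab
    simp only [Multiset.map_cons]
    exact D_mono hc (hnefm m) (by simpa using hm) (fun j => supp_mono (hA a) hab _)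

end AFV
end

section
namespace AFV

section
set_option linter.unusedSectionVars false
variable {K E κ : Type} [Field K] [AddCommGroup E] [Module K E] [FiniteDimensional K E]
  [Fintype κ] [DecidableEq κ] [DecidableEq E]

/-- span of a subfamily. -/
def WW (K : Type) {E κ : Type} [Field K] [AddCommGroup E] [Module K E] (X : κ → Finset E)
    (I : Finset κ) : Submodule K E := ⨆ i ∈ I, Submodule.span K (X i : Set E)

lemma le_WW {X : κ → Finset E} {I : Finset κ} {i : κ} (hi : i ∈ I) :
    Submodule.span K (X i : Set E) ≤ WW K X I :=
  le_iSup₂_of_le i hi le_rfl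

lemma WW_le {X : κ → Finset E} {I : Finset κ} {P : Submodule K E}
    (h : ∀ i ∈ I, ∀ x ∈ X i, x ∈ P) : WW K X I ≤ P :=
  iSup₂_le fun i hi => Submodule.span_le.mpr fun x hx => h i hi x hx

lemma mem_WW {X : κ → Finset E} {I : Finset κ} {i : κ} (hi : i ∈ I) {x : E} (hx : x ∈ X i) :
    x ∈ WW K X I := le_WW hi (Submodule.subset_span hx)

/-- Rado's theorem for linear matroids. -/
lemma rado (n : ℕ) : ∀ X : κ → Finset E, ∑ i, (X i).card = n →
    (∀ I : Finset κ, I.card ≤ Module.finrank K (WW K X I)) →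
    ∃ v : κ → E, (∀ i, v i ∈ X i) ∧ LinearIndependent K v := by
  induction n using Nat.strong_induction_on with
  | _ n ih =>
    intro X hX hr
    have hne : ∀ i, (X i).Nonempty := by
      intro i
      by_contra h
      rw [Finset.not_nonempty_iff_eq_empty] at h
      have h1 := hr {i}
      have h2 : WW K X {i} ≤ ⊥ := WW_le fun j hj x hx => by
        rw [Finset.mem_singleton.mp hj, h] at hx; simp at hx
      rw [le_bot_iff.mp h2] at h1
      simp at h1
    by_cases hone : ∀ i, (X i).card = 1
    · choose v hv using fun i => Finset.card_eq_one.mp (hone i)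
      refine ⟨v, fun i => by rw [hv]; simp, ?_⟩
      rw [linearIndependent_iff_card_le_finrank_span, Set.finrank]
      have h1 := hr Finset.univ
      rw [Finset.card_univ] at h1
      refine h1.trans (Submodule.finrank_mono (WW_le fun i _ x hx => ?_))
      rw [hv, Finset.mem_singleton] at hx
      subst hx
      exact Submodule.subset_span ⟨i, rfl⟩
    · push Not at hone
      obtain ⟨o, ho⟩ := hone
      have h2 : 1 < (X o).card := by
        have := Finset.card_pos.mpr (hne o); omega
      obtain ⟨x, hx, y, hy, hxy⟩ := Finset.one_lt_card.mp h2
      -- removing an element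
      have hrem : ∀ z ∈ X o, (∀ I : Finset κ, I.card ≤
          Module.finrank K (WW K (Function.update X o ((X o).erase z)) I)) →
          ∃ v : κ → E, (∀ i, v i ∈ X i) ∧ LinearIndependent K v := by
        intro z hz hz'
        have hlt : ∑ i, (Function.update X o ((X o).erase z) i).card < n := by
          rw [← hX]
          apply Finset.sum_lt_sum
          · intro i _
            by_cases hi : i = o
            · subst hi; rw [Function.update_self]; exact Finset.card_le_card (Finset.erase_subset _ _)
            · rw [Function.update_of_ne hi]
          · exact ⟨o, Finset.mem_univ _, by
              rw [Function.update_self]; exact Finset.card_erase_lt_of_mem hz⟩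
        obtain ⟨v, hv, hli⟩ := ih _ hlt _ rfl hz'
        refine ⟨v, fun i => ?_, hli⟩
        have := hv i
        by_cases hi : i = o
        · subst hi; rw [Function.update_self] at this; exact Finset.mem_of_mem_erase this
        · rwa [Function.update_of_ne hi] at this
      by_contra hcon
      have hbad : ∀ z ∈ X o, ∃ I : Finset κ, o ∈ I ∧
          Module.finrank K (WW K (Function.update X o ((X o).erase z)) I) < I.card := by
        intro z hz
        by_contra! hh
        refine hcon (hrem z hz fun I => ?_)
        by_cases hI : o ∈ I
        · exact hh I hI
        · refine (hr I).trans (Submodule.finrank_mono (WW_le fun i hi w hw => ?_))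
          refine mem_WW hi ?_
          rw [Function.update_of_ne (by rintro rfl; exact hI hi)]
          exact hw
      obtain ⟨I, hI, hIc⟩ := hbad x hx
      obtain ⟨J, hJ, hJc⟩ := hbad y hy
      set P := WW K (Function.update X o ((X o).erase x)) I
      set Q := WW K (Function.update X o ((X o).erase y)) J
      have hsub := Submodule.finrank_sup_add_finrank_inf_eq P Q
      have hmemP : ∀ i ∈ I, ∀ w ∈ X i, (i = o → w ≠ x) → w ∈ P := by
        intro i hi w hw h
        refine mem_WW hi ?_
        by_cases hio : i = o
        · subst hio; rw [Function.update_self]; exact Finset.mem_erase.mpr ⟨h rfl, hw⟩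
        · rwa [Function.update_of_ne hio]
      have hmemQ : ∀ i ∈ J, ∀ w ∈ X i, (i = o → w ≠ y) → w ∈ Q := by
        intro i hi w hw h
        refine mem_WW hi ?_
        by_cases hio : i = o
        · subst hio; rw [Function.update_self]; exact Finset.mem_erase.mpr ⟨h rfl, hw⟩
        · rwa [Function.update_of_ne hio]
      have hU : WW K X (I ∪ J) ≤ P ⊔ Q := by
        refine WW_le fun i hi w hw => ?_
        by_cases hio : i = o
        · subst hio
          by_cases hwx : w = x
          · exact Submodule.mem_sup_right (hmemQ i hJ w hw fun _ => by rw [hwx]; exact hxy)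
          · exact Submodule.mem_sup_left (hmemP i hI w hw fun _ => hwx)
        · rcases Finset.mem_union.mp hi with hi | hi
          · exact Submodule.mem_sup_left (hmemP i hi w hw fun h => absurd h hio)
          · exact Submodule.mem_sup_right (hmemQ i hi w hw fun h => absurd h hio)
      have hN : WW K X ((I ∩ J).erase o) ≤ P ⊓ Q := by
        refine WW_le fun i hi w hw => ?_
        obtain ⟨hio, hi⟩ := Finset.mem_erase.mp hi
        obtain ⟨hi1, hi2⟩ := Finset.mem_inter.mp hi
        exact ⟨hmemP i hi1 w hw fun h => absurd h hio, hmemQ i hi2 w hw fun h => absurd h hio⟩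
      have e1 := (hr _).trans (Submodule.finrank_mono hU)
      have e2 := (hr _).trans (Submodule.finrank_mono hN)
      have hoIJ : o ∈ I ∩ J := Finset.mem_inter.mpr ⟨hI, hJ⟩
      rw [Finset.card_erase_of_mem hoIJ] at e2
      have e3 := Finset.card_union_add_card_inter I J
      have e4 := Finset.card_pos.mpr ⟨o, hoIJ⟩
      omega

end

/-- volume computation for segments. -/
lemma mvR_segments {N : ℕ} (a b : Fin N → Fin N → ℝ)  (hN : 0 < N)
    (hd : 1 ≤ |(Matrix.of fun i => b i - a i).det|) :
    1 ≤ mvR (fun i => {a i, b i}) := by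
  classical
  let v : Fin N → Fin N → ℝ := fun i => b i - a i
  have hconv : ∀ T : Finset (Fin N),
      convexHull ℝ ((∑ i ∈ T, ({a i, b i} : Finset (Fin N → ℝ)) : Finset (Fin N → ℝ)) : Set (Fin N → ℝ))
      = (∑ i ∈ T, a i) +ᵥ convexHull ℝ (∑ i ∈ T, ({0, v i} : Set (Fin N → ℝ))) := by
    intro T
    rw [← convexHull_vadd]
    congr 1
    induction T using Finset.induction_on with
    | empty => simp
    | insert i T hi ih =>
      rw [Finset.sum_insert hi, Finset.sum_insert hi, Finset.sum_insert hi, Finset.coe_add, ih]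
      have : (({a i, b i} : Finset (Fin N → ℝ)) : Set (Fin N → ℝ)) = a i +ᵥ ({0, v i} : Set (Fin N → ℝ)) := by
        simp [v, Set.vadd_set_insert]
      rw [this, vadd_add_vadd_comm]
  have hvol : ∀ T : Finset (Fin N), T ≠ Finset.univ → volume (convexHull ℝ
      ((∑ i ∈ T, ({a i, b i} : Finset (Fin N → ℝ)) : Finset (Fin N → ℝ)) : Set (Fin N → ℝ))) = 0 := by
    intro T hT
    rw [hconv, measure_vadd]
    have hsub : convexHull ℝ (∑ i ∈ T, ({0, v i} : Set (Fin N → ℝ)))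
        ⊆ (Submodule.span ℝ (T.image v : Set (Fin N → ℝ)) : Set (Fin N → ℝ)) := by
      apply convexHull_min _ (Submodule.convex _)
      intro x hx
      rw [Set.mem_finsetSum] at hx
      obtain ⟨g, hg, rfl⟩ := hx
      refine Submodule.sum_mem _ fun i hi => ?_
      rcases hg hi with h | h
      · rw [h]; exact Submodule.zero_mem _
      · rw [Set.mem_singleton_iff.mp h]
        exact Submodule.subset_span (Finset.mem_coe.mpr (Finset.mem_image_of_mem v hi))
    refine measure_mono_null hsub (Measure.addHaar_submodule _ _ ?_)
    intro htop
    have h1 : Module.finrank ℝ (Submodule.span ℝ (T.image v : Set (Fin N → ℝ))) ≤ (T.image v).card :=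
      finrank_span_finset_le_card _
    rw [htop, finrank_top, Module.finrank_fin_fun] at h1
    have h2 : (T.image v).card ≤ T.card := Finset.card_image_le
    have h3 : T.card < N := by
      have := Finset.card_lt_univ_of_notMem (s := T) (x := (by
        have : ∃ x, x ∉ T := by
          by_contra! h; exact hT (Finset.eq_univ_iff_forall.mpr h)
        exact this.choose)) (by generalize_proofs h; exact h.choose_spec)
      simpa using this
    omega
  unfold mvR
  rw [Finset.sum_eq_single Finset.univ]
  · rw [hconv, measure_vadd, ← parallelepiped_eq_convexHull]
    simp only [Finset.card_univ, Fintype.card_fin, Nat.sub_self, pow_zero, one_mul]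
    have h1 := Measure.addHaar_parallelepiped (Pi.basisFun ℝ (Fin N)) v
    rw [Module.Basis.addHaar_def, Module.Basis.parallelepiped_basisFun,
      addHaarMeasure_eq_volume_pi, Pi.basisFun_det] at h1
    rw [h1, ENNReal.toReal_ofReal (abs_nonneg _)]
    exact hd
  · intro T _ hT
    rw [hvol T hT]; simp
  · intro h
    exfalso; apply h
    simp only [Finset.mem_filter, Finset.mem_powerset, Finset.subset_univ, true_and]
    exact ⟨⟨0, hN⟩, Finset.mem_univ _⟩

end AFV
end

open AFV

/-- The embedding of the lattice in the rational vector space. -/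
def toQ (n : ℕ) : (Fin n → ℤ) →ₗ[ℤ] (Fin n → ℚ) where
  toFun a := fun j => (a j : ℚ)
  map_add' a b := by ext j; simp
  map_smul' r a := by ext j; simp

lemma toQ_inj (n : ℕ) : Function.Injective (toQ n) := by
  intro a b h
  ext j
  have := congrFun h j
  simpa [toQ] using this

lemma exists_segments {N : ℕ} {B : Fin N → Finset (Fin N → ℤ)} (h : LinIndepTuple B) :
    ∃ a b : Fin N → Fin N → ℤ, (∀ i, a i ∈ B i) ∧ (∀ i, b i ∈ B i) ∧
      1 ≤ |(Matrix.of fun i => toR (b i) - toR (a i)).det| := by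
  classical
  let X : Fin N → Finset (Fin N → ℚ) := fun i =>
    (B i ×ˢ B i).image fun p => toQ N (p.2 - p.1)
  obtain ⟨v, hv, hli⟩ := rado (K := ℚ) _ X rfl (by
    intro I
    by_contra hlt
    rw [not_le] at hlt
    apply h
    have hI0 : 0 < I.card := lt_of_le_of_lt (Nat.zero_le _) hlt
    have hIN : I.card ≤ N := by simpa using Finset.card_le_univ I
    let L : Submodule ℤ (Fin N → ℤ) := ((WW ℚ X I).restrictScalars ℤ).comap (toQ N)
    have hL : ∀ x, x ∈ L ↔ toQ N x ∈ WW ℚ X I := fun x => Iff.rfl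
    refine ⟨N - I.card + 1, I, L, by omega, by omega, by omega, ?_, ?_⟩
    · have hb := (Module.finBasis ℤ L).linearIndependent
      have hb1 : LinearIndependent ℤ fun k => toQ N (Module.finBasis ℤ L k : Fin N → ℤ) := by
        have h1 := hb.map' L.subtype (Submodule.ker_subtype L)
        exact h1.map' (toQ N) (LinearMap.ker_eq_bot.mpr (toQ_inj N))
      rw [LinearIndependent.iff_fractionRing ℤ ℚ] at hb1
      have hb2 : LinearIndependent ℚ fun k =>
          (⟨toQ N (Module.finBasis ℤ L k : Fin N → ℤ), (hL _).mp (Module.finBasis ℤ L k).2⟩ :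
            WW ℚ X I) := by
        apply LinearIndependent.of_comp (WW ℚ X I).subtype
        exact hb1
      have := hb2.fintype_card_le_finrank
      rw [Fintype.card_fin] at this
      omega
    · intro i hi
      by_cases hne : (B i).Nonempty
      · obtain ⟨v, hv⟩ := hne
        refine ⟨v, fun a ha => (hL _).mpr (mem_WW hi ?_)⟩
        exact Finset.mem_image.mpr ⟨(v, a), Finset.mem_product.mpr ⟨hv, ha⟩, rfl⟩
      · rw [Finset.not_nonempty_iff_eq_empty] at hne
        exact ⟨0, by simp [hne]⟩)
  have hv' : ∀ i, ∃ p : (Fin N → ℤ) × (Fin N → ℤ), p.1 ∈ B i ∧ p.2 ∈ B i ∧ toQ N (p.2 - p.1) = v i := by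
    intro i
    obtain ⟨p, hp, he⟩ := Finset.mem_image.mp (hv i)
    exact ⟨p, (Finset.mem_product.mp hp).1, (Finset.mem_product.mp hp).2, he⟩
  choose p hp1 hp2 hp3 using hv'
  refine ⟨fun i => (p i).1, fun i => (p i).2, hp1, hp2, ?_⟩
  let Z : Matrix (Fin N) (Fin N) ℤ := Matrix.of fun i => (p i).2 - (p i).1
  have hZR : (Matrix.of fun i => toR (p i).2 - toR (p i).1) = Z.map (Int.castRingHom ℝ) := by
    ext i j; simp [Z, toR]
  have hZQ : (Matrix.of v) = Z.map (Int.castRingHom ℚ) := by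
    ext i j
    simp only [Matrix.of_apply, ← hp3]
    simp [Z, toQ]
  have hdet : Z.det ≠ 0 := by
    intro h0
    have h1 : (Matrix.of v).det = 0 := by
      rw [hZQ, ← RingHom.mapMatrix_apply, ← RingHom.map_det, h0, map_zero]
    have h2 : LinearIndependent ℚ (Matrix.of v).row := hli
    rw [Matrix.linearIndependent_rows_iff_isUnit, Matrix.isUnit_iff_isUnit_det, h1] at h2
    simp at h2
  rw [hZR, ← RingHom.mapMatrix_apply, ← RingHom.map_det]
  have := Int.one_le_abs hdet
  simp only [eq_intCast]
  exact_mod_cast this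

lemma MV_eq {N : ℕ} (A : Fin N → Finset (Fin N → ℤ)) :
    MV A = mvR (fun i => (A i).image toR) := by
  unfold MV mvR
  refine Finset.sum_congr rfl fun S _ => ?_
  rw [Finset.coe_sum]
  simp only [Finset.coe_image]

lemma map_univ_erase {N : ℕ} {κ : Type} (f : Fin N → κ) (i : Fin N) :
    Finset.univ.val.map f = f i ::ₘ (Finset.univ.erase i).val.map f := by
  conv_lhs => rw [← Finset.insert_erase (Finset.mem_univ i)]
  rw [Finset.insert_val_of_notMem (Finset.notMem_erase _ _), Multiset.map_cons]

/-- the Aleksandrov–Fenchel inequality (*): if both AF-descendants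
`B' = (B₁,B₁,B₃,…,B_N)` and `B'' = (B₂,B₂,B₃,…,B_N)` of the tuple `B = (B₁,…,B_N)` are
linearly independent, then `MV(B') ≤ MV(B)²`. -/
theorem af_descendant_inequality (N : ℕ) (hN : 2 ≤ N) (B : Fin N → Finset (Fin N → ℤ))
    (h' : LinIndepTuple (Function.update B ⟨1, by omega⟩ (B ⟨0, by omega⟩)))
    (h'' : LinIndepTuple (Function.update B ⟨0, by omega⟩ (B ⟨1, by omega⟩))) :
    MV (Function.update B ⟨1, by omega⟩ (B ⟨0, by omega⟩)) ≤ (MV B) ^ 2 := by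
  classical
  set o : Fin N := ⟨0, by omega⟩ with ho
  set e : Fin N := ⟨1, by omega⟩ with he
  have hoe : o ≠ e := by simp [ho, he]
  obtain ⟨a, b, ha, hb, hdet⟩ := exists_segments h''
  obtain ⟨a', -, ha', -, -⟩ := exists_segments h'
  have hne : ∀ i, (B i).Nonempty := by
    intro i
    by_cases hi : i = o
    · have := ha' i
      rw [hi, Function.update_of_ne hoe] at this
      exact ⟨_, hi ▸ this⟩
    · have := ha i
      rw [Function.update_of_ne hi] at this
      exact ⟨_, this⟩
  let A : Fin N ⊕ Fin N → Finset (Fin N → ℝ) :=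
    Sum.elim (fun i => (B i).image toR) (fun i => {toR (a i), toR (b i)})
  obtain ⟨M, hM1, hM2, hM3, hM4⟩ := family (by omega) A (by
    rintro (i | i)
    · exact (hne i).image _
    · exact ⟨toR (a i), by simp [A]⟩)
  let t' : Fin N → Fin N ⊕ Fin N := fun i => Sum.inl (if i = e then o else i)
  let t'' : Fin N → Fin N ⊕ Fin N := fun i => Sum.inl (if i = o then e else i)
  have e0 : MV B = M (Finset.univ.val.map Sum.inl) := by rw [← hM1, MV_eq]; rfl
  have e1 : MV (Function.update B e (B o)) = M (Finset.univ.val.map t') := by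
    rw [← hM1, MV_eq]
    congr 1
    funext i
    by_cases hi : i = e
    · rw [hi, Function.update_self]; simp [A, t']
    · rw [Function.update_of_ne hi]; simp [A, t', hi]
  have e2 : 1 ≤ M (Finset.univ.val.map t'') := by
    have hseg : 1 ≤ M (Finset.univ.val.map Sum.inr) := by
      rw [← hM1]
      exact mvR_segments (fun i => toR (a i)) (fun i => toR (b i)) (by omega) hdet
    have hsub : ∀ i, A (Sum.inr i) ⊆ A (t'' i) := by
      intro i x hx
      have hx' : x = toR (a i) ∨ x = toR (b i) := by simpa [A] using hx
      have hA : A (t'' i) = (Function.update B o (B e) i).image toR := by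
        by_cases hi : i = o
        · rw [hi, Function.update_self]; simp [A, t'']
        · rw [Function.update_of_ne hi]; simp [A, t'', hi]
      rw [hA]
      rcases hx' with rfl | rfl
      · exact Finset.mem_image_of_mem _ (ha i)
      · exact Finset.mem_image_of_mem _ (hb i)
    have key : ∀ T : Finset (Fin N), 1 ≤ M (Finset.univ.val.map
        fun i => if i ∈ T then t'' i else Sum.inr i) := by
      intro T
      induction T using Finset.induction_on with
      | empty => simpa using hseg
      | insert i T hi ih =>
        refine ih.trans ?_
        rw [map_univ_erase _ i, map_univ_erase _ i]
        have hc : Multiset.map (fun j => if j ∈ insert i T then t'' j else Sum.inr j)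
            (Finset.univ.erase i).val
            = Multiset.map (fun j => if j ∈ T then t'' j else Sum.inr j)
              (Finset.univ.erase i).val := by
          apply Multiset.map_congr rfl
          intro j hj
          have hji : j ≠ i := (Finset.mem_erase.mp (Finset.mem_val.mp hj)).1
          simp [hji]
        rw [hc]
        simp only [hi, if_false, Finset.mem_insert_self, if_true]
        apply hM4 _ _ _ _ (hsub i)
        rw [Multiset.card_map, Finset.card_val, Finset.card_erase_of_mem (Finset.mem_univ _)]
        simp only [Finset.card_univ, Fintype.card_fin]
        omega
    simpa using key Finset.univ
  let m : Multiset (Fin N ⊕ Fin N) := ((Finset.univ.erase o).erase e).val.map Sum.inl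
  have hm : m.card + 2 = N := by
    simp only [m]
    rw [Multiset.card_map, Finset.card_val, Finset.card_erase_of_mem (by simp [hoe.symm]),
      Finset.card_erase_of_mem (Finset.mem_univ _)]
    simp only [Finset.card_univ, Fintype.card_fin]
    omega
  have hsplit : ∀ f : Fin N → Fin N ⊕ Fin N, (∀ i, i ≠ o → i ≠ e → f i = Sum.inl i) →
      Finset.univ.val.map f = f o ::ₘ f e ::ₘ m := by
    intro f hf
    rw [map_univ_erase f o]
    conv_lhs => rw [← Finset.insert_erase (s := Finset.univ.erase o) (a := e) (by simp [hoe.symm])]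
    rw [Finset.insert_val_of_notMem (Finset.notMem_erase _ _), Multiset.map_cons]
    congr 2
    apply Multiset.map_congr rfl
    intro j hj
    have h1 := Finset.mem_erase.mp (Finset.mem_val.mp hj)
    exact hf j (Finset.mem_erase.mp h1.2).1 h1.1
  have s0 := hsplit Sum.inl (fun i _ _ => rfl)
  have s1 := hsplit t' (fun i _ h => by simp [t', h])
  have s2 := hsplit t'' (fun i h _ => by simp [t'', h])
  simp only [t', hoe, if_false, if_true] at s1
  simp only [t'', hoe.symm, if_false, if_true] at s2
  have hAF := hM2 (Sum.inl o) (Sum.inl e) m hm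
  rw [← s0, ← s1, ← s2] at hAF
  have hpos : 0 ≤ M (Finset.univ.val.map t') := hM3 _ (by simp)
  rw [e0, e1]
  refine le_trans ?_ hAF
  exact le_mul_of_one_le_right hpos e2

end Esterov
end

section
/- Let A ⊆ ℤⁿ be a finite set that is dual effective. Then for every proper subset B ⊊ A, the discriminant D_A is different from the preimage π_B⁻¹(D_B) of the B-discriminant under the coefficient-forgetting projection π_B : ℂ^A → ℂ^B. -/
open Pointwise MeasureTheory

namespace Esterov

/-- The space `ℂ^A` of Laurent polynomials supported at a single finite set `A ⊆ ℤⁿ`. -/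
abbrev CoeffS {n : ℕ} (A : Finset (Fin n → ℤ)) := {a : Fin n → ℤ // a ∈ A} → ℂ

/-- The value of the polynomial with coefficients `c` at `x`. -/
noncomputable def evalS {n : ℕ} (A : Finset (Fin n → ℤ)) (c : CoeffS A) (x : Torus n) : ℂ :=
  ∑ a ∈ A.attach, c a * mono a.1 x

/-- The partial derivative `∂f/∂xⱼ (x)` of the polynomial with coefficients `c`
(note `∂(x^a)/∂xⱼ = aⱼ x^a / xⱼ`). -/
noncomputable def pderivS {n : ℕ} (A : Finset (Fin n → ℤ)) (c : CoeffS A) (j : Fin n)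
    (x : Torus n) : ℂ :=
  (∑ a ∈ A.attach, c a * (a.1 j : ℂ) * mono a.1 x) * (x j : ℂ)⁻¹

/-- The `A`-discriminant `D_A` of Gelfand–Kapranov–Zelevinsky: the Zariski closure of the set
of polynomials `f ∈ ℂ^A` having a singular root `f(x) = 0`, `df(x) = 0` in the torus. -/
noncomputable def discSetS {n : ℕ} (A : Finset (Fin n → ℤ)) : Set (CoeffS A) :=
  zclosure {c | ∃ x : Torus n, evalS A c x = 0 ∧ ∀ j, pderivS A c j x = 0}

/-- The single set `A` is dual effective: `D_A` has complex dimension `|A| − 1`. -/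
def DualEffectiveS {n : ℕ} (A : Finset (Fin n → ℤ)) : Prop :=
  adim (discSetS A) = ((A.card - 1 : ℕ) : WithBot ℕ∞)

open TensorProduct in
theorem D_ne_zero_of_transcendental {R K : Type*} [CommRing R] [IsDomain R] [Field K] [CharZero K]
    [Algebra R K] {z : K} (hz : Transcendental R z) : KaehlerDifferential.D R K z ≠ 0 := by
  have h1 : AlgebraicIndepOn R id ({z} : Set K) := by
    rw [AlgebraicIndepOn, algebraicIndependent_unique_type_iff]
    simpa using hz
  obtain ⟨t, hzt, ht⟩ := exists_isTranscendenceBasis_superset h1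
  have hzt : z ∈ t := hzt rfl
  let P := MvPolynomial t R
  let algPK : Algebra P K := (MvPolynomial.aeval ((↑) : t → K)).toAlgebra
  have : IsScalarTower R P K := IsScalarTower.of_algebraMap_eq' (by
    ext x; simp [P, RingHom.algebraMap_toAlgebra])
  have hinj : Function.Injective (algebraMap P K) := ht.1
  have : FaithfulSMul P K := (faithfulSMul_iff_algebraMap_injective P K).2 hinj
  let E := FractionRing P
  let : Algebra E K := FractionRing.liftAlgebra P K
  have : IsScalarTower P E K := inferInstance
  have : Algebra.IsAlgebraic P K := by
    have h2 := ht.isAlgebraic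
    let e : P →+* Algebra.adjoin R (Set.range ((↑) : t → K)) :=
      ht.1.aevalEquiv.toAlgHom.toRingHom
    have he : Function.Surjective e := ht.1.aevalEquiv.surjective
    refine Algebra.IsAlgebraic.of_ringHom_of_comp_eq e (RingHom.id K)
      he Function.injective_id ?_
    ext x
    · simp [e, P, RingHom.algebraMap_toAlgebra]
    · simp [e, P, RingHom.algebraMap_toAlgebra]
  have : Algebra.IsAlgebraic E K :=
    Algebra.IsAlgebraic.extendScalars (R := P) (IsFractionRing.injective P E)
  have : CharZero E := (algebraMap E K).charZero
  have : Algebra.FormallyEtale E K := Algebra.FormallyEtale.of_isSeparable E K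
  have : Algebra.FormallyEtale P E := Algebra.FormallyEtale.of_isLocalization (nonZeroDivisors P)
  have : Algebra.FormallyEtale P K := Algebra.FormallyEtale.comp P E K
  intro h0
  have hD := KaehlerDifferential.tensorKaehlerEquivOfFormallyEtale_symm_D_algebraMap R P K
    (MvPolynomial.X ⟨z, hzt⟩)
  have hX : algebraMap P K (MvPolynomial.X ⟨z, hzt⟩) = z := by
    simp [P, RingHom.algebraMap_toAlgebra]
  rw [hX, h0, map_zero] at hD
  let b := (KaehlerDifferential.mvPolynomialBasis R t).baseChange K
  have hb := b.ne_zero ⟨z, hzt⟩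
  apply hb
  rw [Module.Basis.baseChange_apply, KaehlerDifferential.mvPolynomialBasis_apply]
  exact hD.symm

theorem exists_poly {K : Type} [Field K] [Algebra ℂ K] {ι : Type} [Fintype ι]
    (i0 : ι) (c u : ι → K) (hu : u i0 ≠ 0)
    (hD : ∀ (M : Type) [AddCommGroup M] [Module K M] [Module ℂ M] (D : Derivation ℂ K M),
      ∑ i, u i • D (c i) = 0) :
    ∃ p : Polynomial (MvPolynomial {i // i ≠ i0} ℂ),
      p.map (MvPolynomial.aeval (fun i : {i // i ≠ i0} => c i)).toRingHom ≠ 0 ∧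
      p.eval₂ (MvPolynomial.aeval (fun i : {i // i ≠ i0} => c i)).toRingHom (c i0) = 0 := by
  classical
  have : CharZero K := charZero_of_injective_algebraMap (algebraMap ℂ K).injective
  let f : MvPolynomial {i // i ≠ i0} ℂ →ₐ[ℂ] K := MvPolynomial.aeval (fun i : {i // i ≠ i0} => c i)
  let R := f.range
  have halg : IsAlgebraic R (c i0) := by
    by_contra hz
    apply D_ne_zero_of_transcendental hz
    have h := hD (Ω[K⁄R]) ((KaehlerDifferential.D R K).restrictScalars ℂ)
    rw [Finset.sum_eq_single i0] at h
    · simpa [hu] using h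
    · intro i _ hi
      have : c i = algebraMap R K ⟨c i, ⟨MvPolynomial.X ⟨i, hi⟩, by simp [f]⟩⟩ := rfl
      rw [Derivation.restrictScalars_apply, this, Derivation.map_algebraMap, smul_zero]
    · simp
  obtain ⟨q, hq, hq0⟩ := halg
  obtain ⟨p, hp⟩ := Polynomial.map_surjective f.rangeRestrict.toRingHom
    f.rangeRestrict_surjective q
  have hcomp : f.toRingHom = (algebraMap R K).comp f.rangeRestrict.toRingHom := rfl
  refine ⟨p, ?_, ?_⟩
  · change p.map f.toRingHom ≠ 0
    rw [hcomp, ← Polynomial.map_map, hp]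
    rwa [Ne, Polynomial.map_eq_zero_iff (FaithfulSMul.algebraMap_injective R K)]
  · change p.eval₂ f.toRingHom (c i0) = 0
    rw [hcomp, ← Polynomial.eval₂_map, hp]
    exact hq0

theorem deriv_prod {K M : Type} [Field K] [Algebra ℂ K] [AddCommGroup M] [Module K M] [Module ℂ M]
    (D : Derivation ℂ K M) {σ : Type} (s : Finset σ) (x : σ → K) (hx : ∀ j, x j ≠ 0) (k : σ → ℕ) :
    D (∏ j ∈ s, x j ^ k j) = (∏ j ∈ s, x j ^ k j) • ∑ j ∈ s, ((k j : K) * (x j)⁻¹) • D (x j) := by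
  classical
  induction s using Finset.induction_on with
  | empty => simp
  | insert j s hj ih =>
    rw [Finset.prod_insert hj, Finset.sum_insert hj, Derivation.leibniz, ih, Derivation.leibniz_pow,
      smul_add, ← Nat.cast_smul_eq_nsmul K]
    simp only [smul_smul]
    rw [add_comm]
    congr 2
    rcases Nat.eq_zero_or_pos (k j) with h | h
    · simp [h]
    · obtain ⟨m, hm⟩ := Nat.exists_eq_add_of_le' h
      rw [hm, Nat.add_sub_cancel]
      have := hx j
      field_simp
      simp [pow_succ, mul_assoc]

section param
variable {n : ℕ} (A : Finset (Fin n → ℤ))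

/-- The set of polynomials with a singular root. -/
def singSet : Set (CoeffS A) :=
  {c | ∃ x : Torus n, evalS A c x = 0 ∧ ∀ j, pderivS A c j x = 0}

/-- Coefficient vectors singular at the unit of the torus. -/
def singOne : Submodule ℂ (CoeffS A) where
  carrier := {d | ∑ a, d a = 0 ∧ ∀ j, ∑ a, d a * (a.1 j : ℂ) = 0}
  add_mem' := by
    rintro d e ⟨h1, h2⟩ ⟨h3, h4⟩
    refine ⟨by simp only [Pi.add_apply, Finset.sum_add_distrib, h1, h3, add_zero], fun j => ?_⟩
    simp only [Pi.add_apply, add_mul, Finset.sum_add_distrib, h2, h4, add_zero]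
  zero_mem' := by simp
  smul_mem' := by
    rintro t d ⟨h1, h2⟩
    refine ⟨by simp only [Pi.smul_apply, smul_eq_mul, ← Finset.mul_sum, h1, mul_zero], fun j => ?_⟩
    simp only [Pi.smul_apply, smul_eq_mul, mul_assoc, ← Finset.mul_sum, h2, mul_zero]

/-- Shifted nonnegative exponent. -/
def sexp (a : {a : Fin n → ℤ // a ∈ A}) (j : Fin n) : ℕ :=
  (a.1 j + ∑ b : {a : Fin n → ℤ // a ∈ A}, |b.1 j|).toNat

theorem sexp_cast (a : {a : Fin n → ℤ // a ∈ A}) (j : Fin n) :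
    (sexp A a j : ℤ) = a.1 j + ∑ b : {a : Fin n → ℤ // a ∈ A}, |b.1 j| := by
  apply Int.toNat_of_nonneg
  have := Finset.single_le_sum (f := fun b : {a : Fin n → ℤ // a ∈ A} => |b.1 j|)
    (fun b _ => abs_nonneg _) (Finset.mem_univ a)
  have h2 := neg_abs_le (a.1 j)
  linarith

theorem mem_singSet_iff (c : CoeffS A) : c ∈ singSet A ↔
    ∃ x : Torus n, (fun a => c a * mono a.1 x) ∈ singOne A := by
  refine exists_congr fun x => ?_
  refine and_congr ?_ (forall_congr' fun j => ?_)
  · rw [evalS, Finset.univ_eq_attach]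
  · rw [pderivS, Finset.univ_eq_attach, mul_eq_zero, or_iff_left (by simp)]
    have : ∀ a : {a : Fin n → ℤ // a ∈ A},
      c a * (a.1 j : ℂ) * mono a.1 x = c a * mono a.1 x * (a.1 j : ℂ) := fun a => by ring
    simp [this]

/-- The monomial with shifted exponents. -/
noncomputable def smono (a : {a : Fin n → ℤ // a ∈ A}) (s : Fin n → ℂ) : ℂ := ∏ j, s j ^ sexp A a j

theorem smono_mul (a : {a : Fin n → ℤ // a ∈ A}) (x : Torus n) :
    smono A a (fun j => ((x j)⁻¹ : ℂˣ)) * mono a.1 x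
      = ∏ j, ((x j : ℂ)⁻¹) ^ (∑ b : {a : Fin n → ℤ // a ∈ A}, |b.1 j|) := by
  rw [smono, mono, ← Finset.prod_mul_distrib]
  refine Finset.prod_congr rfl fun j _ => ?_
  have hx : (x j : ℂ) ≠ 0 := (x j).ne_zero
  rw [← zpow_natCast, sexp_cast, Units.val_inv_eq_inv_val, inv_zpow', inv_zpow', ← zpow_add₀ hx]
  congr 1
  ring

theorem mem_singSet_of (s : Fin n → ℂ) (hs : ∀ j, s j ≠ 0) (d : CoeffS A) (hd : d ∈ singOne A) :
    (fun a => smono A a s * d a) ∈ singSet A := by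
  rw [mem_singSet_iff]
  let x : Torus n := fun j => (Units.mk0 (s j) (hs j))⁻¹
  refine ⟨x, ?_⟩
  have hsx : s = (fun j => (((x j)⁻¹ : ℂˣ) : ℂ)) := by ext j; simp [x]
  have : (fun a => smono A a s * d a * mono a.1 x) =
      (∏ j, ((x j : ℂ)⁻¹) ^ (∑ b : {a : Fin n → ℤ // a ∈ A}, |b.1 j|)) • d := by
    ext a
    rw [Pi.smul_apply, smul_eq_mul, ← smono_mul A a x, ← hsx]
    ring
  rw [this]
  exact (singOne A).smul_mem _ hd

theorem exists_of_mem_singSet (c : CoeffS A) (hc : c ∈ singSet A) :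
    ∃ (s : Fin n → ℂ) (d : CoeffS A), d ∈ singOne A ∧ c = fun a => smono A a s * d a := by
  rw [mem_singSet_iff] at hc
  obtain ⟨x, hx⟩ := hc
  set q : ℂ := ∏ j, ((x j : ℂ)⁻¹) ^ (∑ b : {a : Fin n → ℤ // a ∈ A}, |b.1 j|) with hq
  have hq0 : q ≠ 0 := by
    rw [hq]
    exact Finset.prod_ne_zero_iff.2 fun j _ => zpow_ne_zero _ (by simp)
  refine ⟨fun j => ((x j)⁻¹ : ℂˣ), q⁻¹ • (fun a => c a * mono a.1 x),
    (singOne A).smul_mem _ hx, ?_⟩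
  ext a
  have h := smono_mul A a x
  rw [← hq] at h
  rw [Pi.smul_apply, smul_eq_mul]
  calc c a = q⁻¹ * q * c a := by rw [inv_mul_cancel₀ hq0, one_mul]
    _ = _ := by nth_rewrite 2 [← h]; ring

open MvPolynomial

/-- The universal parametrization of `singSet` with projection matrix `P`. -/
noncomputable def uparam (P : {a // a ∈ A} → {a // a ∈ A} → ℂ) (a : {a // a ∈ A}) :
    MvPolynomial (Fin n ⊕ {a // a ∈ A}) ℂ :=
  (∏ j, X (Sum.inl j) ^ sexp A a j) * ∑ b, C (P a b) * X (Sum.inr b)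

theorem exists_proj : ∃ P : {a // a ∈ A} → {a // a ∈ A} → ℂ,
    (∀ y : CoeffS A, (fun a => ∑ b, P a b * y b) ∈ singOne A) ∧
    (∀ y ∈ singOne A, (fun a => ∑ b, P a b * y b) = y) := by
  classical
  obtain ⟨f, hf⟩ := (singOne A).exists_isCompl
  let π : CoeffS A →ₗ[ℂ] CoeffS A := (singOne A).subtype ∘ₗ (Submodule.projectionOnto _ _ hf)
  have hπ : ∀ y, (fun a => ∑ b, LinearMap.toMatrix' π a b * y b) = π y := fun y => by
    have := LinearMap.toMatrix'_mulVec π y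
    rw [← this]; rfl
  refine ⟨LinearMap.toMatrix' π, fun y => ?_, fun y hy => ?_⟩
  · rw [hπ]; simp [π]
  · rw [hπ]
    have := Submodule.projectionOnto_apply_left hf ⟨y, hy⟩
    simp only [π, LinearMap.comp_apply]
    exact congrArg Subtype.val this

theorem uparam_eq_zero_iff (P : {a // a ∈ A} → {a // a ∈ A} → ℂ)
    (h1 : ∀ y : CoeffS A, (fun a => ∑ b, P a b * y b) ∈ singOne A)
    (h2 : ∀ y ∈ singOne A, (fun a => ∑ b, P a b * y b) = y)
    (G : MvPolynomial {a // a ∈ A} ℂ) :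
    aeval (uparam A P) G = 0 ↔ ∀ c ∈ singSet A, eval c G = 0 := by
  have hev : ∀ z : Fin n ⊕ {a // a ∈ A} → ℂ, eval z (aeval (uparam A P) G) =
      eval (fun a => smono A a (fun j => z (Sum.inl j)) * ∑ b, P a b * z (Sum.inr b)) G := by
    intro z
    rw [← MvPolynomial.aeval_eq_eval, ← MvPolynomial.aeval_eq_eval]
    rw [← AlgHom.comp_apply, comp_aeval]
    congr 2
    ext a
    simp [uparam, smono]
  constructor
  · intro h c hc
    obtain ⟨s, d, hd, rfl⟩ := exists_of_mem_singSet A c hc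
    have := hev (Sum.elim s d)
    rw [h, map_zero] at this
    simp only [Sum.elim_inl, Sum.elim_inr] at this
    rw [this]
    congr 1
    have h3 := h2 d hd
    congr 1
    ext a
    rw [congrFun h3 a]
  · intro h
    apply MvPolynomial.funext_set (fun _ => {0}ᶜ) (fun _ => Set.Finite.infinite_compl (by simp))
    intro z hz
    rw [hev, map_zero]
    apply h
    exact mem_singSet_of A _ (fun j => by simpa using hz (Sum.inl j) trivial) _ (h1 _)

theorem uparam_rel (P : {a // a ∈ A} → {a // a ∈ A} → ℂ)
    (h1 : ∀ y : CoeffS A, (fun a => ∑ b, P a b * y b) ∈ singOne A)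
    (i0 : {a // a ∈ A}) :
    ∃ p : Polynomial (MvPolynomial {i // i ≠ i0} ℂ),
      (∃ k, aeval (uparam A P) (rename Subtype.val (p.coeff k)) ≠ 0) ∧
      aeval (uparam A P) (p.eval₂ (rename Subtype.val).toRingHom (X i0)) = 0 := by
  classical
  let R := MvPolynomial (Fin n ⊕ {a // a ∈ A}) ℂ
  let K := FractionRing R
  have hinj : Function.Injective (algebraMap R K) := IsFractionRing.injective R K
  let ι : R →ₐ[ℂ] K := IsScalarTower.toAlgHom ℂ R K
  let x : Fin n → K := fun j => ι (X (Sum.inl j))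
  let l : {a // a ∈ A} → R := fun a => ∑ b, C (P a b) * X (Sum.inr b)
  let L : {a // a ∈ A} → K := fun a => ι (l a)
  have hx : ∀ j, x j ≠ 0 := fun j => by
    intro h
    exact X_ne_zero (R := ℂ) (Sum.inl j : Fin n ⊕ {a // a ∈ A}) (hinj (h.trans (map_zero _).symm))
  have hl0 : ∑ a, l a = 0 := by
    apply MvPolynomial.funext
    intro z
    have := (h1 (fun b => z (Sum.inr b))).1
    simpa [l] using this
  have hlj : ∀ j, ∑ a, l a * ((a.1 j : ℤ) : R) = 0 := by
    intro j
    apply MvPolynomial.funext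
    intro z
    have := (h1 (fun b => z (Sum.inr b))).2 j
    simpa [l] using this
  have hL0 : ∑ a, L a = 0 := by
    have := congrArg ι hl0
    simpa [L] using this
  have hLj : ∀ j, ∑ a, L a * ((a.1 j : ℤ) : K) = 0 := by
    intro j
    have := congrArg ι (hlj j)
    simpa [L] using this
  have hLs : ∀ j, ∑ a, L a * ((sexp A a j : ℕ) : K) = 0 := by
    intro j
    have : ∀ a : {a // a ∈ A}, ((sexp A a j : ℕ) : K) = ((a.1 j : ℤ) : K) +
      ((∑ b : {a : Fin n → ℤ // a ∈ A}, |b.1 j| : ℤ) : K) := by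
      intro a
      rw [← Int.cast_natCast, sexp_cast, Int.cast_add]
    simp only [this, mul_add, Finset.sum_add_distrib, hLj, zero_add, ← Finset.sum_mul, hL0,
      zero_mul]
  let c : {a // a ∈ A} → K := fun a => ι (uparam A P a)
  let m : {a // a ∈ A} → K := fun a => ∏ j, x j ^ sexp A a j
  have hm : ∀ a, m a ≠ 0 := fun a => Finset.prod_ne_zero_iff.2 fun j _ => pow_ne_zero _ (hx j)
  have hc : ∀ a, c a = m a * L a := fun a => by
    simp only [c, uparam, m, L, x, l, map_mul, map_prod, map_pow]
  obtain ⟨p, hp, hp0⟩ := exists_poly i0 c (fun a => (m a)⁻¹) (inv_ne_zero (hm i0)) (by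
    intro M _ _ _ D
    have : ∀ a, (m a)⁻¹ • D (c a) =
        D (L a) + ∑ j, ((L a * ((sexp A a j : ℕ) : K)) * (x j)⁻¹) • D (x j) := by
      intro a
      rw [hc, Derivation.leibniz, smul_add, smul_smul, inv_mul_cancel₀ (hm a), one_smul]
      congr 1
      have hDm : D (m a) = m a • ∑ j, (((sexp A a j : ℕ) : K) * (x j)⁻¹) • D (x j) :=
        deriv_prod D Finset.univ x hx (sexp A a)
      rw [hDm, smul_smul, smul_smul, show (m a)⁻¹ * L a * m a = L a by
        rw [mul_right_comm, inv_mul_cancel₀ (hm a), one_mul], Finset.smul_sum]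
      simp only [smul_smul, mul_assoc]
    simp only [this, Finset.sum_add_distrib]
    rw [Finset.sum_comm, ← map_sum, hL0, map_zero, zero_add]
    simp only [← Finset.sum_smul, ← Finset.sum_mul, hLs, zero_mul, zero_smul, Finset.sum_const_zero])
  have hcomp : ∀ g : MvPolynomial {i // i ≠ i0} ℂ,
      aeval (fun i : {i // i ≠ i0} => c i) g =
        ι (aeval (uparam A P) (rename Subtype.val g)) := by
    intro g
    rw [aeval_rename, ← AlgHom.comp_apply, comp_aeval]
    rfl
  refine ⟨p, ?_, ?_⟩
  · by_contra! hall
    apply hp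
    ext k
    rw [Polynomial.coeff_map]
    change aeval (fun i : {i // i ≠ i0} => c i) (p.coeff k) = _
    rw [hcomp, hall, map_zero, Polynomial.coeff_zero]
  · apply hinj
    change ι (aeval (uparam A P) _) = _
    rw [map_zero, ← hp0]
    change ((ι.comp (aeval (uparam A P))).toRingHom) _ = _
    rw [Polynomial.hom_eval₂]
    congr 1
    · apply RingHom.ext
      intro g
      exact (hcomp g).symm
    · simp [c]

end param

theorem subset_zclosure {ι : Type*} (Z : Set (ι → ℂ)) : Z ⊆ zclosure Z :=
  Set.subset_sInter fun _ h => h.2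

theorem eval_zclosure {ι : Type*} (Z : Set (ι → ℂ)) (G : MvPolynomial ι ℂ)
    (h : ∀ c ∈ Z, MvPolynomial.eval c G = 0) : ∀ c ∈ zclosure Z, MvPolynomial.eval c G = 0 := by
  intro c hc
  exact hc {c | MvPolynomial.eval c G = 0} ⟨⟨{G}, by simp⟩, h⟩

/-- Corollary 3.11: if `A ⊆ ℤⁿ` is dual effective, then for every proper
subset `B ⊊ A` the discriminant `D_A` differs from the preimage of `D_B` under the
coefficient-forgetting projection `ℂ^A → ℂ^B`. -/
theorem discriminant_ne_subdiscriminant {n : ℕ} (A B : Finset (Fin n → ℤ))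
    (heff : DualEffectiveS A) (hBA : B ⊆ A) (hne : B ≠ A) :
    discSetS A ≠
      (fun (c : CoeffS A) (b : {a : Fin n → ℤ // a ∈ B}) => c ⟨b.1, hBA b.2⟩) ⁻¹'
        discSetS B := by
  classical
  intro heq
  obtain ⟨a0, ha0, hb0⟩ : ∃ a ∈ A, a ∉ B := by
    by_contra! h
    exact hne (Finset.Subset.antisymm hBA h)
  let i0 : {a // a ∈ A} := ⟨a0, ha0⟩
  have hinv : ∀ c ∈ discSetS A, ∀ t : ℂ, Function.update c i0 t ∈ discSetS A := by
    intro c hc t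
    rw [heq] at hc ⊢
    change (fun b : {a // a ∈ B} => Function.update c i0 t ⟨b.1, hBA b.2⟩) ∈ discSetS B
    have hfun : (fun b : {a // a ∈ B} => Function.update c i0 t ⟨b.1, hBA b.2⟩) =
        fun b : {a // a ∈ B} => c ⟨b.1, hBA b.2⟩ := by
      ext b
      rw [Function.update_of_ne]
      intro h
      have h' : b.1 = a0 := congrArg Subtype.val h
      exact hb0 (h' ▸ b.2)
    rw [hfun]
    exact hc
  obtain ⟨P, h1, h2⟩ := exists_proj A
  obtain ⟨p, ⟨k, hk⟩, hp⟩ := uparam_rel A P h1 i0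
  apply hk
  rw [uparam_eq_zero_iff A P h1 h2] at hp ⊢
  have hp' := eval_zclosure (singSet A) _ hp
  intro c hc
  have hc' : c ∈ discSetS A := subset_zclosure _ hc
  rw [MvPolynomial.eval_rename]
  have hz : p.map (MvPolynomial.eval (c ∘ (Subtype.val : {i // i ≠ i0} → _))) = 0 := by
    apply Polynomial.funext
    intro t
    have h3 := hp' _ (hinv c hc' t)
    rw [Polynomial.hom_eval₂] at h3
    rw [Polynomial.eval_zero, ← h3, Polynomial.eval_map]
    congr 1
    · apply RingHom.ext
      intro g
      change _ = MvPolynomial.eval (Function.update c i0 t) (MvPolynomial.rename Subtype.val g)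
      rw [MvPolynomial.eval_rename]
      congr 2
      ext i
      simp [Function.update_of_ne i.2]
    · simp
  have := congrArg (fun q => q.coeff k) hz
  simpa [Polynomial.coeff_map] using this

end Esterov
end
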